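/- arXiv:1804.09527 — 2 statements merged into one kernel-verified Lean document; each statement's English description precedes it below -/
import Mathlib

section
/- Let R be a semilocal Dedekind domain with fraction field F. Let A be a hereditary R-order such that F ⊗_R A is a central simple F-algebra, and let A' be any R-order. If there exist an F-algebra isomorphism F ⊗_R A ≅ F ⊗_R A' and a faithfully flat étale R-algebra S together with an S-algebra isomorphism S ⊗_R A ≅ S ⊗_R A', then A and A' are isomorphic as R-algebras. -/
open scoped TensorProduct

universe u

namespace HerOrd

section Lattice

variable {R B : Type*} [CommRing R] [Ring B] [Algebra R B]

/-- Left quotient `{b | X b ⊆ Y}`. -/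
def lq (X Y : Submodule R B) : Submodule R B where
  carrier := {b | ∀ x ∈ X, x * b ∈ Y}
  add_mem' := fun ha hb x hx => by
    rw [mul_add]; exact Y.add_mem (ha x hx) (hb x hx)
  zero_mem' := fun x _ => by rw [mul_zero]; exact Y.zero_mem
  smul_mem' := fun r b hb x hx => by
    rw [mul_smul_comm]; exact Y.smul_mem r (hb x hx)

theorem mem_lq {X Y : Submodule R B} {b : B} : b ∈ lq X Y ↔ ∀ x ∈ X, x * b ∈ Y := Iff.rfl

theorem mul_lq_le (X Y : Submodule R B) : X * lq X Y ≤ Y :=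
  Submodule.mul_le.2 fun x hx b hb => hb x hx

theorem le_lq_iff {X Y Z : Submodule R B} : Z ≤ lq X Y ↔ X * Z ≤ Y :=
  ⟨fun h => (mul_le_mul_right h X).trans (mul_lq_le X Y),
    fun h z hz x hx => h (Submodule.mul_mem_mul hx hz)⟩

/-- The scalar lattice `R π`. -/
abbrev sc (B : Type*) [Ring B] [Algebra R B] (r : R) : Submodule R B :=
  Submodule.span R {algebraMap R B r}

theorem mem_sc_mul {r : R} {X : Submodule R B} {y : B} :
    y ∈ sc B r * X ↔ ∃ x ∈ X, r • x = y := by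
  rw [Submodule.mem_span_singleton_mul]
  simp only [Algebra.smul_def]

theorem sc_comm (r : R) (X : Submodule R B) : sc B r * X = X * sc B r := by
  ext y
  rw [Submodule.mem_span_singleton_mul, Submodule.mem_mul_span_singleton]
  simp only [Algebra.commutes]

theorem sc_mul_le (r : R) (X : Submodule R B) : sc B r * X ≤ X := by
  intro y hy
  obtain ⟨x, hx, rfl⟩ := mem_sc_mul.1 hy
  exact X.smul_mem r hx

theorem sc_cancel {r : R} (hr : IsUnit (algebraMap R B r)) {X Y : Submodule R B}
    (h : sc B r * X ≤ sc B r * Y) : X ≤ Y := by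
  intro x hx
  obtain ⟨y, hy, hxy⟩ := mem_sc_mul.1 (h (mem_sc_mul.2 ⟨x, hx, rfl⟩))
  rw [Algebra.smul_def, Algebra.smul_def] at hxy
  rwa [← hr.mul_left_cancel hxy]

theorem one_mem_iff {X : Submodule R B} : (1 : B) ∈ X ↔ 1 ≤ X := Submodule.one_le.symm


/-- An order `A` (as a lattice in `B`) with its radical `J` at `π`. -/
structure Ord (π : R) (t : ℕ) (A J : Submodule R B) : Prop where
  AA : A * A ≤ A
  one : (1 : B) ∈ A
  Jle : J ≤ A
  AJ : A * J ≤ J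
  JA : J * A ≤ J
  pi : sc B π * A ≤ J
  nil : J ^ (t + 1) ≤ sc B π * A
  ssr : ∀ M : Submodule R B, M ≤ A → A * M ≤ M → ∃ e ∈ M, ∀ m ∈ M, m - m * e ∈ J
  ssl : ∀ M : Submodule R B, M ≤ A → M * A ≤ M → ∃ e ∈ M, ∀ m ∈ M, m - e * m ∈ J

namespace Ord

variable {π : R} {t : ℕ} {A J : Submodule R B}

theorem le_mul_left (h : Ord π t A J) (X : Submodule R B) : X ≤ A * X := by
  calc X = 1 * X := (one_mul X).symm
    _ ≤ A * X := mul_le_mul_left (Submodule.one_le.2 h.one) X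

theorem le_mul_right (h : Ord π t A J) (X : Submodule R B) : X ≤ X * A := by
  calc X = X * 1 := (mul_one X).symm
    _ ≤ X * A := mul_le_mul_right (Submodule.one_le.2 h.one) X

theorem AA' (h : Ord π t A J) : A * A = A := le_antisymm h.AA (h.le_mul_left A)
theorem AJ' (h : Ord π t A J) : A * J = J := le_antisymm h.AJ (h.le_mul_left J)
theorem JA' (h : Ord π t A J) : J * A = J := le_antisymm h.JA (h.le_mul_right J)

theorem pow_le (h : Ord π t A J) (n : ℕ) : J ^ n ≤ A := by
  induction n with
  | zero => rw [pow_zero]; exact Submodule.one_le.2 h.one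
  | succ n ih => rw [pow_succ]; exact (mul_le_mul' ih h.Jle).trans h.AA

theorem A_pow_succ (h : Ord π t A J) (n : ℕ) : A * J ^ (n + 1) = J ^ (n + 1) := by
  rw [pow_succ', ← mul_assoc, h.AJ']

theorem pow_succ_A (h : Ord π t A J) (n : ℕ) : J ^ (n + 1) * A = J ^ (n + 1) := by
  rw [pow_succ, mul_assoc, h.JA']

theorem ideal_pow_le (h : Ord π t A J) {M : Submodule R B} (hM' : M ≤ A)
    (hAM : A * M ≤ M) (hMA : M * A ≤ M)
    (hM : A ≤ M + J) (n : ℕ) : A ≤ M + J ^ (n + 1) := by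
  induction n with
  | zero => simpa using hM
  | succ n ih =>
    have e : (M + J ^ (n+1)) * (M + J) = (M + J ^ (n + 1)) * M + (M * J + J ^ (n+1+1)) := by
      rw [mul_add (M + J ^ (n + 1)), add_mul _ _ J, ← pow_succ]
    have h1 : (M + J ^ (n + 1)) * M ≤ M :=
      (mul_le_mul_left (sup_le hM' (h.pow_le _)) M).trans hAM
    have h2 : M * J ≤ M := (mul_le_mul_right h.Jle M).trans hMA
    calc A = A * A := h.AA'.symm
        _ ≤ (M + J ^ (n+1)) * (M + J) := mul_le_mul' ih hM
        _ ≤ M + J ^ (n+1+1) := by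
          rw [e]
          exact sup_le (h1.trans le_sup_left) (sup_le (h2.trans le_sup_left) le_sup_right)

theorem inverse_aux (h : Ord π t A J)
    (hproj : ∀ X : Submodule R B, X ≤ A → A * X ≤ X → sc B π * A ≤ X →
      (1 : B) ∈ lq X A * X) (K A1 : Submodule R B) (hA1 : A1 = K * J) (hAK : A * K = K)
    (h1KJ : (1 : B) ∈ A1) (hτ : J * K = A) : A1 = A := by
  have hJA1 : J * A1 = J := by rw [hA1, ← mul_assoc, hτ, h.AJ']
  have hA1A : A1 * A = A1 := by rw [hA1, mul_assoc, h.JA']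
  have hAA1 : A ≤ A1 := by
    calc A = 1 * A := (one_mul A).symm
      _ ≤ A1 * A := mul_le_mul_left (Submodule.one_le.2 h1KJ) A
      _ = A1 := hA1A
  have hAA1' : A * A1 = A1 := by rw [hA1, ← mul_assoc, hAK]
  have hA1A1 : A1 * A1 = A1 := by
    rw [hA1, mul_assoc, ← mul_assoc J, hτ, h.AJ']
  have hPK : sc B π * K ≤ A := by
    calc sc B π * K = sc B π * A * K := by rw [mul_assoc, hAK]
      _ ≤ J * K := mul_le_mul_left h.pi K
      _ = A := hτ
  have hPA1 : sc B π * A1 ≤ A := by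
    rw [hA1, ← mul_assoc]
    exact (mul_le_mul_left hPK J).trans (h.AJ.trans h.Jle)
  have h6 := hproj (sc B π * A1) hPA1 (by rw [← mul_assoc, ← sc_comm, mul_assoc, hAA1'])
    (mul_le_mul_right hAA1 _)
  obtain ⟨c, hc⟩ : ∃ c, c = lq (sc B π * A1) A * sc B π := ⟨_, rfl⟩
  have h7 : (1 : B) ∈ c * A1 := by rwa [hc, mul_assoc]
  have hA1c : A1 * c ≤ A := by
    rw [hc, ← sc_comm, ← mul_assoc, ← sc_comm]
    exact mul_lq_le _ _
  have hcA' : c ≤ A := by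
    calc c ≤ A * c := h.le_mul_left c
      _ ≤ A1 * c := mul_le_mul_left hAA1 c
      _ ≤ A := hA1c
  have hAc : A * c ≤ c := by
    rw [hc, ← mul_assoc]
    refine mul_le_mul_left ?_ (sc B π)
    rw [le_lq_iff, ← mul_assoc, mul_assoc _ A1, hA1A]
    exact mul_lq_le _ _
  have hcA : c * A ≤ c := by
    rw [hc, mul_assoc, sc_comm π A, ← mul_assoc]
    refine mul_le_mul_left ?_ (sc B π)
    rw [le_lq_iff, ← mul_assoc]
    exact (mul_le_mul_left (mul_lq_le _ _) A).trans h.AA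
  have hcJ : A ≤ c + J := by
    obtain ⟨f, hf, hf'⟩ := h.ssl (c + J) (sup_le hcA' h.Jle)
      (by rw [add_mul, h.JA']; exact sup_le_sup_right hcA J)
    have h8 : ∀ y ∈ c * A1, (1 - f) * y ∈ J := by
      intro y hy
      induction hy using Submodule.mul_induction_on' with
      | mem_mul_mem m hm n hn =>
        rw [← mul_assoc, sub_mul, one_mul, ← hJA1]
        exact Submodule.mul_mem_mul (hf' m (Submodule.mem_sup_left hm)) hn
      | add x _ y _ hx hy =>
        rw [mul_add]; exact Submodule.add_mem _ hx hy
    have h9 : 1 - f ∈ J := by simpa using h8 1 h7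
    have h10 : (1 : B) ∈ c + J := by
      have := Submodule.add_mem _ (Submodule.mem_sup_right (S := c) h9) hf
      simpa using this
    calc A = 1 * A := (one_mul A).symm
      _ ≤ (c + J) * A := mul_le_mul_left (Submodule.one_le.2 h10) A
      _ ≤ c + J := by rw [add_mul, h.JA']; exact sup_le_sup_right hcA J
  have h11 : A ≤ c + sc B π * A :=
    (h.ideal_pow_le hcA' hAc hcA hcJ t).trans (sup_le_sup_left h.nil c)
  refine le_antisymm ?_ hAA1
  calc A1 = A1 * A := hA1A.symm
    _ ≤ A1 * (c + sc B π * A) := mul_le_mul_right h11 A1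
    _ = A1 * c + sc B π * A1 := by rw [mul_add, ← mul_assoc A1, ← sc_comm, mul_assoc _ A1, hA1A]
    _ ≤ A := sup_le hA1c hPA1

/-- The radical of a (left) hereditary order is invertible. -/
theorem exists_inverse (h : Ord π t A J) (hπ : IsUnit (algebraMap R B π))
    (hproj : ∀ X : Submodule R B, X ≤ A → A * X ≤ X → sc B π * A ≤ X →
      (1 : B) ∈ lq X A * X) :
    ∃ K : Submodule R B, J * K = A ∧ K * J = A ∧ A * K = K ∧ K * A = K := by
  set K := lq J A with hK
  have hAK : A * K = K := by
    refine le_antisymm ?_ (h.le_mul_left K)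
    rw [hK, le_lq_iff, ← mul_assoc, h.JA']
    exact mul_lq_le J A
  have hKA : K * A = K := by
    refine le_antisymm ?_ (h.le_mul_right K)
    rw [hK, le_lq_iff, ← mul_assoc]
    exact (mul_le_mul_left (mul_lq_le J A) A).trans h.AA
  have h1K : (1 : B) ∈ K := fun x hx => by simpa using h.Jle hx
  have h1KJ : (1 : B) ∈ K * J := hproj J h.Jle h.AJ h.pi
  have hJK : J ≤ J * K := by
    calc J = J * 1 := (mul_one J).symm
      _ ≤ J * K := mul_le_mul_right (Submodule.one_le.2 h1K) J
  have hτA : J * K ≤ A := mul_lq_le J A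
  have hτJ : J * K * J = J := by
    refine le_antisymm ((mul_le_mul_left hτA J).trans h.AJ) ?_
    rw [mul_assoc]
    calc J = J * 1 := (mul_one J).symm
      _ ≤ J * (K * J) := mul_le_mul_right (Submodule.one_le.2 h1KJ) J
  obtain ⟨e, heτ, he⟩ := h.ssl (J * K) hτA (by rw [mul_assoc, hKA])
  have chain : ∀ i : ℕ, J ^ (i + 1) + sc B π * A ≤ J * K * (J ^ (i + 1) + sc B π * A) := by
    intro i
    induction i with
    | zero =>
      have : J ^ (0 + 1) + sc B π * A = J := by
        rw [zero_add, pow_one]; exact sup_eq_left.2 h.pi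
      rw [this, hτJ]
    | succ i ih =>
      set X := J ^ (i + 1) + sc B π * A with hX
      set X' := J ^ (i + 1 + 1) + sc B π * A with hX'
      have hX'X : X' ≤ X := by
        refine sup_le (le_trans ?_ le_sup_left) le_sup_right
        rw [pow_succ]
        exact (mul_le_mul_right h.Jle _).trans (h.pow_succ_A i).le
      have hJX : J * X ≤ X' := by
        rw [hX, mul_add, ← pow_succ']
        refine sup_le le_sup_left (le_trans ?_ le_sup_right)
        rw [← mul_assoc, ← sc_comm, mul_assoc]
        exact mul_le_mul_right (h.JA.trans h.Jle) _
      have hJX2 : J * X ≤ J * K * X' := by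
        calc J * X = J * K * (J * X) := by rw [← mul_assoc, hτJ]
          _ ≤ J * K * X' := mul_le_mul_right hJX _
      have key : ∀ y ∈ J * K * X, y - e * y ∈ J * X := by
        intro y hy
        induction hy using Submodule.mul_induction_on' with
        | mem_mul_mem m hm n hn =>
          rw [← mul_assoc, ← sub_mul]
          exact Submodule.mul_mem_mul (he m hm) hn
        | add x _ y _ hx hy =>
          have : x + y - e * (x + y) = (x - e * x) + (y - e * y) := by noncomm_ring
          rw [this]; exact Submodule.add_mem _ hx hy
      intro x hx
      have h3 := hJX2 (key x (ih (hX'X hx)))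
      have h4 : e * x ∈ J * K * X' := Submodule.mul_mem_mul heτ hx
      simpa using Submodule.add_mem _ h3 h4
  have hτ : J * K = A := by
    refine le_antisymm hτA ?_
    have h5 := chain t
    rw [show J ^ (t + 1) + sc B π * A = sc B π * A from sup_eq_right.2 h.nil,
      ← mul_assoc, ← sc_comm, mul_assoc, mul_assoc, hKA] at h5
    exact sc_cancel hπ h5
  exact ⟨K, hτ, h.inverse_aux hproj K _ rfl hAK h1KJ hτ, hAK, hKA⟩

end Ord

end Lattice
end HerOrd

namespace HerOrd

section LemT
variable {R B : Type*} [CommRing R] [Ring B] [Algebra R B]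

theorem pow_add_eq {A X Y : Submodule R B} (hXA : X ≤ A) (hYA : Y ≤ A)
    (hAA : A * A = A) (hY : A * Y ≤ Y) (hY' : Y * A ≤ Y)
    (h : A ≤ X + Y) (n : ℕ) : A ≤ X ^ (n + 1) + Y := by
  induction n with
  | zero => simpa using h
  | succ n ih =>
    have hp : X ^ (n + 1) ≤ A := by
      clear ih
      induction n with
      | zero => simpa using hXA
      | succ n ih => rw [pow_succ]; exact (mul_le_mul' ih hXA).trans hAA.le
    have e : (X ^ (n+1) + Y) * (X + Y) = X ^ (n+1+1) + (Y * X + (X ^ (n + 1) + Y) * Y) := by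
      rw [mul_add (X ^ (n + 1) + Y), add_mul _ _ X, ← pow_succ, add_assoc]
    calc A = A * A := hAA.symm
      _ ≤ (X ^ (n+1) + Y) * (X + Y) := mul_le_mul' ih h
      _ ≤ X ^ (n+1+1) + Y := by
        rw [e]
        refine sup_le le_sup_left (sup_le ?_ ?_)
        · exact ((mul_le_mul_right hXA Y).trans hY').trans le_sup_right
        · exact ((mul_le_mul_left (sup_le hp hYA) Y).trans hY).trans le_sup_right

theorem sc_pow_mul (r : R) (A : Submodule R B) (hAA : A * A ≤ A) (hA1 : 1 ≤ A) (k : ℕ) :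
    (sc B r * A) ^ k ≤ sc B (r ^ k) * A := by
  induction k with
  | zero =>
    intro y hy
    exact mem_sc_mul.2 ⟨y, hA1 (by simpa using hy), by simp⟩
  | succ k ih =>
    rw [pow_succ]
    refine (mul_le_mul_left ih _).trans (Submodule.mul_le.2 ?_)
    intro x hx y hy
    obtain ⟨x, hx', rfl⟩ := mem_sc_mul.1 hx
    obtain ⟨y, hy', rfl⟩ := mem_sc_mul.1 hy
    refine mem_sc_mul.2 ⟨x * y, hAA (Submodule.mul_mem_mul hx' hy'), ?_⟩
    rw [smul_mul_smul_comm, pow_succ]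

/-- Artin–Rees for commutators. -/
theorem artin_rees [IsNoetherianRing R] (π : R) (A : Submodule R B) (hA : A.FG)
    (hAA : A * A ≤ A)
    (hcen : ∀ x ∈ A, (∀ a ∈ A, x * a = a * x) → ∃ r : R, x = algebraMap R B r)
    (hπ : IsUnit (algebraMap R B π)) :
    ∃ k : ℕ, ∀ e ∈ A, (∀ a ∈ A, e * a - a * e ∈ sc B (π ^ k) * A) →
      ∃ r : R, ∃ y ∈ A, e = algebraMap R B r + π • y := by
  obtain ⟨S, hS⟩ := hA
  have hSA : ∀ s ∈ S, s ∈ A := fun s hs => hS ▸ Submodule.subset_span hs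
  haveI : Module.Finite R A := Module.Finite.of_fg ⟨S, hS⟩
  have hm : ∀ x ∈ A, ∀ a ∈ A, x * a - a * x ∈ A := fun x hx a ha =>
    A.sub_mem (hAA (Submodule.mul_mem_mul hx ha)) (hAA (Submodule.mul_mem_mul ha hx))
  let d : A →ₗ[R] (S → A) :=
    { toFun := fun x s => ⟨x.1 * s.1 - s.1 * x.1, hm _ x.2 _ (hSA _ s.2)⟩
      map_add' := fun x y => by
        ext s; simp only [Submodule.coe_add, Pi.add_apply]; noncomm_ring
      map_smul' := fun r x => by
        ext s; simp only [Submodule.coe_smul, Pi.smul_apply, RingHom.id_apply, smul_mul_assoc,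
          mul_smul_comm, smul_sub] }
  obtain ⟨k, hk⟩ := Ideal.exists_pow_inf_eq_pow_smul (Ideal.span {π}) (LinearMap.range d)
  refine ⟨k + 1, fun e he hcomm => ?_⟩
  have h1 : d ⟨e, he⟩ ∈ (Ideal.span {π} ^ (k + 1) • ⊤ : Submodule R (S → A)) ⊓
      LinearMap.range d := by
    refine ⟨?_, ⟨_, rfl⟩⟩
    choose z hzA hz using fun s : S => mem_sc_mul.1 (hcomm s.1 (hSA _ s.2))
    have : d ⟨e, he⟩ = π ^ (k + 1) • (fun s => (⟨z s, hzA s⟩ : A)) := by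
      ext s; exact (hz s).symm
    rw [this]
    exact Submodule.smul_mem_smul (Ideal.pow_mem_pow (Ideal.mem_span_singleton_self π) _)
      trivial
  rw [hk (k + 1) (Nat.le_succ k), Nat.add_sub_cancel_left, pow_one,
    Submodule.ideal_span_singleton_smul] at h1
  obtain ⟨w, hw, hwe⟩ := h1
  obtain ⟨y, hy⟩ := hw.2
  have hz : ∀ s ∈ S, (e - π • y.1) * s = s * (e - π • y.1) := by
    intro s hs
    have h2 : π • d y = d ⟨e, he⟩ := by rw [hy]; exact hwe
    have h3 := congrArg Subtype.val (congrFun h2 ⟨s, hs⟩)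
    have h4 : π • (y.1 * s - s * y.1) = e * s - s * e := h3
    rw [sub_mul, mul_sub, smul_mul_assoc, mul_smul_comm]
    rw [smul_sub] at h4
    rw [sub_eq_sub_iff_sub_eq_sub]
    exact h4.symm
  obtain ⟨r, hr⟩ := hcen (e - π • y.1) (A.sub_mem he (A.smul_mem _ y.2)) (by
    intro a ha
    rw [← hS] at ha
    induction ha using Submodule.span_induction with
    | mem x hx => exact hz x hx
    | zero => simp
    | add x y _ _ hx hy => rw [mul_add, add_mul, hx, hy]
    | smul r x _ hx => rw [mul_smul_comm, smul_mul_assoc, hx])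
  exact ⟨r, y.1, y.2, by rw [← hr]; simp⟩

namespace Ord
variable {π : R} {t : ℕ} {A J : Submodule R B}

theorem le_J_of_sq (h : Ord π t A J) {X : Submodule R B} (hX : X ≤ A) (hAX : A * X ≤ X)
    (hXX : X * X ≤ J) : X ≤ J := by
  obtain ⟨g, hg, hg'⟩ := h.ssr X hX hAX
  intro x hx
  have := J.add_mem (hg' x hx) (hXX (Submodule.mul_mem_mul hx hg))
  simpa using this

theorem mul_pow_comm {M J : Submodule R B} (h : J * M = M * J) (n : ℕ) :
    M * J ^ n = J ^ n * M := by
  have : Commute M J := h.symm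
  exact this.pow_right n

theorem lemT [IsNoetherianRing R] (h : Ord π t A J) (hA : A.FG)
    (hcen : ∀ x ∈ A, (∀ a ∈ A, x * a = a * x) → ∃ r : R, x = algebraMap R B r)
    (hπ : IsUnit (algebraMap R B π)) (hloc : ∀ r : R, IsUnit r ∨ π ∣ r)
    {M : Submodule R B} (hJM : J ≤ M) (hM : M ≤ A) (hAM : A * M ≤ M) (hMA : M * A ≤ M)
    (hcomm : J * M = M * J) : M ≤ J ∨ A ≤ M := by
  obtain ⟨N, hN⟩ : ∃ N, N = lq M J ⊓ A := ⟨_, rfl⟩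
  have hNA' : N ≤ A := by rw [hN]; exact inf_le_right
  have hMN : M * N ≤ J := by
    rw [hN]; exact (mul_le_mul_right inf_le_left M).trans (mul_lq_le M J)
  have hAN : A * N ≤ N := by
    conv_rhs => rw [hN]
    refine le_inf (le_lq_iff.2 ?_) ((mul_le_mul_right hNA' A).trans h.AA)
    rw [← mul_assoc]
    exact (mul_le_mul_left hMA N).trans hMN
  have hNA : N * A ≤ N := by
    conv_rhs => rw [hN]
    refine le_inf (le_lq_iff.2 ?_) ((mul_le_mul_left hNA' A).trans h.AA)
    rw [← mul_assoc]
    exact (mul_le_mul_left hMN A).trans h.JA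
  have hJN : J ≤ N := by
    rw [hN]
    exact le_inf (le_lq_iff.2 ((mul_le_mul_left hM J).trans h.AJ)) h.Jle
  have hNM : N * M ≤ J := by
    refine h.le_J_of_sq ((mul_le_mul' hNA' hM).trans h.AA) ?_ ?_
    · rw [← mul_assoc]; exact mul_le_mul_left hAN M
    · calc N * M * (N * M) = N * (M * N) * M := by simp only [mul_assoc]
        _ ≤ A * J * A := mul_le_mul' (mul_le_mul' hNA' hMN) hM
        _ ≤ J := by rw [h.AJ', h.JA']
  have hsum : A ≤ M + N := by
    obtain ⟨g, hg, hg'⟩ := h.ssr M hM hAM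
    have h1g : 1 - g ∈ N := by
      rw [hN]
      refine ⟨fun m hm => ?_, A.sub_mem h.one (hM hg)⟩
      rw [mul_sub, mul_one]; exact hg' m hm
    intro a ha
    have : a = a * g + a * (1 - g) := by rw [← mul_add]; simp
    rw [this]
    exact Submodule.add_mem _ (Submodule.mem_sup_left (hAM (Submodule.mul_mem_mul ha hg)))
      (Submodule.mem_sup_right (hAN (Submodule.mul_mem_mul ha h1g)))
  have hMNn : ∀ n : ℕ, M ^ n * N ^ n ≤ J ^ n := by
    intro n
    induction n with
    | zero => simp
    | succ n ih =>
      calc M ^ (n+1) * N ^ (n+1) = M * (M ^ n * N ^ n) * N := by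
            rw [pow_succ' M, pow_succ N]; simp only [mul_assoc]
        _ ≤ M * J ^ n * N := mul_le_mul_left (mul_le_mul_right ih M) N
        _ = J ^ n * (M * N) := by rw [mul_pow_comm hcomm, mul_assoc]
        _ ≤ J ^ n * J := mul_le_mul_right hMN _
        _ = J ^ (n + 1) := (pow_succ J n).symm
  have hNMn : ∀ n : ℕ, N ^ n * M ^ n ≤ J ^ n := by
    intro n
    induction n with
    | zero => simp
    | succ n ih =>
      calc N ^ (n+1) * M ^ (n+1) = N * (N ^ n * M ^ n) * M := by
            rw [pow_succ' N, pow_succ M]; simp only [mul_assoc]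
        _ ≤ N * J ^ n * M := mul_le_mul_left (mul_le_mul_right ih N) M
        _ = N * M * J ^ n := by rw [mul_assoc, ← mul_pow_comm hcomm, mul_assoc]
        _ ≤ J * J ^ n := mul_le_mul_left hNM _
        _ = J ^ (n + 1) := (pow_succ' J n).symm
  obtain ⟨k, hk⟩ := artin_rees π A hA h.AA hcen hπ
  obtain ⟨n, hn⟩ : ∃ n, n + 1 = (t + 1) * (k + 1) := ⟨(t+1)*(k+1) - 1, by
    have : 0 < (t+1)*(k+1) := by positivity
    omega⟩
  have hpowle : ∀ {X : Submodule R B}, A * X ≤ X → A * X ^ (n+1) ≤ X ^ (n + 1) := by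
    intro X hX
    rw [pow_succ', ← mul_assoc]; exact mul_le_mul_left hX _
  have hpowle2 : ∀ {X : Submodule R B}, X ≤ A → A * X ≤ X → X ^ (n+1) ≤ X := by
    intro X hX hX'
    clear hpowle hn hk
    induction n with
    | zero => simp
    | succ n ih => rw [pow_succ']; exact (mul_le_mul' hX ih).trans hX'
  have hpowle3 : ∀ {X : Submodule R B}, X * A ≤ X → X ^ (n+1) * A ≤ X ^ (n + 1) := by
    intro X hX
    rw [pow_succ, mul_assoc]; exact mul_le_mul_right hX _
  have hsum1 : A ≤ M ^ (n + 1) + N := pow_add_eq hM hNA' h.AA' hAN hNA hsum n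
  have hMn : M ^ (n+1) ≤ M := hpowle2 hM hAM
  have hNn : N ^ (n+1) ≤ N := hpowle2 hNA' hAN
  have hsum2 : A ≤ N ^ (n + 1) + M ^ (n + 1) :=
    pow_add_eq hNA' (hMn.trans hM) h.AA' (hpowle hAM) (hpowle3 hMA)
      (by rw [add_comm]; exact hsum1) n
  obtain ⟨f, hf, e, he, hfe⟩ := Submodule.mem_sup.1 (hsum2 h.one)
  have heA : e ∈ A := hM (hMn he)
  obtain ⟨r, y, hy, hr⟩ := hk e heA (by
    intro a ha
    have h1 : e * a - a * e = e * a * f - f * (a * e) := by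
      have : f = 1 - e := by rw [← hfe]; simp
      rw [this]; noncomm_ring
    have h2 : e * a * f ∈ J ^ (n + 1) :=
      hMNn _ (Submodule.mul_mem_mul (hpowle3 hMA (Submodule.mul_mem_mul he ha)) hf)
    have h3 : f * (a * e) ∈ J ^ (n + 1) :=
      hNMn _ (Submodule.mul_mem_mul hf (hpowle hAM (Submodule.mul_mem_mul ha he)))
    have h4 : J ^ (n + 1) ≤ sc B (π ^ (k)) * A := by
      rw [hn, pow_mul]
      refine (pow_le_pow_left' h.nil _).trans ?_
      refine (sc_pow_mul π A h.AA (Submodule.one_le.2 h.one) (k+1)).trans ?_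
      intro y hy
      obtain ⟨x, hx, rfl⟩ := mem_sc_mul.1 hy
      exact mem_sc_mul.2 ⟨π • x, A.smul_mem _ hx, by rw [smul_smul, pow_succ]⟩
    rw [h1]
    exact h4 (Submodule.sub_mem _ h2 h3))
  have hπA : ∀ x ∈ A, π • x ∈ J := fun x hx => h.pi (mem_sc_mul.2 ⟨x, hx, rfl⟩)
  rcases hloc r with hu | ⟨r', hr'⟩
  · right
    have h1 : algebraMap R B r ∈ M := by
      have : algebraMap R B r = e - π • y := by rw [hr]; simp
      rw [this]
      exact M.sub_mem (hMn he) (hJM (hπA y hy))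
    obtain ⟨u, rfl⟩ := hu
    have h2 : (1 : B) ∈ M := by
      have := M.smul_mem (↑u⁻¹ : R) h1
      rwa [Algebra.smul_def, ← map_mul, Units.inv_mul, map_one] at this
    intro a ha
    simpa using hAM (Submodule.mul_mem_mul ha h2)
  · left
    have h1 : e ∈ J := by
      have : e = π • (algebraMap R B r' + y) := by
        rw [hr, hr', smul_add, map_mul, Algebra.smul_def π (algebraMap R B r')]
      rw [this]
      refine hπA _ (A.add_mem ?_ hy)
      rw [Algebra.algebraMap_eq_smul_one]
      exact A.smul_mem _ h.one
    have h2 : (1 : B) ∈ N := by rw [← hfe]; exact N.add_mem (hNn hf) (hJN h1)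
    intro m hm
    simpa using hMN (Submodule.mul_mem_mul hm h2)

theorem lemU [IsNoetherianRing R] (h : Ord π t A J) (hA : A.FG)
    (hcen : ∀ x ∈ A, (∀ a ∈ A, x * a = a * x) → ∃ r : R, x = algebraMap R B r)
    (hπ : IsUnit (algebraMap R B π)) (hloc : ∀ r : R, IsUnit r ∨ π ∣ r)
    {K : Submodule R B} (hJK : J * K = A) (hKJ : K * J = A) (hAK : A * K = K)
    (s : ℕ) {X : Submodule R B} (hX : X ≤ A) (hAX : A * X ≤ X) (hXA : X * A ≤ X)
    (hcomm : J * X = X * J) (hs : J ^ s ≤ X) : ∃ n, X = A * J ^ n := by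
  induction s generalizing X with
  | zero =>
    refine ⟨0, le_antisymm (by simpa using hX) ?_⟩
    rw [pow_zero] at hs ⊢
    exact (mul_le_mul_right hs A).trans hAX
  | succ s ih =>
    rcases h.lemT hA hcen hπ hloc (M := X + J) le_sup_right (sup_le hX h.Jle)
      (by rw [mul_add]; exact sup_le_sup hAX h.AJ) (by rw [add_mul]; exact sup_le_sup hXA h.JA)
      (by rw [mul_add, add_mul, hcomm]) with h1 | h1
    · have hXJ : X ≤ J := le_sup_left.trans h1
      have h2 : J * (K * X) = X := by
        rw [← mul_assoc, hJK]
        exact le_antisymm hAX (h.le_mul_left X)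
      have h3 : K * X * J = X := by
        rw [mul_assoc, ← hcomm, ← mul_assoc, hKJ]
        exact le_antisymm hAX (h.le_mul_left X)
      obtain ⟨n, hn⟩ := ih (X := K * X) ((mul_le_mul_right hXJ K).trans hKJ.le)
        (by rw [← mul_assoc, hAK]) (by rw [mul_assoc]; exact mul_le_mul_right hXA K)
        (by rw [h2, h3]) (by
          refine (h.le_mul_left _).trans ?_
          rw [← hKJ, mul_assoc, ← pow_succ']
          exact mul_le_mul_right hs K)
      refine ⟨n + 1, ?_⟩
      rw [h.A_pow_succ, pow_succ', ← h2, hn, ← mul_assoc, h.JA']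
    · have h2 := h.ideal_pow_le hX hAX hXA h1 s
      have h3 : A ≤ X := h2.trans (sup_le le_rfl hs)
      refine ⟨0, le_antisymm (by simpa using hX) (by simpa using h3)⟩

end Ord
end LemT
end HerOrd

namespace HerOrd
section CSA

theorem mlr_surj (F B : Type*) [Field F] [Ring B] [Algebra F B] [FiniteDimensional F B]
    [Algebra.IsCentral F B] [IsSimpleRing B] :
    Function.Surjective (AlgHom.mulLeftRight F B) := by
  let P : Subalgebra F (Module.End F B) := (AlgHom.mulLeftRight F B).range
  have hP : ∀ a b : B, ∃ p : P, ∀ x : B, p • x = a * x * b := fun a b =>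
    ⟨⟨AlgHom.mulLeftRight F B (a ⊗ₜ MulOpposite.op b), ⟨_, rfl⟩⟩, fun x => by
      change AlgHom.mulLeftRight F B (a ⊗ₜ MulOpposite.op b) x = _
      simp⟩
  have hs : IsSimpleModule P B := by
    refine isSimpleModule_iff_toSpanSingleton_surjective.mpr ⟨inferInstance, fun v hv w => ?_⟩
    let I : TwoSidedIdeal B := TwoSidedIdeal.mk' (Set.range fun p : P => p • v)
      ⟨0, by simp⟩ (by rintro _ _ ⟨p, rfl⟩ ⟨q, rfl⟩; exact ⟨p + q, add_smul _ _ _⟩)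
      (by
        rintro _ ⟨p, rfl⟩
        obtain ⟨q, hq⟩ := hP (-1) 1
        exact ⟨q * p, by simp [mul_smul, hq]⟩)
      (by
        rintro x _ ⟨p, rfl⟩
        obtain ⟨q, hq⟩ := hP x 1
        exact ⟨q * p, by simp [mul_smul, hq]⟩)
      (by
        rintro _ x ⟨p, rfl⟩
        obtain ⟨q, hq⟩ := hP 1 x
        exact ⟨q * p, by simp [mul_smul, hq]⟩)
    have h1 : (1 : B) ∈ I := by
      refine IsSimpleRing.one_mem_of_ne_zero_mem I hv ?_
      exact (TwoSidedIdeal.mem_mk' ..).2 ⟨1, one_smul _ _⟩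
    obtain ⟨p, hp⟩ := (TwoSidedIdeal.mem_mk' ..).1 h1
    obtain ⟨q, hq⟩ := hP w 1
    refine ⟨q * p, ?_⟩
    simp only at hp
    simp [mul_smul, hp, hq]
  have hc : ∀ g : Module.End P B, ∃ r : F, ∀ x, g x = r • x := by
    intro g
    have h1 : ∀ a b, g (a * b) = a * g b := by
      intro a b
      obtain ⟨q, hq⟩ := hP a 1
      have := g.map_smul q b
      rw [hq, hq] at this
      simpa using this
    have h2 : ∀ a b, g (a * b) = g a * b := by
      intro a b
      obtain ⟨q, hq⟩ := hP 1 b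
      have := g.map_smul q a
      rw [hq, hq] at this
      simpa using this
    have h3 : g 1 ∈ Subalgebra.center F B := by
      rw [Subalgebra.mem_center_iff]
      intro b
      rw [← h1, mul_one, ← h2, one_mul]
    obtain ⟨r, hr⟩ := Algebra.mem_bot.1 (Algebra.IsCentral.out h3)
    refine ⟨r, fun x => ?_⟩
    rw [Algebra.smul_def, hr, ← h2, one_mul]
  intro f
  let f' : Module.End (Module.End P B) B :=
    { toFun := f
      map_add' := f.map_add
      map_smul' := fun g x => by
        obtain ⟨r, hr⟩ := hc g
        simp only [Module.End.smul_def, RingHom.id_apply]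
        rw [hr, hr, map_smul] }
  obtain ⟨s, hs'⟩ := (inferInstance : Module.Finite F B).fg_top
  obtain ⟨⟨_, ⟨q, rfl⟩⟩, hr⟩ := jacobson_density (R := P) (M := B) f' s
  refine ⟨q, ?_⟩
  refine LinearMap.ext fun x => ?_
  have hx : x ∈ Submodule.span F (s : Set B) := hs' ▸ trivial
  induction hx using Submodule.span_induction with
  | mem x hx => exact (hr x hx).symm
  | zero => simp
  | add x y _ _ hx hy => rw [map_add, map_add, hx, hy]
  | smul r x _ hx => rw [map_smul, map_smul, hx]

theorem mlr_inj (F B : Type*) [Field F] [Ring B] [Algebra F B] [FiniteDimensional F B]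
    [Algebra.IsCentral F B] [IsSimpleRing B] :
    Function.Injective (AlgHom.mulLeftRight F B) := by
  have h : Module.finrank F (B ⊗[F] Bᵐᵒᵖ) = Module.finrank F (Module.End F B) := by
    rw [Module.finrank_tensorProduct, Module.finrank_linearMap]
    congr 1
    exact (MulOpposite.opLinearEquiv F).symm.finrank_eq
  have := (LinearMap.injective_iff_surjective_of_finrank_eq_finrank h
    (f := (AlgHom.mulLeftRight F B).toLinearMap)).2 (mlr_surj F B)
  exact this

/-- functionals extend to a base change by bimodule operators -/
theorem ext_functional (F L B : Type*) [Field F] [Ring B] [Algebra F B] [FiniteDimensional F B]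
    [Algebra.IsCentral F B] [IsSimpleRing B] [Field L] [Algebra F L] (f : B →ₗ[F] F) :
    ∃ (n : ℕ) (a b : Fin n → L ⊗[F] B), ∀ l : L, ∀ x : B,
      ∑ i, a i * (l ⊗ₜ x) * b i = (f x • l) ⊗ₜ (1 : B) := by
  obtain ⟨q, hq⟩ := mlr_surj F B ((Algebra.linearMap F B).comp f)
  obtain ⟨n, a, b, rfl⟩ : ∃ (n : ℕ) (a : Fin n → B) (b : Fin n → Bᵐᵒᵖ),
      q = ∑ i, a i ⊗ₜ b i := by
    clear hq
    induction q using TensorProduct.induction_on with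
    | zero => exact ⟨0, Fin.elim0, Fin.elim0, by simp⟩
    | tmul x y => exact ⟨1, fun _ => x, fun _ => y, by simp⟩
    | add x y hx hy =>
      obtain ⟨n, a, b, rfl⟩ := hx
      obtain ⟨m, c, d, rfl⟩ := hy
      exact ⟨n + m, Fin.append a c, Fin.append b d, by simp [Fin.sum_univ_add]⟩
  refine ⟨n, fun i => 1 ⊗ₜ a i, fun i => 1 ⊗ₜ (b i).unop, fun l x => ?_⟩
  have h1 := LinearMap.congr_fun hq x
  simp only [map_sum, LinearMap.sum_apply, AlgHom.mulLeftRight_apply, LinearMap.comp_apply,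
    Algebra.linearMap_apply] at h1
  simp only [Algebra.TensorProduct.tmul_mul_tmul, one_mul, mul_one]
  rw [← TensorProduct.tmul_sum, h1, Algebra.algebraMap_eq_smul_one, TensorProduct.tmul_smul,
    TensorProduct.smul_tmul']

theorem bc_central (F L B : Type*) [Field F] [Ring B] [Algebra F B] [FiniteDimensional F B]
    [Algebra.IsCentral F B] [IsSimpleRing B] [Field L] [Algebra F L] :
    Algebra.IsCentral L (L ⊗[F] B) := by
  constructor
  intro z hz
  rw [Subalgebra.mem_center_iff] at hz
  obtain ⟨f, hf⟩ := Module.Projective.exists_dual_ne_zero F (one_ne_zero : (1 : B) ≠ 0)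
  obtain ⟨n, a, b, hab⟩ := ext_functional F L B f
  have h1 : ∀ y : L ⊗[F] B, ∃ l : L, ∑ i, a i * y * b i = algebraMap L _ l := by
    intro y
    induction y using TensorProduct.induction_on with
    | zero => exact ⟨0, by simp⟩
    | tmul x y => exact ⟨_, hab x y⟩
    | add x y hx hy =>
      obtain ⟨l, hl⟩ := hx
      obtain ⟨m, hm⟩ := hy
      exact ⟨l + m, by simp only [mul_add, add_mul, Finset.sum_add_distrib, hl, hm, map_add]⟩
  have h2 : ∑ i, a i * z * b i = z * algebraMap L _ (f 1 • 1) := by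
    have := hab 1 1
    rw [← Algebra.TensorProduct.one_def] at this
    rw [Algebra.TensorProduct.algebraMap_apply, Algebra.algebraMap_self_apply, ← this,
      Finset.mul_sum]
    refine Finset.sum_congr rfl fun i _ => ?_
    rw [hz, mul_one, mul_assoc]
  obtain ⟨l, hl⟩ := h1 z
  have hne : (f 1 • 1 : L) ≠ 0 := smul_ne_zero hf one_ne_zero
  refine Algebra.mem_bot.2 ⟨l * (f 1 • 1 : L)⁻¹, ?_⟩
  rw [map_mul, ← hl, h2, mul_assoc, ← map_mul, mul_inv_cancel₀ hne, map_one, mul_one]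

theorem bc_simple (F L B : Type*) [Field F] [Ring B] [Algebra F B] [FiniteDimensional F B]
    [Algebra.IsCentral F B] [IsSimpleRing B] [Field L] [Algebra F L] :
    IsSimpleRing (L ⊗[F] B) := by
  refine IsSimpleRing.of_eq_bot_or_eq_top fun I => ?_
  by_cases hI : I = ⊥
  · exact Or.inl hI
  right
  obtain ⟨y, hyI, hy⟩ : ∃ y ∈ I, y ≠ 0 := by
    by_contra! h
    exact hI (eq_bot_iff.2 fun x hx => h x hx)
  let β := Module.finBasis F B
  let β' := Algebra.TensorProduct.basis L β
  obtain ⟨j, hj⟩ : ∃ j, β'.repr y j ≠ 0 := by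
    by_contra! h
    exact hy (β'.repr.map_eq_zero_iff.1 (Finsupp.ext h))
  obtain ⟨n, a, b, hab⟩ := ext_functional F L B (β.coord j)
  have h1 : ∑ i, a i * y * b i = algebraMap L _ (β'.repr y j) := by
    clear hj hy hyI
    induction y using TensorProduct.induction_on with
    | zero => simp
    | tmul x y => rw [hab]; simp [β', Algebra.TensorProduct.basis_repr_tmul, Algebra.smul_def, mul_comm]
    | add x y hx hy =>
      simp only [mul_add, add_mul, Finset.sum_add_distrib, hx, hy, map_add, Finsupp.add_apply]
  have h2 : algebraMap L (L ⊗[F] B) (β'.repr y j) ∈ I := by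
    rw [← h1]
    exact sum_mem fun i _ => I.mul_mem_right _ _ (I.mul_mem_left _ _ hyI)
  rw [← TwoSidedIdeal.one_mem_iff]
  have := I.mul_mem_left (algebraMap L _ (β'.repr y j)⁻¹) _ h2
  rwa [← map_mul, inv_mul_cancel₀ hj, map_one] at this

theorem isUnit_of_left_inj {F B : Type*} [Field F] [Ring B] [Algebra F B] [FiniteDimensional F B]
    {u : B} (h : ∀ x, u * x = 0 → x = 0) : IsUnit u := by
  have hi : Function.Injective (LinearMap.mulLeft F u) := by
    rw [injective_iff_map_eq_zero]
    exact h
  obtain ⟨v, hv⟩ := LinearMap.injective_iff_surjective.1 hi 1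
  rw [LinearMap.mulLeft_apply] at hv
  refine ⟨⟨u, v, hv, ?_⟩, rfl⟩
  have : u * (v * u - 1) = 0 := by rw [mul_sub, ← mul_assoc, hv]; simp
  exact sub_eq_zero.1 (h _ this)

/-- Skolem–Noether for endomorphisms. -/
theorem skolem (F B : Type*) [Field F] [Ring B] [Algebra F B] [FiniteDimensional F B]
    [Algebra.IsCentral F B] [IsSimpleRing B] (h : B →ₐ[F] B) :
    ∃ u : Bˣ, ∀ y, h y * u = u * y := by
  obtain ⟨f, hf⟩ := Module.Projective.exists_dual_ne_zero F (one_ne_zero : (1 : B) ≠ 0)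
  obtain ⟨t, ht⟩ := mlr_surj F B ((Algebra.linearMap F B).comp f)
  have htx : ∀ x, AlgHom.mulLeftRight F B t x = algebraMap F B (f x) := fun x =>
    LinearMap.congr_fun ht x
  have ht0 : t ≠ 0 := by
    rintro rfl
    have := htx 1
    rw [map_zero, LinearMap.zero_apply, eq_comm, map_eq_zero] at this
    exact hf this
  have h1 : ∀ y : B, (y ⊗ₜ 1) * t = (1 ⊗ₜ MulOpposite.op y) * t := by
    intro y
    apply mlr_inj F B
    ext x
    rw [map_mul, map_mul, Module.End.mul_apply, Module.End.mul_apply, htx]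
    simp [Algebra.commutes]
  have hinj : Function.Injective h := h.toRingHom.injective
  have hinj2 : Function.Injective (Algebra.TensorProduct.map h (AlgHom.id F Bᵐᵒᵖ)) :=
    Module.Flat.rTensor_preserves_injective_linearMap (M := Bᵐᵒᵖ) h.toLinearMap hinj
  have h2 : AlgHom.mulLeftRight F B (Algebra.TensorProduct.map h (AlgHom.id F Bᵐᵒᵖ) t) ≠ 0 := by
    intro h0
    rw [← map_zero (AlgHom.mulLeftRight F B)] at h0
    have := mlr_inj F B h0
    rw [← map_zero (Algebra.TensorProduct.map h (AlgHom.id F Bᵐᵒᵖ))] at this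
    exact ht0 (hinj2 this)
  obtain ⟨c, hc⟩ : ∃ c, AlgHom.mulLeftRight F B
      (Algebra.TensorProduct.map h (AlgHom.id F Bᵐᵒᵖ) t) c ≠ 0 := by
    by_contra! h0
    exact h2 (LinearMap.ext h0)
  set u := AlgHom.mulLeftRight F B (Algebra.TensorProduct.map h (AlgHom.id F Bᵐᵒᵖ) t) c with hu
  have h3 : ∀ y, h y * u = u * y := by
    intro y
    have := congrArg (fun z => AlgHom.mulLeftRight F B
      (Algebra.TensorProduct.map h (AlgHom.id F Bᵐᵒᵖ) z) c) (h1 y)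
    simpa [map_mul, Module.End.mul_apply, ← hu] using this
  have hU : IsUnit u := by
    refine isUnit_of_left_inj (F := F) ?_
    by_contra! h0
    obtain ⟨x, hx, hx0⟩ := h0
    let I : TwoSidedIdeal B := TwoSidedIdeal.mk' {x | u * x = 0}
      (by simp) (by intro x y hx hy; simp_all [mul_add]) (by intro x hx; simp_all)
      (by
        intro x y hy
        simp only [Set.mem_ofPred_eq] at hy ⊢
        rw [← mul_assoc, ← h3, mul_assoc, hy, mul_zero])
      (by
        intro x y hy
        simp only [Set.mem_ofPred_eq] at hy ⊢
        rw [← mul_assoc, hy, zero_mul])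
    have := IsSimpleRing.one_mem_of_ne_zero_mem I hx0 ((TwoSidedIdeal.mem_mk' ..).2 hx)
    have h5 := (TwoSidedIdeal.mem_mk' ..).1 this
    exact hc (by simpa using h5)
  exact ⟨hU.unit, h3⟩

end CSA
end HerOrd

namespace HerOrd
section Semi

theorem exists_rad_aux {R A Ab : Type*} [CommRing R] [Ring A] [Algebra R A] [Ring Ab]
    [Algebra R Ab] [IsArtinianRing Ab]
    (π : R) (g : A →ₐ[R] Ab) (hgs : Function.Surjective g)
    (hgk : ∀ a, g a = 0 → a ∈ sc A π * ⊤) (hgπ : g (algebraMap R A π) = 0) :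
    ∃ (I : Ideal Ab) (_ : I.IsTwoSided) (f : A →ₐ[R] Ab ⧸ I) (t : ℕ),
      IsSemisimpleRing (Ab ⧸ I) ∧
      Function.Surjective f ∧ f (algebraMap R A π) = 0 ∧
      (LinearMap.ker f.toLinearMap) ^ (t + 1) ≤ sc A π * ⊤ := by
  obtain ⟨n, hn⟩ := (inferInstance : IsSemiprimaryRing Ab).isNilpotent
  refine ⟨Ring.jacobson Ab, inferInstance, (Ideal.Quotient.mkₐ R (Ring.jacobson Ab)).comp g, n,
    inferInstance, (Ideal.Quotient.mkₐ_surjective R _).comp hgs, ?_, ?_⟩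
  · rw [AlgHom.comp_apply, hgπ, map_zero]
  · set J := LinearMap.ker ((Ideal.Quotient.mkₐ R (Ring.jacobson Ab)).comp g).toLinearMap with hJ
    have key0 : ∀ x ∈ J, g x ∈ Ring.jacobson Ab := by
      intro x hx
      have : (Ideal.Quotient.mkₐ R (Ring.jacobson Ab)) (g x) = 0 := hx
      exact Ideal.Quotient.eq_zero_iff_mem.1 this
    have key : ∀ m, ∀ x ∈ J ^ (m + 1), g x ∈ Ring.jacobson Ab ^ (m + 1) := by
      intro m
      induction m with
      | zero =>
        intro x hx
        rw [zero_add, pow_one] at hx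
        rw [zero_add, Submodule.pow_one]
        exact key0 x hx
      | succ m ih =>
        intro x hx
        rw [pow_succ'] at hx
        rw [Ideal.IsTwoSided.pow_succ]
        induction hx using Submodule.mul_induction_on' with
        | mem_mul_mem a ha b hb =>
          rw [map_mul]
          exact Ideal.mul_mem_mul (key0 a ha) (ih b hb)
        | add x _ y _ hx hy => rw [map_add]; exact add_mem hx hy
    intro x hx
    apply hgk
    have h1 := key n x hx
    rw [Ideal.IsTwoSided.pow_succ, hn] at h1
    simpa using h1

theorem exists_rad {R A : Type*} [CommRing R] [Ring A] [Algebra R A] [Module.Finite R A]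
    (π : R) (hπ : (Ideal.span {π}).IsMaximal) :
    ∃ (I : Ideal ((R ⧸ Ideal.span {π}) ⊗[R] A)) (_ : I.IsTwoSided)
      (f : A →ₐ[R] ((R ⧸ Ideal.span {π}) ⊗[R] A) ⧸ I) (t : ℕ),
      IsSemisimpleRing (((R ⧸ Ideal.span {π}) ⊗[R] A) ⧸ I) ∧
      Function.Surjective f ∧ f (algebraMap R A π) = 0 ∧
      (LinearMap.ker f.toLinearMap) ^ (t + 1) ≤ sc A π * ⊤ := by
  letI : Field (R ⧸ Ideal.span {π}) := Ideal.Quotient.field _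
  have : IsArtinianRing ((R ⧸ Ideal.span {π}) ⊗[R] A) :=
    IsArtinianRing.of_finite (R ⧸ Ideal.span {π}) _
  refine exists_rad_aux π Algebra.TensorProduct.includeRight ?_ ?_ ?_
  · intro y
    induction y using TensorProduct.induction_on with
    | zero => exact ⟨0, map_zero _⟩
    | tmul x y =>
      obtain ⟨x, rfl⟩ := Ideal.Quotient.mk_surjective x
      refine ⟨x • y, ?_⟩
      rw [Algebra.TensorProduct.includeRight_apply, TensorProduct.tmul_smul,
        TensorProduct.smul_tmul', Algebra.smul_def, mul_one]
      rfl
    | add x y hx hy =>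
      obtain ⟨x, rfl⟩ := hx
      obtain ⟨y, rfl⟩ := hy
      exact ⟨x + y, map_add _ _ _⟩
  · intro a ha
    have h1 := congrArg (TensorProduct.quotTensorEquivQuotSMul A (Ideal.span {π})) ha
    rw [Algebra.TensorProduct.includeRight_apply, map_zero] at h1
    rw [← map_one (Ideal.Quotient.mk (Ideal.span {π})),
      TensorProduct.quotTensorEquivQuotSMul_mk_tmul, one_smul,
      Submodule.Quotient.mk_eq_zero, Submodule.ideal_span_singleton_smul] at h1
    obtain ⟨w, _, hw⟩ := h1
    exact mem_sc_mul.2 ⟨w, trivial, hw⟩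
  · rw [AlgHom.commutes, Algebra.TensorProduct.algebraMap_apply]
    have : algebraMap R (R ⧸ Ideal.span {π}) π = 0 :=
      Ideal.Quotient.eq_zero_iff_mem.2 (Ideal.mem_span_singleton_self π)
    rw [this, TensorProduct.zero_tmul]

theorem exists_right_id {C : Type*} [Ring C] [IsSemisimpleRing C] (I : Submodule C C) :
    ∃ e ∈ I, ∀ m ∈ I, m * e = m := by
  obtain ⟨I', hI⟩ := exists_isCompl I
  let p := Submodule.projection I I' hI
  refine ⟨p 1, Submodule.projection_apply_mem hI 1, fun m hm => ?_⟩
  have h1 : p (m • 1) = m • p 1 := map_smul _ _ _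
  have h2 : p m = m := Submodule.projection_apply_left hI ⟨m, hm⟩
  rw [smul_eq_mul, mul_one, h2] at h1
  exact h1.symm

theorem exists_left_id {C : Type*} [Ring C] [IsSemisimpleRing C] (I : AddSubgroup C)
    (hI : ∀ x ∈ I, ∀ c, x * c ∈ I) :
    ∃ e ∈ I, ∀ m ∈ I, e * m = m := by
  let I' : Submodule Cᵐᵒᵖ Cᵐᵒᵖ :=
    { carrier := {x | x.unop ∈ I}
      add_mem' := fun ha hb => I.add_mem ha hb
      zero_mem' := I.zero_mem
      smul_mem' := fun c x hx => hI _ hx _ }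
  obtain ⟨e, he, he'⟩ := exists_right_id I'
  refine ⟨e.unop, he, fun m hm => ?_⟩
  have := he' (MulOpposite.op m) hm
  simpa using congrArg MulOpposite.unop this

theorem ord_of_hom {T E 𝒜 𝒞 : Type*} [CommRing T] [Ring E] [Algebra T E] [Ring 𝒜] [Algebra T 𝒜]
    [Ring 𝒞] [Algebra T 𝒞] [IsSemisimpleRing 𝒞] (j : 𝒜 →ₐ[T] E) (f : 𝒜 →ₐ[T] 𝒞)
    (hf : Function.Surjective f) {π : T} (hπ : f (algebraMap T 𝒜 π) = 0) {t : ℕ}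
    (hnil : (LinearMap.ker f.toLinearMap) ^ (t + 1) ≤ sc 𝒜 π * ⊤) :
    Ord π t (Submodule.map j.toLinearMap ⊤)
      (Submodule.map j.toLinearMap (LinearMap.ker f.toLinearMap)) where
  AA := by rw [← Submodule.map_mul]; exact Submodule.map_mono le_top
  one := ⟨1, trivial, map_one j⟩
  Jle := Submodule.map_mono le_top
  AJ := by
    rw [← Submodule.map_mul]
    refine Submodule.map_mono (Submodule.mul_le.2 fun a _ b hb => ?_)
    have hb : f b = 0 := hb
    change f (a * b) = 0
    rw [map_mul, hb, mul_zero]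
  JA := by
    rw [← Submodule.map_mul]
    refine Submodule.map_mono (Submodule.mul_le.2 fun a ha b _ => ?_)
    have ha : f a = 0 := ha
    change f (a * b) = 0
    rw [map_mul, ha, zero_mul]
  pi := by
    intro y hy
    obtain ⟨x, ⟨a, _, rfl⟩, rfl⟩ := mem_sc_mul.1 hy
    refine ⟨π • a, ?_, map_smul _ _ _⟩
    change f (π • a) = 0
    rw [Algebra.smul_def, map_mul, hπ, zero_mul]
  nil := by
    rw [← Submodule.map_pow]
    refine (Submodule.map_mono hnil).trans ?_
    rintro _ ⟨x, hx, rfl⟩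
    obtain ⟨a, ha, rfl⟩ := mem_sc_mul.1 hx
    exact mem_sc_mul.2 ⟨j a, ⟨a, trivial, rfl⟩, (map_smul j _ _).symm⟩
  ssr := by
    intro M hM hAM
    have hAM' : ∀ a : 𝒜, ∀ m ∈ M, j a * m ∈ M := fun a m hm =>
      hAM (Submodule.mul_mem_mul ⟨a, trivial, rfl⟩ hm)
    let I : Submodule 𝒞 𝒞 :=
      { carrier := {c | ∃ a, j a ∈ M ∧ f a = c}
        add_mem' := by
          rintro _ _ ⟨a, ha, rfl⟩ ⟨b, hb, rfl⟩
          exact ⟨a + b, by rw [map_add]; exact M.add_mem ha hb, map_add _ _ _⟩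
        zero_mem' := ⟨0, by rw [map_zero]; exact M.zero_mem, map_zero _⟩
        smul_mem' := by
          rintro c _ ⟨a, ha, rfl⟩
          obtain ⟨c, rfl⟩ := hf c
          exact ⟨c * a, by rw [map_mul]; exact hAM' _ _ ha, map_mul _ _ _⟩ }
    obtain ⟨_, ⟨e, he, rfl⟩, he'⟩ := exists_right_id I
    refine ⟨j e, he, fun m hm => ?_⟩
    obtain ⟨a, _, rfl⟩ := hM hm
    refine ⟨a - a * e, ?_, by simp⟩
    change f (a - a * e) = 0
    rw [map_sub, map_mul, he' _ ⟨a, hm, rfl⟩, sub_self]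
  ssl := by
    intro M hM hMA
    have hMA' : ∀ a : 𝒜, ∀ m ∈ M, m * j a ∈ M := fun a m hm =>
      hMA (Submodule.mul_mem_mul hm ⟨a, trivial, rfl⟩)
    let I : AddSubgroup 𝒞 :=
      { carrier := {c | ∃ a, j a ∈ M ∧ f a = c}
        add_mem' := by
          rintro _ _ ⟨a, ha, rfl⟩ ⟨b, hb, rfl⟩
          exact ⟨a + b, by rw [map_add]; exact M.add_mem ha hb, map_add _ _ _⟩
        zero_mem' := ⟨0, by rw [map_zero]; exact M.zero_mem, map_zero _⟩
        neg_mem' := by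
          rintro _ ⟨a, ha, rfl⟩
          exact ⟨-a, by rw [map_neg]; exact M.neg_mem ha, map_neg _ _⟩ }
    obtain ⟨_, ⟨e, he, rfl⟩, he'⟩ := exists_left_id I (by
      rintro _ ⟨a, ha, rfl⟩ c
      obtain ⟨c, rfl⟩ := hf c
      exact ⟨a * c, by rw [map_mul]; exact hMA' _ _ ha, map_mul _ _ _⟩)
    refine ⟨j e, he, fun m hm => ?_⟩
    obtain ⟨a, _, rfl⟩ := hM hm
    refine ⟨a - e * a, ?_, by simp⟩
    change f (a - e * a) = 0
    rw [map_sub, map_mul, he' _ ⟨a, hm, rfl⟩, sub_self]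

set_option maxHeartbeats 1000000 in
theorem semisimple_bc (R T C : Type*) [CommRing R] [CommRing T] [Algebra R T] [Ring C]
    [Algebra R C] [IsSemisimpleRing C] [Algebra.FormallyUnramified R T]
    [Algebra.EssFiniteType R T] : IsSemisimpleRing (T ⊗[R] C) := by
  obtain ⟨el, hel1, hel2⟩ : ∃ el : T ⊗[R] T, (∀ s : T, (1 ⊗ₜ s) * el = (s ⊗ₜ 1) * el) ∧
      Algebra.TensorProduct.lmul' R el = 1 := ⟨Algebra.FormallyUnramified.elem R T,
        Algebra.FormallyUnramified.one_tmul_mul_elem, Algebra.FormallyUnramified.lmul_elem⟩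
  refine (isSemisimpleModule_iff _ _).2 ⟨fun N => ?_⟩
  letI : Module C (T ⊗[R] C) := Module.compHom _
    (Algebra.TensorProduct.includeRight : C →ₐ[R] T ⊗[R] C).toRingHom
  have hsm : ∀ (c : C) (x : T ⊗[R] C), c • x = (1 ⊗ₜ c : T ⊗[R] C) * x := fun _ _ => rfl
  let N' : Submodule C (T ⊗[R] C) :=
    { carrier := N
      add_mem' := N.add_mem
      zero_mem' := N.zero_mem
      smul_mem' := fun c x hx => N.smul_mem (1 ⊗ₜ c : T ⊗[R] C) hx }
  obtain ⟨Q, hQ⟩ := exists_isCompl N'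
  let p : T ⊗[R] C →ₗ[C] T ⊗[R] C := Submodule.projection N' Q hQ
  have hpN : ∀ x, p x ∈ N := fun x => Submodule.projection_apply_mem hQ x
  have hpid : ∀ x ∈ N, p x = x := fun x hx => Submodule.projection_apply_left hQ ⟨x, hx⟩
  have hpc : ∀ (c : C) (x : T ⊗[R] C), p ((1 ⊗ₜ c) * x) = (1 ⊗ₜ c) * p x := fun c x =>
    p.map_smul c x
  have hpr : ∀ (r : R) x, p (r • x) = r • p x := by
    intro r x
    have h1 : ∀ y : T ⊗[R] C, r • y = (1 ⊗ₜ (algebraMap R C r)) * y := by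
      intro y
      rw [Algebra.smul_def, Algebra.TensorProduct.algebraMap_apply']
    rw [h1, h1, hpc]
  let pR : T ⊗[R] C →ₗ[R] T ⊗[R] C := ⟨⟨p, p.map_add⟩, hpr⟩
  let tm : T →ₐ[R] T ⊗[R] C := Algebra.TensorProduct.includeLeft
  let Ψ : T ⊗[R] T →ₗ[R] (T ⊗[R] C →ₗ[R] T ⊗[R] C) := TensorProduct.lift
    (LinearMap.mk₂ R (fun s t => (LinearMap.mulLeft R (tm s)).comp
      (pR.comp (LinearMap.mulLeft R (tm t))))
      (by intro a b c; refine LinearMap.ext fun x => ?_; simp [add_mul])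
      (by intro a b c; refine LinearMap.ext fun x => ?_; simp)
      (by intro a b c; refine LinearMap.ext fun x => ?_; simp [add_mul, mul_add])
      (by
        intro a b c
        refine LinearMap.ext fun x => ?_
        change tm b * p (tm (a • c) * x) = a • (tm b * p (tm c * x))
        rw [map_smul, smul_mul_assoc, hpr, mul_smul_comm]))
  have hΨ : ∀ s t x, Ψ (s ⊗ₜ t) x = tm s * p (tm t * x) := fun s t x => rfl
  have hcomm : ∀ (s : T) (c : C), tm s * (1 ⊗ₜ c) = (1 ⊗ₜ c) * tm s := by
    intro s c; simp [tm]
  have h1 : ∀ z, ∀ (c : C) x, Ψ z ((1 ⊗ₜ c) * x) = (1 ⊗ₜ c) * Ψ z x := by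
    intro z c x
    induction z using TensorProduct.induction_on with
    | zero => simp
    | tmul s t => rw [hΨ, hΨ, ← mul_assoc, hcomm, mul_assoc, hpc, ← mul_assoc, hcomm, mul_assoc]
    | add a b ha hb => simp only [map_add, LinearMap.add_apply, ha, hb, mul_add]
  have h2 : ∀ z, ∀ (s : T) x, Ψ ((1 ⊗ₜ s) * z) x = Ψ z (tm s * x) := by
    intro z s x
    induction z using TensorProduct.induction_on with
    | zero => simp
    | tmul a b =>
      rw [Algebra.TensorProduct.tmul_mul_tmul, one_mul, hΨ, hΨ, mul_comm s b, map_mul tm, mul_assoc]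
    | add a b ha hb => simp only [map_add, LinearMap.add_apply, ha, hb, mul_add]
  have h3 : ∀ z, ∀ (s : T) x, Ψ ((s ⊗ₜ 1) * z) x = tm s * Ψ z x := by
    intro z s x
    induction z using TensorProduct.induction_on with
    | zero => simp
    | tmul a b =>
      rw [Algebra.TensorProduct.tmul_mul_tmul, one_mul, hΨ, hΨ, map_mul, mul_assoc]
    | add a b ha hb => simp only [map_add, LinearMap.add_apply, ha, hb, mul_add]
  have h4 : ∀ z x, Ψ z x ∈ N := by
    intro z x
    induction z using TensorProduct.induction_on with
    | zero => simp
    | tmul a b => rw [hΨ]; exact N.smul_mem (tm a) (hpN _)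
    | add a b ha hb => simp only [map_add, LinearMap.add_apply]; exact N.add_mem ha hb
  have h5 : ∀ z, ∀ x ∈ N, Ψ z x = tm (Algebra.TensorProduct.lmul' R z) * x := by
    intro z x hx
    induction z using TensorProduct.induction_on with
    | zero => simp
    | tmul a b =>
      rw [hΨ, hpid (tm b * x) (N.smul_mem (tm b) hx), Algebra.TensorProduct.lmul'_apply_tmul, map_mul,
        mul_assoc]
    | add a b ha hb => simp only [map_add, LinearMap.add_apply, ha, hb, add_mul]
  let q : T ⊗[R] C →ₗ[T ⊗[R] C] N :=
    { toFun := fun x => ⟨Ψ el x, h4 _ _⟩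
      map_add' := fun x y => by ext; simp
      map_smul' := fun d x => by
        apply Subtype.ext
        simp only [smul_eq_mul, RingHom.id_apply, Submodule.coe_smul]
        induction d using TensorProduct.induction_on with
        | zero => simp
        | tmul s c =>
          have : (s ⊗ₜ c : T ⊗[R] C) = tm s * (1 ⊗ₜ c) := by simp [tm]
          rw [this, mul_assoc, ← h2, hel1, h3, h1, mul_assoc]
        | add a b ha hb => simp only [add_mul, map_add, ha, hb] }
  refine ⟨LinearMap.ker q, LinearMap.isCompl_of_proj (f := q) fun x => ?_⟩
  apply Subtype.ext
  change Ψ el x = x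
  rw [h5 _ _ x.2, hel2, map_one, one_mul]

end Semi
end HerOrd

namespace HerOrd
section Ext

variable {R : Type*} (T : Type*) {B E : Type*} [CommRing R] [CommRing T] [Algebra R T]
  [Ring B] [Algebra R B] [Ring E] [Algebra R E] [Algebra T E] [IsScalarTower R T E]

/-- Extension of a lattice along `ι`. -/
def ext (ι : B →ₐ[R] E) (X : Submodule R B) : Submodule T E := Submodule.span T (ι '' X)

variable (ι : B →ₐ[R] E)

theorem mem_ext {X : Submodule R B} {x : B} (hx : x ∈ X) : ι x ∈ ext T ι X :=
  Submodule.subset_span ⟨x, hx, rfl⟩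

theorem ext_le {X : Submodule R B} {Y : Submodule T E} : ext T ι X ≤ Y ↔ ∀ x ∈ X, ι x ∈ Y := by
  rw [ext, Submodule.span_le]
  exact Set.image_subset_iff

theorem ext_mono {X Y : Submodule R B} (h : X ≤ Y) : ext T ι X ≤ ext T ι Y :=
  Submodule.span_mono (Set.image_mono h)

theorem ext_mul (X Y : Submodule R B) : ext T ι (X * Y) = ext T ι X * ext T ι Y := by
  refine le_antisymm ?_ ?_
  · rw [ext_le]
    intro x hx
    induction hx using Submodule.mul_induction_on' with
    | mem_mul_mem a ha b hb =>
      rw [map_mul]; exact Submodule.mul_mem_mul (mem_ext T ι ha) (mem_ext T ι hb)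
    | add x _ y _ hx hy => rw [map_add]; exact add_mem hx hy
  · rw [ext, ext, Submodule.span_mul_span, Submodule.span_le]
    rintro _ ⟨_, ⟨x, hx, rfl⟩, _, ⟨y, hy, rfl⟩, rfl⟩
    simp only [← map_mul]
    exact mem_ext T ι (Submodule.mul_mem_mul hx hy)

theorem ext_one : ext T ι 1 = 1 := by
  refine le_antisymm ?_ ?_
  · rw [ext_le]
    intro x hx
    obtain ⟨r, rfl⟩ := Submodule.mem_one.1 hx
    refine Submodule.mem_one.2 ⟨algebraMap R T r, ?_⟩
    rw [AlgHom.commutes, ← IsScalarTower.algebraMap_apply]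
  · rw [Submodule.one_le, ← map_one ι]
    exact mem_ext T ι (Submodule.one_le.1 le_rfl)

theorem ext_pow (X : Submodule R B) (n : ℕ) : ext T ι (X ^ n) = ext T ι X ^ n := by
  induction n with
  | zero => rw [pow_zero, pow_zero, ext_one]
  | succ n ih => rw [pow_succ, pow_succ, ext_mul, ih]

theorem ext_add (X Y : Submodule R B) : ext T ι (X + Y) = ext T ι X + ext T ι Y := by
  refine le_antisymm ?_ (sup_le (ext_mono T ι le_sup_left) (ext_mono T ι le_sup_right))
  rw [ext_le]
  intro z hz
  obtain ⟨x, hx, y, hy, rfl⟩ := Submodule.mem_sup.1 hz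
  rw [map_add]
  exact add_mem (Submodule.mem_sup_left (mem_ext T ι hx))
    (Submodule.mem_sup_right (mem_ext T ι hy))

theorem ext_sc (r : R) : ext T ι (sc B r) = sc E (algebraMap R T r) := by
  refine le_antisymm ?_ ?_
  · rw [ext_le]
    intro x hx
    obtain ⟨a, rfl⟩ := Submodule.mem_span_singleton.1 hx
    rw [map_smul, AlgHom.commutes, IsScalarTower.algebraMap_apply R T E, ← algebraMap_smul T a]
    exact Submodule.smul_mem _ _ (Submodule.mem_span_singleton_self _)
  · rw [Submodule.span_singleton_le_iff_mem, ← IsScalarTower.algebraMap_apply R T E,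
      ← AlgHom.commutes ι]
    exact mem_ext T ι (Submodule.mem_span_singleton_self _)

theorem ext_fg {X : Submodule R B} (hX : X.FG) : (ext T ι X).FG := by
  obtain ⟨S, rfl⟩ := hX
  classical
  refine ⟨S.image ι, le_antisymm ?_ ?_⟩
  · rw [Submodule.span_le]
    intro y hy
    obtain ⟨x, hx, rfl⟩ := Finset.mem_image.1 hy
    exact mem_ext T ι (Submodule.subset_span hx)
  · rw [ext_le]
    intro x hx
    induction hx using Submodule.span_induction with
    | mem x hx => exact Submodule.subset_span (Finset.mem_coe.2 (Finset.mem_image_of_mem _ hx))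
    | zero => rw [map_zero]; exact Submodule.zero_mem _
    | add x y _ _ hx hy => rw [map_add]; exact add_mem hx hy
    | smul r x _ hx =>
      rw [map_smul, ← algebraMap_smul T r]; exact Submodule.smul_mem _ _ hx

/-- the comparison map -/
noncomputable def jmap {A : Type*} [Ring A] [Algebra R A] (k : A →ₐ[R] B) : T ⊗[R] A →ₐ[T] E :=
  Algebra.TensorProduct.lift (Algebra.ofId T E) (ι.comp k) (fun t _ => Algebra.commutes t _)

theorem jmap_tmul {A : Type*} [Ring A] [Algebra R A] (k : A →ₐ[R] B) (t : T) (a : A) :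
    jmap T ι k (t ⊗ₜ a) = t • ι (k a) := by
  rw [Algebra.smul_def]
  rfl

theorem map_jmap_ext {A : Type*} [Ring A] [Algebra R A] (k : A →ₐ[R] B) (X : Submodule R A) :
    Submodule.map (jmap T ι k).toLinearMap
      (ext T (Algebra.TensorProduct.includeRight : A →ₐ[R] T ⊗[R] A) X) =
    ext T ι (X.map k.toLinearMap) := by
  rw [ext, Submodule.map_span, ext]
  congr 1
  ext y
  constructor
  · rintro ⟨_, ⟨x, hx, rfl⟩, rfl⟩
    refine ⟨k x, ⟨x, hx, rfl⟩, ?_⟩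
    change ι (k x) = jmap T ι k (1 ⊗ₜ x)
    rw [jmap_tmul, one_smul]
  · rintro ⟨_, ⟨x, hx, rfl⟩, rfl⟩
    refine ⟨_, ⟨x, hx, rfl⟩, ?_⟩
    change jmap T ι k (1 ⊗ₜ x) = ι (k x)
    rw [jmap_tmul, one_smul]

theorem ext_top {A : Type*} [Ring A] [Algebra R A] :
    ext T (Algebra.TensorProduct.includeRight : A →ₐ[R] T ⊗[R] A) ⊤ = ⊤ := by
  rw [eq_top_iff]
  intro y _
  induction y using TensorProduct.induction_on with
  | zero => exact Submodule.zero_mem _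
  | tmul t a =>
    have : (t ⊗ₜ a : T ⊗[R] A) = t • (Algebra.TensorProduct.includeRight : A →ₐ[R] T ⊗[R] A) a := by
      rw [Algebra.TensorProduct.includeRight_apply, TensorProduct.smul_tmul', smul_eq_mul, mul_one]
    rw [this]
    exact Submodule.smul_mem _ _ (mem_ext T _ trivial)
  | add x y hx hy => exact Submodule.add_mem _ (hx trivial) (hy trivial)

theorem ker_bc {A C : Type*} [Ring A] [Algebra R A] [Ring C] [Algebra R C] (f : A →ₐ[R] C)
    (hf : Function.Surjective f) :
    LinearMap.ker (Algebra.TensorProduct.map (AlgHom.id T T) f).toLinearMap =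
      ext T (Algebra.TensorProduct.includeRight : A →ₐ[R] T ⊗[R] A)
        (LinearMap.ker f.toLinearMap) := by
  refine le_antisymm ?_ ?_
  · intro x hx
    have hx' : LinearMap.lTensor T f.toLinearMap x = 0 := hx
    have hex : Function.Exact (LinearMap.ker f.toLinearMap).subtype f.toLinearMap :=
      LinearMap.exact_subtype_ker_map _
    obtain ⟨y, rfl⟩ := (lTensor_exact T hex hf x).1 hx'
    clear hx hx'
    induction y using TensorProduct.induction_on with
    | zero => simp
    | tmul t a =>
      rw [LinearMap.lTensor_tmul]
      have : (t ⊗ₜ ((LinearMap.ker f.toLinearMap).subtype a) : T ⊗[R] A) =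
          t • (Algebra.TensorProduct.includeRight : A →ₐ[R] T ⊗[R] A) a.1 := by
        rw [Algebra.TensorProduct.includeRight_apply, TensorProduct.smul_tmul', smul_eq_mul,
          mul_one]
        rfl
      rw [this]
      exact Submodule.smul_mem _ _ (mem_ext T _ a.2)
    | add x y hx hy => rw [map_add]; exact add_mem hx hy
  · rw [ext_le]
    intro x hx
    have hx : f x = 0 := hx
    change Algebra.TensorProduct.map (AlgHom.id T T) f (1 ⊗ₜ x) = 0
    rw [Algebra.TensorProduct.map_tmul, hx, TensorProduct.tmul_zero]

theorem ord_ext {A C : Type*} [Ring A] [Algebra R A] [Ring C] [Algebra R C] [IsSemisimpleRing C]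
    [Algebra.FormallyUnramified R T] [Algebra.EssFiniteType R T]
    (k : A →ₐ[R] B) (f : A →ₐ[R] C) (hf : Function.Surjective f) {π : R}
    (hπ : f (algebraMap R A π) = 0) {t : ℕ}
    (hnil : (LinearMap.ker f.toLinearMap) ^ (t + 1) ≤ sc A π * ⊤) :
    Ord (algebraMap R T π) t (ext T ι (Submodule.map k.toLinearMap ⊤))
      (ext T ι (Submodule.map k.toLinearMap (LinearMap.ker f.toLinearMap))) := by
  have := semisimple_bc R T C
  rw [← map_jmap_ext, ← map_jmap_ext, ext_top, ← ker_bc T f hf]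
  refine ord_of_hom (jmap T ι k) (Algebra.TensorProduct.map (AlgHom.id T T) f) ?_ ?_ ?_
  · intro y
    induction y using TensorProduct.induction_on with
    | zero => exact ⟨0, map_zero _⟩
    | tmul x y =>
      obtain ⟨y, rfl⟩ := hf y
      exact ⟨x ⊗ₜ y, by simp⟩
    | add x y hx hy =>
      obtain ⟨x, rfl⟩ := hx
      obtain ⟨y, rfl⟩ := hy
      exact ⟨x + y, map_add _ _ _⟩
  · rw [← IsScalarTower.algebraMap_apply, Algebra.TensorProduct.algebraMap_apply',
      Algebra.TensorProduct.map_tmul, hπ, TensorProduct.tmul_zero]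
  · rw [ker_bc T f hf, ← ext_pow]
    refine (ext_mono T _ hnil).trans ?_
    rw [ext_mul, ext_sc]
    exact mul_le_mul_right le_top _

end Ext
end HerOrd

namespace HerOrd
namespace Ord
section
variable {R B : Type*} [CommRing R] [Ring B] [Algebra R B]
variable {π : R} {t t' : ℕ} {A J A' J' : Submodule R B}

theorem le_J_of_pow (h : Ord π t A J) {X : Submodule R B} (hX : X ≤ A) (hAX : A * X ≤ X)
    (n : ℕ) (hn : X ^ (n + 1) ≤ J) : X ≤ J := by
  obtain ⟨g, hg, hg'⟩ := h.ssr X hX hAX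
  intro x hx
  have key : ∀ k : ℕ, x - x * g ^ k ∈ J ∧ x * g ^ k ∈ X ^ (k + 1) := by
    intro k
    induction k with
    | zero => simpa using hx
    | succ k ih =>
      obtain ⟨h1, h2⟩ := ih
      constructor
      · have h3 : (x - x * g ^ k) * g ∈ J := h.JA (Submodule.mul_mem_mul h1 (hX hg))
        have := J.add_mem (hg' x hx) h3
        convert this using 1
        rw [sub_mul, mul_assoc, ← pow_succ]; abel
      · rw [pow_succ g, ← mul_assoc, pow_succ X]
        exact Submodule.mul_mem_mul h2 hg
  have := J.add_mem (key n).1 (hn (key n).2)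
  simpa using this

theorem conj_pow {β β' : Submodule R B} (h1 : β * β' = 1) (X : Submodule R B) (n : ℕ) :
    (β' * X * β) ^ (n + 1) = β' * X ^ (n + 1) * β := by
  induction n with
  | zero => simp
  | succ n ih =>
    rw [pow_succ, ih, pow_succ X (n + 1)]
    calc β' * X ^ (n + 1) * β * (β' * X * β) = β' * X ^ (n + 1) * (β * β') * X * β := by
          simp only [mul_assoc]
      _ = _ := by rw [h1, mul_one]; simp only [mul_assoc]

theorem conj_J_le (h : Ord π t A J) (h' : Ord π t' A' J') {β β' : Submodule R B}
    (h1 : β * β' = 1) (h2 : β' * β = 1) (hA : A * β = β * A') : β' * J * β ≤ J' := by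
  have e1 : β' * A * β = A' := by rw [mul_assoc, hA, ← mul_assoc, h2, one_mul]
  refine h'.le_J_of_pow (n := t) ?_ ?_ ?_
  · rw [← e1]; exact mul_le_mul_left (mul_le_mul_right h.Jle β') β
  · rw [← e1]
    calc β' * A * β * (β' * J * β) = β' * (A * (β * β') * J) * β := by simp only [mul_assoc]
      _ = β' * J * β := by rw [h1, mul_one, h.AJ']
      _ ≤ _ := le_rfl
  · rw [conj_pow h1]
    calc β' * J ^ (t + 1) * β ≤ β' * (sc B π * A) * β :=
          mul_le_mul_left (mul_le_mul_right h.nil β') β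
      _ = sc B π * (β' * A * β) := by rw [← mul_assoc β', ← sc_comm π β']; simp only [mul_assoc]
      _ ≤ J' := by rw [e1]; exact h'.pi

theorem conj_J (h : Ord π t A J) (h' : Ord π t' A' J') {β β' : Submodule R B}
    (h1 : β * β' = 1) (h2 : β' * β = 1) (hA : A * β = β * A') : J * β = β * J' := by
  have hA' : A' * β' = β' * A := by
    calc A' * β' = (β' * β) * A' * β' := by rw [h2, one_mul]
      _ = β' * (β * A') * β' := by simp only [mul_assoc]
      _ = β' * A := by rw [← hA, mul_assoc, mul_assoc, h1, mul_one]
  refine le_antisymm ?_ ?_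
  · calc J * β = (β * β') * J * β := by rw [h1, one_mul]
      _ = β * (β' * J * β) := by simp only [mul_assoc]
      _ ≤ β * J' := mul_le_mul_right (h.conj_J_le h' h1 h2 hA) β
  · calc β * J' = β * J' * (β' * β) := by rw [h2, mul_one]
      _ = (β * J' * β') * β := by simp only [mul_assoc]
      _ ≤ J * β := mul_le_mul_left (h'.conj_J_le h h2 h1 hA') β

theorem KpJp {K : Submodule R B} (h : Ord π t A J) (hKJ : K * J = A) (hKA : K * A = K) (n : ℕ) :
    K ^ n * A * J ^ n = A := by
  induction n with
  | zero => simp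
  | succ n ih =>
    calc K ^ (n + 1) * A * J ^ (n + 1) = K ^ n * (K * A * J) * J ^ n := by
          rw [pow_succ, pow_succ']; simp only [mul_assoc]
      _ = A := by rw [hKA, hKJ, ih]

theorem JpKp {K : Submodule R B} (h : Ord π t A J) (hJK : J * K = A) (n : ℕ) :
    J ^ n * A * K ^ n = A := by
  induction n with
  | zero => simp
  | succ n ih =>
    calc J ^ (n + 1) * A * K ^ (n + 1) = J ^ n * (J * A * K) * K ^ n := by
          rw [pow_succ, pow_succ' K]; simp only [mul_assoc]
      _ = A := by rw [h.JA', hJK, ih]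

theorem exists_pow_le (h : Ord π t A J) (n : ℕ) : ∃ s, J ^ s ≤ sc B (π ^ n) * A := by
  have hsc1 : sc B (1 : R) = 1 := by
    rw [sc, map_one, Submodule.one_eq_span]
  induction n with
  | zero => exact ⟨0, by rw [pow_zero, pow_zero, hsc1, one_mul]; exact Submodule.one_le.2 h.one⟩
  | succ n ih =>
    obtain ⟨s, hs⟩ := ih
    refine ⟨s + (t + 1), ?_⟩
    rw [pow_add]
    refine (mul_le_mul' hs h.nil).trans ?_
    have e : sc B (π ^ (n + 1)) = sc B (π ^ n) * sc B π := by
      rw [sc, sc, sc, Submodule.span_mul_span, Set.singleton_mul_singleton, pow_succ, map_mul]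
    rw [e, mul_assoc, ← mul_assoc A, ← sc_comm π A, mul_assoc (sc B π), h.AA', ← mul_assoc]

theorem exists_e [IsNoetherianRing R] (h : Ord π t A J) (hA : A.FG)
    (hcen : ∀ x ∈ A, (∀ a ∈ A, x * a = a * x) → ∃ r : R, x = algebraMap R B r)
    (hπ : IsUnit (algebraMap R B π)) (hloc : ∀ r : R, IsUnit r ∨ π ∣ r)
    {K : Submodule R B} (hJK : J * K = A) (hKJ : K * J = A) (hAK : A * K = K) :
    ∃ e : ℕ, sc B π * A = J ^ (e + 1) := by
  obtain ⟨n, hn⟩ := h.lemU hA hcen hπ hloc hJK hKJ hAK (t + 1) (X := sc B π * A)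
    (sc_mul_le π A) (by rw [← mul_assoc, ← sc_comm π A, mul_assoc, h.AA'])
    (by rw [mul_assoc, h.AA'])
    (by rw [← mul_assoc, ← sc_comm π J, mul_assoc, mul_assoc, h.AJ', h.JA']) h.nil
  rcases n with _ | n
  · refine ⟨0, ?_⟩
    rw [pow_zero, mul_one] at hn
    have : A = J := le_antisymm (hn.symm.le.trans h.pi) h.Jle
    rw [hn]; simpa using this
  · exact ⟨n, by rw [hn, h.A_pow_succ]⟩

theorem fg_scale (X : Submodule R B) (hX : X.FG) (A : Submodule R B)
    (hpow : ∀ y : B, ∃ n : ℕ, π ^ n • y ∈ A) : ∃ N : ℕ, sc B (π ^ N) * X ≤ A := by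
  have key : ∀ S : Finset B, ∃ N : ℕ, ∀ x ∈ S, π ^ N • x ∈ A := by
    classical
    intro S
    induction S using Finset.induction_on with
    | empty => exact ⟨0, by simp⟩
    | insert a S ha ih =>
      obtain ⟨N, hN⟩ := ih
      obtain ⟨n, hn⟩ := hpow a
      refine ⟨N + n, fun x hx => ?_⟩
      rcases Finset.mem_insert.1 hx with rfl | hx
      · rw [pow_add, mul_smul]; exact A.smul_mem _ hn
      · rw [pow_add, mul_comm, mul_smul]; exact A.smul_mem _ (hN x hx)
  obtain ⟨S, rfl⟩ := hX
  obtain ⟨N, hN⟩ := key S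
  refine ⟨N, ?_⟩
  intro y hy
  obtain ⟨x, hx, rfl⟩ := mem_sc_mul.1 hy
  clear hy
  induction hx using Submodule.span_induction with
  | mem x hx => exact hN x hx
  | zero => rw [smul_zero]; exact A.zero_mem
  | add x y _ _ hx hy =>
    rw [smul_add]
    exact A.add_mem hx hy
  | smul r x _ hx =>
    rw [smul_comm]
    exact A.smul_mem _ hx

theorem lat_eq [IsNoetherianRing R] (h : Ord π t A J) (hA : A.FG)
    (hcen : ∀ x ∈ A, (∀ a ∈ A, x * a = a * x) → ∃ r : R, x = algebraMap R B r)
    (hπ : IsUnit (algebraMap R B π)) (hloc : ∀ r : R, IsUnit r ∨ π ∣ r)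
    {K : Submodule R B} (hJK : J * K = A) (hKJ : K * J = A) (hAK : A * K = K)
    (hpow : ∀ y : B, ∃ n : ℕ, π ^ n • y ∈ A)
    {Y : Submodule R B} (hY : Y.FG) (hAY : A * Y ≤ Y) (hYA : Y * A ≤ Y)
    (hcomm : J * Y = Y * J) (m : ℕ) (hm : algebraMap R B (π ^ m) ∈ Y) :
    ∃ N n : ℕ, sc B (π ^ N) * Y = A * J ^ n := by
  obtain ⟨N, hN⟩ := fg_scale Y hY A hpow
  obtain ⟨s, hs⟩ := h.exists_pow_le (N + m)
  obtain ⟨n, hn⟩ := h.lemU hA hcen hπ hloc hJK hKJ hAK s hN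
    (by rw [← mul_assoc, ← sc_comm (π ^ N) A, mul_assoc]; exact mul_le_mul_right hAY _)
    (by rw [mul_assoc]; exact mul_le_mul_right hYA _)
    (by rw [← mul_assoc, ← sc_comm (π ^ N) J, mul_assoc, mul_assoc, hcomm])
    (hs.trans (by
      intro y hy
      obtain ⟨x, hx, rfl⟩ := mem_sc_mul.1 hy
      refine mem_sc_mul.2 ⟨π ^ m • x, ?_, by rw [pow_add, mul_smul]⟩
      rw [Algebra.smul_def]
      rw [Algebra.commutes]
      exact hAY (Submodule.mul_mem_mul hx hm)))
  exact ⟨N, n, hn⟩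

end
end Ord
end HerOrd

namespace HerOrd
section
variable {R B : Type*} [CommRing R] [Ring B] [Algebra R B]

/-- twisted sum -/
def tw (K M J : Submodule R B) (e : ℕ) : Submodule R B :=
  ∑ i ∈ Finset.range (e + 1), K ^ i * M * J ^ i

theorem tw_stable {K M J : Submodule R B} {e : ℕ} (h : K ^ (e + 1) * M * J ^ (e + 1) = M) :
    K * tw K M J e * J = tw K M J e := by
  have h1 : K * tw K M J e * J = ∑ i ∈ Finset.range (e + 1), K ^ (i + 1) * M * J ^ (i + 1) := by
    rw [tw, Finset.mul_sum, Finset.sum_mul]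
    refine Finset.sum_congr rfl fun i _ => ?_
    rw [pow_succ', pow_succ J]; simp only [mul_assoc]
  rw [h1, tw, Finset.sum_range_succ, h, Finset.sum_range_succ' (fun i => K ^ i * M * J ^ i),
    pow_zero, pow_zero, one_mul, mul_one]

theorem le_tw (K M J : Submodule R B) (e : ℕ) : M ≤ tw K M J e := by
  rw [tw, Finset.sum_range_succ' (fun i => K ^ i * M * J ^ i), pow_zero, pow_zero, one_mul, mul_one]
  exact le_sup_right

theorem tw_left {A K M J : Submodule R B} {e : ℕ} (hAK : A * K = K) (hAM : A * M = M) :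
    A * tw K M J e = tw K M J e := by
  rw [tw, Finset.mul_sum]
  refine Finset.sum_congr rfl fun i _ => ?_
  rcases i with _ | i
  · rw [pow_zero, pow_zero, one_mul, mul_one, hAM]
  · rw [pow_succ', ← mul_assoc, ← mul_assoc, ← mul_assoc, hAK]

theorem tw_right {A K M J : Submodule R B} {e : ℕ} (hJA : J * A = J) (hMA : M * A = M) :
    tw K M J e * A = tw K M J e := by
  rw [tw, Finset.sum_mul]
  refine Finset.sum_congr rfl fun i _ => ?_
  rcases i with _ | i
  · rw [pow_zero, pow_zero, one_mul, mul_one, hMA]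
  · simp only [pow_succ J, mul_assoc, hJA]

theorem tw_fg {K M J : Submodule R B} {e : ℕ} (hK : K.FG) (hM : M.FG) (hJ : J.FG) :
    (tw K M J e).FG := by
  rw [tw]
  refine Finset.sum_induction _ (fun X : Submodule R B => X.FG) (fun X Y hX hY => ?_) ?_ ?_
  · exact Submodule.FG.sup hX hY
  · exact Submodule.fg_bot
  · intro i _
    exact ((hK.pow i).mul hM).mul (hJ.pow i)

end

section
variable {R : Type*} (T : Type*) {B E : Type*} [CommRing R] [CommRing T] [Algebra R T]
  [Ring B] [Algebra R B] [Ring E] [Algebra R E] [Algebra T E] [IsScalarTower R T E]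
  (ι : B →ₐ[R] E)

theorem ext_tw (K M J : Submodule R B) (e : ℕ) :
    ext T ι (tw K M J e) = tw (ext T ι K) (ext T ι M) (ext T ι J) e := by
  have h0 : ext T ι (0 : Submodule R B) = 0 := by
    refine le_antisymm ?_ bot_le
    rw [ext_le]
    intro x hx
    have : x = 0 := hx
    rw [this, map_zero]; exact Submodule.zero_mem _
  rw [tw, tw]
  have := map_sum (⟨⟨ext T ι, h0⟩, ext_add T ι⟩ : Submodule R B →+ Submodule T E)
    (fun i => K ^ i * M * J ^ i) (Finset.range (e + 1))
  refine this.trans (Finset.sum_congr rfl fun i _ => ?_)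
  change ext T ι (K ^ i * M * J ^ i) = _
  rw [ext_mul, ext_mul, ext_pow, ext_pow]

/-- All data at one prime. -/
structure Setup (π : R) (t t' : ℕ) (A J A' J' K : Submodule R B) (b : Eˣ) : Prop where
  h : Ord π t A J
  h' : Ord π t' A' J'
  hT : Ord (algebraMap R T π) t (ext T ι A) (ext T ι J)
  hT' : Ord (algebraMap R T π) t' (ext T ι A') (ext T ι J')
  fg : A.FG
  fg' : A'.FG
  JK : J * K = A
  KJ : K * J = A
  AK : A * K = K
  KA : K * A = K
  piu : IsUnit (algebraMap R B π)
  cen : ∀ x ∈ ext T ι A, (∀ a ∈ ext T ι A, x * a = a * x) → ∃ r : T, x = algebraMap T E r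
  loc : ∀ r : T, IsUnit r ∨ algebraMap R T π ∣ r
  pow : ∀ y : E, ∃ n : ℕ, algebraMap R T π ^ n • y ∈ ext T ι A
  hb : ext T ι A * Submodule.span T {(b : E)} = Submodule.span T {(b : E)} * ext T ι A'
  ff : ∀ X : Submodule R B, X.FG → ∀ x : B, ι x ∈ ext T ι X → ∃ s : R, ¬ π ∣ s ∧ s • x ∈ X
  npi : ¬ IsUnit (algebraMap R T π)
  pr : Prime π
  cop : ∀ s : R, ¬ π ∣ s → IsCoprime s π
  unit : ∀ c : B, IsUnit (ι c) → IsUnit c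
  df : ∀ x y : E, x * y = 1 → y * x = 1

namespace Setup
variable {T ι}
variable {π : R} {t t' : ℕ} {A J A' J' K : Submodule R B} {b : Eˣ}

theorem piuT (H : Setup T ι π t t' A J A' J' K b) : IsUnit (algebraMap T E (algebraMap R T π)) := by
  rw [← IsScalarTower.algebraMap_apply, ← AlgHom.commutes ι]
  exact H.piu.map ι

theorem Kfg [IsNoetherianRing R] (H : Setup T ι π t t' A J A' J' K b) : K.FG := by
  have h1 : sc B π * K ≤ A := by
    have : sc B π ≤ J := by
      refine le_trans ?_ H.h.pi
      exact H.h.le_mul_right _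
    exact (mul_le_mul_left this K).trans H.JK.le
  have h2 : (sc B π * K).FG := Submodule.FG.of_le H.fg h1
  obtain ⟨u, hu⟩ := H.piu
  have h3 : Submodule.span R {((u⁻¹ : Bˣ) : B)} * (sc B π * K) = K := by
    rw [← mul_assoc, sc, Submodule.span_mul_span, Set.singleton_mul_singleton, ← hu,
      Units.inv_mul, ← Submodule.one_eq_span, one_mul]
  rw [← h3]
  exact (Submodule.fg_span_singleton _).mul h2

theorem Jfg [IsNoetherianRing R] (H : Setup T ι π t t' A J A' J' K b) : J.FG :=
  Submodule.FG.of_le H.fg H.h.Jle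

theorem Jfg' [IsNoetherianRing R] (H : Setup T ι π t t' A J A' J' K b) : J'.FG :=
  Submodule.FG.of_le H.fg' H.h'.Jle

theorem JKT (H : Setup T ι π t t' A J A' J' K b) : ext T ι J * ext T ι K = ext T ι A := by
  rw [← ext_mul, H.JK]
theorem KJT (H : Setup T ι π t t' A J A' J' K b) : ext T ι K * ext T ι J = ext T ι A := by
  rw [← ext_mul, H.KJ]
theorem AKT (H : Setup T ι π t t' A J A' J' K b) : ext T ι A * ext T ι K = ext T ι K := by
  rw [← ext_mul, H.AK]
theorem KAT (H : Setup T ι π t t' A J A' J' K b) : ext T ι K * ext T ι A = ext T ι K := by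
  rw [← ext_mul, H.KA]

theorem bb' (b : Eˣ) :
    Submodule.span T {(b : E)} * Submodule.span T {((b⁻¹ : Eˣ) : E)} = 1 := by
  rw [Submodule.span_mul_span, Set.singleton_mul_singleton, Units.mul_inv, Submodule.one_eq_span]

theorem b'b (b : Eˣ) :
    Submodule.span T {((b⁻¹ : Eˣ) : E)} * Submodule.span T {(b : E)} = 1 := by
  rw [Submodule.span_mul_span, Set.singleton_mul_singleton, Units.inv_mul, Submodule.one_eq_span]

theorem conjA (H : Setup T ι π t t' A J A' J' K b) :
    ext T ι A' * Submodule.span T {((b⁻¹ : Eˣ) : E)} =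
      Submodule.span T {((b⁻¹ : Eˣ) : E)} * ext T ι A := by
  generalize hβ : Submodule.span T {(b : E)} = β
  generalize hβ' : Submodule.span T {((b⁻¹ : Eˣ) : E)} = β'
  have h1 : β * β' = 1 := by rw [← hβ, ← hβ', bb']
  have h2 : β' * β = 1 := by rw [← hβ, ← hβ', b'b]
  have hA := H.hb
  rw [hβ] at hA
  calc ext T ι A' * β' = (β' * β) * ext T ι A' * β' := by rw [h2, one_mul]
      _ = β' * (β * ext T ι A') * β' := by simp only [mul_assoc]
      _ = β' * ext T ι A := by rw [← hA, mul_assoc, mul_assoc, h1, mul_one]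

theorem conjJ (H : Setup T ι π t t' A J A' J' K b) :
    ext T ι J * Submodule.span T {(b : E)} = Submodule.span T {(b : E)} * ext T ι J' :=
  H.hT.conj_J H.hT' (bb' b) (b'b b) H.hb

theorem conjJ' (H : Setup T ι π t t' A J A' J' K b) :
    ext T ι J' * Submodule.span T {((b⁻¹ : Eˣ) : E)} =
      Submodule.span T {((b⁻¹ : Eˣ) : E)} * ext T ι J :=
  H.hT'.conj_J H.hT (b'b b) (bb' b) H.conjA

theorem exists_e [IsNoetherianRing T] (H : Setup T ι π t t' A J A' J' K b) :
    ∃ e : ℕ, sc E (algebraMap R T π) * ext T ι A = ext T ι J ^ (e + 1) ∧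
      sc E (algebraMap R T π) * ext T ι A' = ext T ι J' ^ (e + 1) := by
  obtain ⟨e, he⟩ := H.hT.exists_e (ext_fg T ι H.fg) H.cen H.piuT H.loc H.JKT H.KJT H.AKT
  refine ⟨e, he, ?_⟩
  generalize hβ : Submodule.span T {(b : E)} = β
  generalize hβ' : Submodule.span T {((b⁻¹ : Eˣ) : E)} = β'
  have h1 : β * β' = 1 := by rw [← hβ, ← hβ', bb']
  have h2 : β' * β = 1 := by rw [← hβ, ← hβ', b'b]
  have hA := H.hb
  have hJ := H.conjJ
  rw [hβ] at hA hJ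
  have eA : ext T ι A' = β' * ext T ι A * β := by
    rw [mul_assoc, hA, ← mul_assoc, h2, one_mul]
  have eJ : ext T ι J' = β' * ext T ι J * β := by
    rw [mul_assoc, hJ, ← mul_assoc, h2, one_mul]
  rw [eA, eJ, Ord.conj_pow h1, ← he, ← mul_assoc, ← mul_assoc, ← mul_assoc, sc_comm _ β']

theorem exists_I [IsNoetherianRing R] [IsNoetherianRing T] (H : Setup T ι π t t' A J A' J' K b) :
    ∃ I : Submodule R B, I.FG ∧ A * I = I ∧
      ext T ι I = ext T ι A * Submodule.span T {(b : E)} := by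
  obtain ⟨e, he, he'⟩ := H.exists_e
  obtain ⟨M, hM⟩ : ∃ M, M = A * A' := ⟨_, rfl⟩
  have hAM : A * M = M := by rw [hM, ← mul_assoc, H.h.AA']
  have hMA : M * A' = M := by rw [hM, mul_assoc, H.h'.AA']
  have hAMT : ext T ι A * ext T ι M = ext T ι M := by rw [← ext_mul, hAM]
  have hMAT : ext T ι M * ext T ι A' = ext T ι M := by rw [← ext_mul, hMA]
  have h1M : (1 : B) ∈ M := by
    rw [hM, ← mul_one (1 : B)]; exact Submodule.mul_mem_mul H.h.one H.h'.one
  have hst := tw_stable (K := ext T ι K) (M := ext T ι M) (J := ext T ι J') (e := e) (by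
    rw [← he', mul_assoc, ← mul_assoc (ext T ι M), ← sc_comm _ (ext T ι M), mul_assoc (sc E _), hMAT]
    nth_rewrite 1 [← hAMT]
    rw [← mul_assoc (sc E _), he, ← mul_assoc, ← H.hT.A_pow_succ, ← mul_assoc,
      H.hT.KpJp H.KJT H.KAT, hAMT])
  have hleft : ext T ι A * tw (ext T ι K) (ext T ι M) (ext T ι J') e =
      tw (ext T ι K) (ext T ι M) (ext T ι J') e := tw_left H.AKT hAMT
  have hright : tw (ext T ι K) (ext T ι M) (ext T ι J') e * ext T ι A' =
      tw (ext T ι K) (ext T ι M) (ext T ι J') e := tw_right H.hT'.JA' hMAT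
  have hle : ext T ι M ≤ tw (ext T ι K) (ext T ι M) (ext T ι J') e := le_tw _ _ _ _
  have hfg : (tw K M J' e).FG := tw_fg H.Kfg (by rw [hM]; exact H.fg.mul H.fg') H.Jfg'
  have hfgT := ext_fg T ι hfg
  rw [ext_tw] at hfgT
  generalize hW : tw (ext T ι K) (ext T ι M) (ext T ι J') e = W at *
  have hconjA := H.conjA
  have hconjJ' := H.conjJ'
  have hbb := bb' (T := T) b
  have hbb2 := b'b (T := T) b
  obtain ⟨m, hm⟩ := H.pow b
  have hmem : algebraMap T E (algebraMap R T π ^ m) ∈ W * Submodule.span T {((b⁻¹ : Eˣ) : E)} := by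
    have : algebraMap T E (algebraMap R T π ^ m) = (algebraMap R T π ^ m • (b : E)) * ι 1 *
        ((b⁻¹ : Eˣ) : E) := by
      rw [map_one, mul_one, smul_mul_assoc, Units.mul_inv, Algebra.algebraMap_eq_smul_one]
    rw [this]
    refine Submodule.mul_mem_mul ?_ (Submodule.mem_span_singleton_self _)
    rw [← hleft]
    exact Submodule.mul_mem_mul hm (hle (mem_ext T ι h1M))
  have hfgY : (W * Submodule.span T {((b⁻¹ : Eˣ) : E)}).FG :=
    hfgT.mul (Submodule.fg_span_singleton _)
  generalize Submodule.span T {((b⁻¹ : Eˣ) : E)} = β' at *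
  generalize Submodule.span T {(b : E)} = β at *
  obtain ⟨N, n, hN⟩ := H.hT.lat_eq (ext_fg T ι H.fg) H.cen H.piuT H.loc H.JKT H.KJT H.AKT H.pow
    (Y := W * β') hfgY (by rw [← mul_assoc, hleft])
    (by rw [mul_assoc, ← hconjA, ← mul_assoc, hright]) (by
      rw [← mul_assoc]
      nth_rewrite 1 [← hst]
      rw [← mul_assoc, ← mul_assoc, H.JKT, hleft, mul_assoc, hconjJ', mul_assoc]) m hmem
  refine ⟨A * (sc B (π ^ N) * K ^ n * tw K M J' e), ?_, ?_, ?_⟩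
  · exact H.fg.mul (((Submodule.fg_span_singleton _).mul (H.Kfg.pow n)).mul hfg)
  · rw [← mul_assoc, H.h.AA']
  · rw [ext_mul, ext_mul, ext_mul, ext_pow, ext_sc, ext_tw, hW, map_pow]
    have : W = W * β' * β := by rw [mul_assoc, hbb2, mul_one]
    rw [this, sc_comm _ (ext T ι K ^ n), mul_assoc (ext T ι K ^ n), ← mul_assoc (sc E _), hN,
      ← mul_assoc (ext T ι K ^ n), ← mul_assoc (ext T ι K ^ n), H.hT.KpJp H.KJT H.KAT,
      ← mul_assoc, H.hT.AA']

theorem exists_I' [IsNoetherianRing R] [IsNoetherianRing T] (H : Setup T ι π t t' A J A' J' K b) :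
    ∃ I : Submodule R B, I.FG ∧ I * A = I ∧
      ext T ι I = Submodule.span T {((b⁻¹ : Eˣ) : E)} * ext T ι A := by
  obtain ⟨e, he, he'⟩ := H.exists_e
  obtain ⟨M, hM⟩ : ∃ M, M = A' * A := ⟨_, rfl⟩
  have hAM : A' * M = M := by rw [hM, ← mul_assoc, H.h'.AA']
  have hMA : M * A = M := by rw [hM, mul_assoc, H.h.AA']
  have hAMT : ext T ι A' * ext T ι M = ext T ι M := by rw [← ext_mul, hAM]
  have hMAT : ext T ι M * ext T ι A = ext T ι M := by rw [← ext_mul, hMA]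
  have h1M : (1 : B) ∈ M := by
    rw [hM, ← mul_one (1 : B)]; exact Submodule.mul_mem_mul H.h'.one H.h.one
  have hst := tw_stable (K := ext T ι J') (M := ext T ι M) (J := ext T ι K) (e := e) (by
    rw [← he', mul_assoc (sc E _), hAMT]
    nth_rewrite 1 [← hMAT]
    rw [← mul_assoc (sc E _), sc_comm _ (ext T ι M), mul_assoc (ext T ι M), he, mul_assoc,
      ← H.hT.pow_succ_A, H.hT.JpKp H.JKT, hMAT])
  have hleft : ext T ι A' * tw (ext T ι J') (ext T ι M) (ext T ι K) e =
      tw (ext T ι J') (ext T ι M) (ext T ι K) e := tw_left H.hT'.AJ' hAMT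
  have hright : tw (ext T ι J') (ext T ι M) (ext T ι K) e * ext T ι A =
      tw (ext T ι J') (ext T ι M) (ext T ι K) e := tw_right H.KAT hMAT
  have hle : ext T ι M ≤ tw (ext T ι J') (ext T ι M) (ext T ι K) e := le_tw _ _ _ _
  have hfg : (tw J' M K e).FG := tw_fg H.Jfg' (by rw [hM]; exact H.fg'.mul H.fg) H.Kfg
  have hfgT := ext_fg T ι hfg
  rw [ext_tw] at hfgT
  generalize hW : tw (ext T ι J') (ext T ι M) (ext T ι K) e = W at *
  have hconjA := H.hb
  have hconjJ := H.conjJ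
  have hbb := bb' (T := T) b
  have hbb2 := b'b (T := T) b
  obtain ⟨m, hm⟩ := H.pow (b⁻¹ : Eˣ)
  have hmem : algebraMap T E (algebraMap R T π ^ m) ∈ Submodule.span T {(b : E)} * W := by
    have : algebraMap T E (algebraMap R T π ^ m) =
        (b : E) * (ι 1 * (algebraMap R T π ^ m • ((b⁻¹ : Eˣ) : E))) := by
      rw [map_one, one_mul, mul_smul_comm, Units.mul_inv, Algebra.algebraMap_eq_smul_one]
    rw [this]
    refine Submodule.mul_mem_mul (Submodule.mem_span_singleton_self _) ?_
    rw [← hright]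
    exact Submodule.mul_mem_mul (hle (mem_ext T ι h1M)) hm
  have hfgY : (Submodule.span T {(b : E)} * W).FG :=
    (Submodule.fg_span_singleton _).mul hfgT
  generalize Submodule.span T {((b⁻¹ : Eˣ) : E)} = β' at *
  generalize Submodule.span T {(b : E)} = β at *
  obtain ⟨N, n, hN⟩ := H.hT.lat_eq (ext_fg T ι H.fg) H.cen H.piuT H.loc H.JKT H.KJT H.AKT H.pow
    (Y := β * W) hfgY (by rw [← mul_assoc, hconjA, mul_assoc, hleft])
    (by rw [mul_assoc, hright]) (by
      rw [← mul_assoc, hconjJ]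
      nth_rewrite 2 [← hst]
      rw [mul_assoc, mul_assoc, mul_assoc, H.KJT, mul_assoc, hright]) m hmem
  refine ⟨(sc B (π ^ N) * tw J' M K e) * K ^ n * A, ?_, ?_, ?_⟩
  · exact (((Submodule.fg_span_singleton _).mul hfg).mul (H.Kfg.pow n)).mul H.fg
  · rw [mul_assoc, H.h.AA']
  · rw [ext_mul, ext_mul, ext_mul, ext_pow, ext_sc, ext_tw, hW, map_pow]
    have : W = β' * (β * W) := by rw [← mul_assoc, hbb2, one_mul]
    have hAJ : ext T ι A * ext T ι J ^ n = ext T ι J ^ n * ext T ι A := by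
      rcases n with _ | n
      · rw [pow_zero, one_mul, mul_one]
      · rw [H.hT.A_pow_succ, H.hT.pow_succ_A]
    rw [this, ← mul_assoc (sc E _), sc_comm _ β', mul_assoc β', hN, hAJ, mul_assoc β',
      H.hT.JpKp H.JKT, mul_assoc, H.hT.AA']

end Setup
end
end HerOrd

namespace HerOrd

theorem orzech_lat {T E : Type*} [CommRing T] [IsNoetherianRing T] [Ring E] [Algebra T E]
    {Z J : Submodule T E} {u : E} (hZ : Z.FG)
    (hJu : ∀ x ∈ J, x * u ∈ J) (hZu : ∀ x ∈ Z, x * u ∈ Z)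
    (hs : ∀ z ∈ Z, ∃ y ∈ Z, z - y * u ∈ J) {z : E} (hz : z ∈ Z) (hzu : z * u ∈ J) : z ∈ J := by
  have : IsNoetherian T Z := isNoetherian_of_fg_of_noetherian Z hZ
  let f : Z →ₗ[T] Z := (LinearMap.mulRight T u).restrict hZu
  let p : Submodule T Z := J.comap Z.subtype
  have hp : p ≤ p.comap f := fun x hx => hJu x.1 hx
  have hsurj : Function.Surjective (p.mapQ p f hp) := by
    intro y
    obtain ⟨y, rfl⟩ := Submodule.mkQ_surjective p y
    obtain ⟨w, hw, hw'⟩ := hs y.1 y.2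
    refine ⟨p.mkQ ⟨w, hw⟩, ?_⟩
    symm
    rw [Submodule.mkQ_apply, Submodule.mkQ_apply, Submodule.mapQ_apply, Submodule.Quotient.eq]
    exact hw'
  have hinj := IsNoetherian.injective_of_surjective_endomorphism _ hsurj
  have h0 : p.mkQ ⟨z, hz⟩ = 0 := by
    apply hinj
    rw [map_zero, Submodule.mkQ_apply, Submodule.mapQ_apply, Submodule.Quotient.mk_eq_zero]
    exact hzu
  rw [Submodule.mkQ_apply, Submodule.Quotient.mk_eq_zero] at h0
  exact h0

section
variable {R : Type*} {T : Type*} {B E : Type*} [CommRing R] [CommRing T] [Algebra R T]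
  [Ring B] [Algebra R B] [Ring E] [Algebra R E] [Algebra T E] [IsScalarTower R T E]
  {ι : B →ₐ[R] E}
namespace Setup
variable {π : R} {t t' : ℕ} {A J A' J' K : Submodule R B} {b : Eˣ}

theorem ff_le (H : Setup T ι π t t' A J A' J' K b) {X Y : Submodule R B} (hX : X.FG) (hY : Y.FG)
    (hle : ext T ι X ≤ ext T ι Y) : ∃ s : R, ¬ π ∣ s ∧ ∀ x ∈ X, s • x ∈ Y := by
  have key : ∀ S : Finset B, (∀ x ∈ S, x ∈ X) → ∃ s : R, ¬ π ∣ s ∧ ∀ x ∈ S, s • x ∈ Y := by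
    classical
    intro S
    induction S using Finset.induction_on with
    | empty => exact fun _ => ⟨1, fun h => H.pr.not_unit (isUnit_of_dvd_one h), by simp⟩
    | insert a S ha ih =>
      intro hS
      obtain ⟨s, hs, hs'⟩ := ih (fun x hx => hS x (Finset.mem_insert_of_mem hx))
      obtain ⟨r, hr, hr'⟩ := H.ff Y hY a
        (hle (mem_ext T ι (hS a (Finset.mem_insert_self _ _))))
      refine ⟨s * r, fun h => (H.pr.dvd_or_dvd h).elim hs hr, fun x hx => ?_⟩
      rcases Finset.mem_insert.1 hx with rfl | hx
      · rw [mul_smul]; exact Y.smul_mem _ hr'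
      · rw [mul_comm, mul_smul]; exact Y.smul_mem _ (hs' x hx)
  obtain ⟨S, rfl⟩ := hX
  obtain ⟨s, hs, hs'⟩ := key S (fun x hx => Submodule.subset_span hx)
  refine ⟨s, hs, fun x hx => ?_⟩
  induction hx using Submodule.span_induction with
  | mem x hx => exact hs' x hx
  | zero => rw [smul_zero]; exact Y.zero_mem
  | add x y _ _ hx hy => rw [smul_add]; exact Y.add_mem hx hy
  | smul r x _ hx => rw [smul_comm]; exact Y.smul_mem _ hx

theorem cop_mem (H : Setup T ι π t t' A J A' J' K b) {X : Submodule R B} {s : R} (hs : ¬ π ∣ s)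
    {x : B} (h1 : s • x ∈ X) (h2 : π • x ∈ X) : x ∈ X := by
  obtain ⟨α, β, hαβ⟩ := H.cop s hs
  have : x = α • (s • x) + β • (π • x) := by
    rw [← mul_smul, ← mul_smul, ← add_smul, hαβ, one_smul]
  rw [this]
  exact X.add_mem (X.smul_mem _ h1) (X.smul_mem _ h2)

theorem exists_c [IsNoetherianRing R] [IsNoetherianRing T] (H : Setup T ι π t t' A J A' J' K b)
    {I : Submodule R B} (hI : I.FG) (hAI : A * I = I)
    (hIT : ext T ι I = ext T ι A * Submodule.span T {(b : E)}) :
    ∃ c ∈ I, ∀ a ∈ A, a * c ∈ J * I → a ∈ J := by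
  have hIN : IsNoetherian R I := isNoetherian_of_fg_of_noetherian I hI
  obtain ⟨f, hf⟩ : ∃ f : B → Submodule R B, ∀ c, f c = A * Submodule.span R {c} + J * I :=
    ⟨_, fun c => rfl⟩
  have hfI : ∀ c ∈ I, f c ≤ I := by
    intro c hc
    rw [hf]
    refine sup_le ?_ ?_
    · calc A * Submodule.span R {c} ≤ A * I :=
          mul_le_mul_right ((Submodule.span_singleton_le_iff_mem _ _).2 hc) A
        _ = I := hAI
    · exact (mul_le_mul_left H.h.Jle I).trans hAI.le
  have hcf : ∀ c, c ∈ f c := by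
    intro c
    rw [hf]
    exact Submodule.mem_sup_left (H.h.le_mul_left _ (Submodule.mem_span_singleton_self c))
  obtain ⟨c, hc, hmax⟩ : ∃ c ∈ I, ∀ c' ∈ I, f c ≤ f c' → f c' ≤ f c := by
    obtain ⟨N, ⟨c, rfl⟩, hc⟩ := (wellFounded_gt (α := Submodule R I)).has_min
      (Set.range fun c : I => (f c.1).comap I.subtype) ⟨_, ⟨0, rfl⟩⟩
    refine ⟨c.1, c.2, fun c' hc' hle => ?_⟩
    have h1 := hc _ ⟨⟨c', hc'⟩, rfl⟩
    have h2 : (f c.1).comap I.subtype ≤ (f c').comap I.subtype := Submodule.comap_mono hle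
    have h3 : (f c').comap I.subtype ≤ (f c.1).comap I.subtype := by
      by_contra hh
      exact h1 (lt_of_le_not_ge h2 hh)
    intro x hx
    exact h3 (show (⟨x, hfI c' hc' hx⟩ : I) ∈ _ from hx)
  refine ⟨c, hc, ?_⟩
  obtain ⟨Kc, hKc⟩ : ∃ Kc : Submodule R B, ∀ a, a ∈ Kc ↔ a ∈ A ∧ a * c ∈ J * I :=
    ⟨A ⊓ (J * I).comap (LinearMap.mulRight R c), fun a => Iff.rfl⟩
  obtain ⟨e, he, he'⟩ := H.h.ssr Kc (fun a ha => ((hKc a).1 ha).1) (by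
    rw [Submodule.mul_le]
    intro a ha k hk
    rw [hKc] at hk ⊢
    refine ⟨H.h.AA (Submodule.mul_mem_mul ha hk.1), ?_⟩
    rw [mul_assoc, ← H.h.AJ', mul_assoc]
    exact Submodule.mul_mem_mul ha hk.2)
  have heA := ((hKc e).1 he).1
  have hec := ((hKc e).1 he).2
  have hee := he' e he
  -- eI ≤ eAc + JI
  have hJIA : A * (J * I) = J * I := by rw [← mul_assoc, H.h.AJ']
  have key : Submodule.span R {e} * I ≤
      Submodule.span R {e} * A * Submodule.span R {c} + J * I := by
    intro y hy
    obtain ⟨q, hq, rfl⟩ := Submodule.mem_span_singleton_mul.1 hy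
    have heq : e * q ∈ I := hAI.le (Submodule.mul_mem_mul heA hq)
    have h1 : c ∈ f (c + e * q) := by
      rw [hf]
      have hceq : (1 - e) * (c + e * q) + (e * c - (e - e * e) * q) = c := by noncomm_ring
      have hm : e * c - (e - e * e) * q ∈ J * I :=
        sub_mem hec (Submodule.mul_mem_mul hee hq)
      have hm2 : (1 - e) * (c + e * q) ∈ A * Submodule.span R {c + e * q} :=
        Submodule.mul_mem_mul (sub_mem H.h.one heA) (Submodule.mem_span_singleton_self _)
      have := Submodule.add_mem_sup hm2 hm
      rwa [hceq] at this
    have h2 : f c ≤ f (c + e * q) := by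
      rw [hf c]
      refine sup_le ?_ ?_
      · rw [Submodule.mul_le]
        intro a ha y hy
        obtain ⟨r, rfl⟩ := Submodule.mem_span_singleton.1 hy
        have : A * f (c + e * q) ≤ f (c + e * q) := by
          rw [hf, mul_add, ← mul_assoc, H.h.AA', hJIA]
        exact this (Submodule.mul_mem_mul ha (Submodule.smul_mem _ r h1))
      · rw [hf]; exact le_sup_right
    have h3 : c + e * q ∈ f c := hmax _ (add_mem hc heq) h2 (hcf _)
    have h4 : e * q ∈ f c := by
      have := sub_mem h3 (hcf c)
      simpa using this
    rw [hf] at h4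
    obtain ⟨x, hx, m, hm, hxm⟩ := Submodule.mem_sup.1 h4
    have h5 : e * q = e * x + (e * m + (e - e * e) * q) := by
      rw [← add_assoc, ← mul_add, hxm]; noncomm_ring
    rw [h5]
    refine Submodule.add_mem_sup ?_ (add_mem ?_ (Submodule.mul_mem_mul hee hq))
    · rw [mul_assoc]
      exact Submodule.mul_mem_mul (Submodule.mem_span_singleton_self _) hx
    · rw [← hJIA]; exact Submodule.mul_mem_mul heA hm
  have keyT := ext_mono T ι key
  have hsp : ∀ x : B, ext T ι (Submodule.span R {x}) = Submodule.span T {ι x} := by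
    intro x
    refine le_antisymm ?_ ?_
    · rw [ext_le]
      intro y hy
      obtain ⟨r, rfl⟩ := Submodule.mem_span_singleton.1 hy
      rw [map_smul, ← algebraMap_smul T r]
      exact Submodule.smul_mem _ _ (Submodule.mem_span_singleton_self _)
    · rw [Submodule.span_singleton_le_iff_mem]
      exact mem_ext T ι (Submodule.mem_span_singleton_self _)
  have hJIT : ext T ι (J * I) = ext T ι J * Submodule.span T {(b : E)} := by
    rw [ext_mul, hIT, ← mul_assoc, H.hT.JA']
  rw [ext_add, ext_mul, ext_mul, ext_mul, hIT, hJIT, hsp, hsp] at keyT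
  have hmemb : ∀ X : Submodule T E, ∀ y ∈ X * Submodule.span T {(b : E)},
      y * ((b⁻¹ : Eˣ) : E) ∈ X := by
    intro X y hy
    obtain ⟨z, hz, rfl⟩ := Submodule.mem_mul_span_singleton.1 hy
    rwa [mul_assoc, Units.mul_inv, mul_one]
  obtain ⟨u, hu⟩ : ∃ u, u = ι c * ((b⁻¹ : Eˣ) : E) := ⟨_, rfl⟩
  have huA : u ∈ ext T ι A := by
    rw [hu]; apply hmemb; rw [← hIT]; exact mem_ext T ι hc
  have hιe : ι e ∈ ext T ι A := mem_ext T ι heA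
  have heJT : ι e ∈ ext T ι J := by
    refine orzech_lat (u := u)
      (Z := Submodule.span T {ι e} * ext T ι A + ext T ι J) ?_ ?_ ?_ ?_ ?_ ?_
    · exact Submodule.FG.sup ((Submodule.fg_span_singleton _).mul (ext_fg T ι H.fg))
        (ext_fg T ι H.Jfg)
    · intro x hx
      exact H.hT.JA (Submodule.mul_mem_mul hx huA)
    · intro x hx
      have : (Submodule.span T {ι e} * ext T ι A + ext T ι J) * ext T ι A ≤
        Submodule.span T {ι e} * ext T ι A + ext T ι J := by
        rw [add_mul, mul_assoc, H.hT.AA', H.hT.JA']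
      exact this (Submodule.mul_mem_mul hx huA)
    · intro z hz
      obtain ⟨x, hx, j, hj, rfl⟩ := Submodule.mem_sup.1 hz
      have h1 : x * b ∈ Submodule.span T {ι e} * (ext T ι A * Submodule.span T {(b : E)}) := by
        rw [← mul_assoc]
        exact Submodule.mul_mem_mul hx (Submodule.mem_span_singleton_self _)
      obtain ⟨y, hy, k, hk, hyk⟩ := Submodule.mem_sup.1 (keyT h1)
      obtain ⟨y, hy', rfl⟩ := Submodule.mem_mul_span_singleton.1 hy
      refine ⟨y, Submodule.mem_sup_left hy', ?_⟩
      have hx' : x = y * u + k * ((b⁻¹ : Eˣ) : E) := by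
        rw [hu, ← mul_assoc, ← add_mul, hyk, mul_assoc, Units.mul_inv, mul_one]
      rw [hx']
      have : y * u + k * ((b⁻¹ : Eˣ) : E) + j - y * u = k * ((b⁻¹ : Eˣ) : E) + j := by abel
      rw [this]
      exact add_mem (hmemb _ _ hk) hj
    · exact Submodule.mem_sup_left (H.hT.le_mul_right _ (Submodule.mem_span_singleton_self _))
    · rw [hu, ← mul_assoc, ← map_mul]
      apply hmemb
      rw [← hJIT]
      exact mem_ext T ι hec
  obtain ⟨s, hs, hse⟩ := H.ff J H.Jfg e heJT
  have heJ : e ∈ J := H.cop_mem hs hse (H.h.pi (mem_sc_mul.2 ⟨e, heA, rfl⟩))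
  intro a ha hac
  have h1 := he' a ((hKc a).2 ⟨ha, hac⟩)
  have h2 : a * e ∈ J := H.h.AJ (Submodule.mul_mem_mul ha heJ)
  simpa using add_mem h1 h2

theorem inv_one_sub [IsNoetherianRing T] (H : Setup T ι π t t' A J A' J' K b) {j : E}
    (hj : j ∈ ext T ι J) : ∃ v ∈ ext T ι A, (1 - j) * v = 1 := by
  have hP : ext T ι A ≤ Submodule.span T {1 - j} * ext T ι A := by
    refine Submodule.le_of_le_smul_of_le_jacobson_bot (I := Ideal.span {algebraMap R T π})
      (ext_fg T ι H.fg) ?_ ?_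
    · rw [Ideal.span_singleton_le_iff_mem, Ideal.mem_jacobson_bot]
      intro y
      rcases H.loc (algebraMap R T π * y + 1) with h | h
      · exact h
      · exact absurd (isUnit_of_dvd_one ((dvd_add_right (dvd_mul_right _ _)).1 h)) H.npi
    · intro a ha
      have hjn : ∀ n, j ^ n ∈ ext T ι J ^ n := fun n => Submodule.pow_mem_pow _ hj n
      have h1 : (∑ i ∈ Finset.range (t + 1), j ^ i) * a ∈ ext T ι A :=
        H.hT.AA (Submodule.mul_mem_mul (sum_mem fun i _ => H.hT.pow_le i (hjn i)) ha)
      have h2 : a = (1 - j) * ((∑ i ∈ Finset.range (t + 1), j ^ i) * a) + j ^ (t + 1) * a := by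
        rw [← mul_assoc, mul_neg_geom_sum, sub_mul, one_mul, sub_add_cancel]
      rw [h2]
      refine Submodule.add_mem_sup
        (Submodule.mul_mem_mul (Submodule.mem_span_singleton_self _) h1) ?_
      have h3 : j ^ (t + 1) * a ∈ sc E (algebraMap R T π) * ext T ι A := by
        have := Submodule.mul_mem_mul (H.hT.nil (hjn (t + 1))) ha
        rwa [mul_assoc, H.hT.AA'] at this
      obtain ⟨x, hx, hxe⟩ := mem_sc_mul.1 h3
      rw [← hxe]
      exact Submodule.smul_mem_smul (Ideal.mem_span_singleton_self _) hx
  obtain ⟨v, hv, hv'⟩ := Submodule.mem_span_singleton_mul.1 (hP H.hT.one)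
  exact ⟨v, hv, hv'⟩

theorem ext_span (x : B) : ext T ι (Submodule.span R {x}) = Submodule.span T {ι x} := by
  refine le_antisymm ?_ ?_
  · rw [ext_le]
    intro y hy
    obtain ⟨r, rfl⟩ := Submodule.mem_span_singleton.1 hy
    rw [map_smul, ← algebraMap_smul T r]
    exact Submodule.smul_mem _ _ (Submodule.mem_span_singleton_self _)
  · rw [Submodule.span_singleton_le_iff_mem]
    exact mem_ext T ι (Submodule.mem_span_singleton_self _)

theorem main [IsNoetherianRing R] [IsNoetherianRing T] (H : Setup T ι π t t' A J A' J' K b) :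
    ∃ c : Bˣ, ∃ s : R, ¬ π ∣ s ∧ (∀ a ∈ A, s • (((c⁻¹ : Bˣ) : B) * a * c) ∈ A') ∧
      ∀ a ∈ A', s • (c * a * ((c⁻¹ : Bˣ) : B)) ∈ A := by
  obtain ⟨I, hI, hAI, hIT⟩ := H.exists_I
  obtain ⟨I', hI', hIA', hIT'⟩ := H.exists_I'
  obtain ⟨c, hc, hcJ⟩ := H.exists_c hI hAI hIT
  have hbb := bb' (T := T) b
  have hbb2 := b'b (T := T) b
  have hII : ext T ι (I * I') ≤ ext T ι A := by
    rw [ext_mul, hIT, hIT', mul_assoc, ← mul_assoc (Submodule.span T {(b : E)}), hbb, one_mul,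
      H.hT.AA']
  obtain ⟨s, hs, hsA⟩ := H.ff_le (hI.mul hI') H.fg hII
  obtain ⟨s₀, hs₀, hs₀I⟩ := H.ff (I' * I) (hI'.mul hI) 1 (by
    rw [ext_mul, hIT, hIT', mul_assoc, ← mul_assoc (ext T ι A), H.hT.AA', H.hb, ← mul_assoc,
      hbb2, one_mul, map_one]
    exact H.hT'.one)
  -- `s c I' + J = A`
  obtain ⟨M, hM⟩ : ∃ M : Submodule R B, M = Submodule.span R {s • c} * I' + J := ⟨_, rfl⟩
  have hMA : M ≤ A := by
    rw [hM]
    refine sup_le ?_ H.h.Jle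
    intro y hy
    obtain ⟨x, hx, rfl⟩ := Submodule.mem_span_singleton_mul.1 hy
    rw [smul_mul_assoc]
    exact hsA _ (Submodule.mul_mem_mul hc hx)
  obtain ⟨g, hg, hg'⟩ := H.h.ssl M hMA (by
    rw [hM, add_mul, mul_assoc, hIA', H.h.JA'])
  have h1gA : 1 - g ∈ A := sub_mem H.h.one (hMA hg)
  have h1g : 1 - g ∈ J := by
    refine hcJ _ h1gA ?_
    have h1 : ∀ y ∈ I' * I, s • ((1 - g) * c * y) ∈ J * I := by
      intro y hy
      induction hy using Submodule.mul_induction_on' with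
      | mem_mul_mem x hx i hi =>
        have hm : (s • c) * x ∈ M := by
          rw [hM]
          exact Submodule.mem_sup_left
            (Submodule.mul_mem_mul (Submodule.mem_span_singleton_self _) hx)
        have : s • ((1 - g) * c * (x * i)) = ((s • c) * x - g * ((s • c) * x)) * i := by
          simp only [smul_mul_assoc, mul_smul_comm, ← smul_sub]
          congr 1
          noncomm_ring
        rw [this]
        exact Submodule.mul_mem_mul (hg' _ hm) hi
      | add x _ y _ hx hy => rw [mul_add, smul_add]; exact add_mem hx hy
    have h2 := h1 _ hs₀I
    rw [mul_smul_comm, mul_one, ← mul_smul] at h2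
    refine H.cop_mem (s := s * s₀) (fun h => (H.pr.dvd_or_dvd h).elim hs hs₀) h2 ?_
    rw [← smul_mul_assoc]
    exact Submodule.mul_mem_mul (H.h.pi (mem_sc_mul.2 ⟨_, h1gA, rfl⟩)) hc
  have h1M : (1 : B) ∈ M := by
    have : (1 : B) = g + (1 - g) := by abel
    rw [this]
    exact add_mem hg (by rw [hM]; exact Submodule.mem_sup_right h1g)
  rw [hM] at h1M
  obtain ⟨y, hy, j, hj, hyj⟩ := Submodule.mem_sup.1 h1M
  obtain ⟨x, hx, rfl⟩ := Submodule.mem_span_singleton_mul.1 hy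
  obtain ⟨v, hv, hv'⟩ := H.inv_one_sub (mem_ext T ι hj)
  obtain ⟨u, hu, huc⟩ := Submodule.mem_mul_span_singleton.1 (hIT.le (mem_ext T ι hc))
  obtain ⟨w, hw, hwx⟩ := Submodule.mem_span_singleton_mul.1
    (hIT'.le (mem_ext T ι (I'.smul_mem s hx)))
  have huw : u * w = 1 - ι j := by
    have h1 : ι c * ι (s • x) = 1 - ι j := by
      rw [← map_mul, mul_smul_comm, ← smul_mul_assoc, ← map_one ι, ← map_sub, ← hyj,
        add_sub_cancel_right]
    rw [← h1, ← huc, ← hwx]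
    calc u * w = u * (b * ((b⁻¹ : Eˣ) : E)) * w := by rw [Units.mul_inv, mul_one]
      _ = _ := by simp only [mul_assoc]
  have hu1 : u * (w * v) = 1 := by rw [← mul_assoc, huw, hv']
  have hwv : w * v ∈ ext T ι A := H.hT.AA (Submodule.mul_mem_mul hw hv)
  have hu2 : (w * v) * u = 1 := H.df _ _ hu1
  have hcu : IsUnit (ι c) := by
    rw [← huc]
    exact IsUnit.mul ⟨⟨u, w * v, hu1, hu2⟩, rfl⟩ b.isUnit
  obtain ⟨c, rfl⟩ := H.unit c hcu
  have hcb : Submodule.span T {ι c} = Submodule.span T {u} * Submodule.span T {(b : E)} := by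
    rw [Submodule.span_mul_span, Set.singleton_mul_singleton, huc]
  have hAu : ext T ι A * Submodule.span T {u} = ext T ι A := by
    refine le_antisymm ?_ ?_
    · exact (mul_le_mul_right ((Submodule.span_singleton_le_iff_mem _ _).2 hu) _).trans H.hT.AA
    · intro a ha
      refine Submodule.mem_mul_span_singleton.2 ⟨a * (w * v),
        H.hT.AA (Submodule.mul_mem_mul ha hwv), by rw [mul_assoc, hu2, mul_one]⟩
  have huA : Submodule.span T {u} * ext T ι A = ext T ι A := by
    refine le_antisymm ?_ ?_
    · exact (mul_le_mul_left ((Submodule.span_singleton_le_iff_mem _ _).2 hu) _).trans H.hT.AA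
    · intro a ha
      refine Submodule.mem_span_singleton_mul.2 ⟨(w * v) * a,
        H.hT.AA (Submodule.mul_mem_mul hwv ha), by rw [← mul_assoc, hu1, one_mul]⟩
  have hfin : ext T ι (A * Submodule.span R {(c : B)}) =
      ext T ι (Submodule.span R {(c : B)} * A') := by
    rw [ext_mul, ext_mul, ext_span, hcb, ← mul_assoc, hAu, mul_assoc, ← H.hb, ← mul_assoc, huA]
  have hspfg : (Submodule.span R {(c : B)}).FG := Submodule.fg_span_singleton _
  obtain ⟨s₁, hs₁, h₁⟩ := H.ff_le (H.fg.mul hspfg) (hspfg.mul H.fg') hfin.le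
  obtain ⟨s₂, hs₂, h₂⟩ := H.ff_le (hspfg.mul H.fg') (H.fg.mul hspfg) hfin.ge
  refine ⟨c, s₁ * s₂, fun h => (H.pr.dvd_or_dvd h).elim hs₁ hs₂, fun a ha => ?_, fun a ha => ?_⟩
  · obtain ⟨z, hz, hz'⟩ := Submodule.mem_span_singleton_mul.1
      (h₁ _ (Submodule.mul_mem_mul ha (Submodule.mem_span_singleton_self _)))
    rw [mul_comm, mul_smul, mul_assoc, ← mul_smul_comm, ← hz', Units.inv_mul_cancel_left]
    exact A'.smul_mem _ hz
  · obtain ⟨z, hz, hz'⟩ := Submodule.mem_mul_span_singleton.1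
      (h₂ _ (Submodule.mul_mem_mul (Submodule.mem_span_singleton_self _) ha))
    rw [mul_smul, ← smul_mul_assoc, ← hz', Units.mul_inv_cancel_right]
    exact A.smul_mem _ hz

end Setup
end
end HerOrd

namespace HerOrd
section
variable {R B : Type*} [CommRing R] [Ring B] [Algebra R B]

theorem local_unit {A : Submodule R B} (hfg : A.FG) (hAA : A * A ≤ A)
    (h1 : (1 : B) ∈ A) {π : R} (hcop : ∀ s : R, ¬ π ∣ s → IsCoprime s π) (hπ : ¬ IsUnit π)
    {s : R} (hs : ¬ π ∣ s) {z a : B} (hz : z ∈ A) (ha : a ∈ A)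
    (hza : z = algebraMap R B s + π • a) : ∃ r : R, ¬ π ∣ r ∧ ∃ y ∈ A, y * z = algebraMap R B r := by
  obtain ⟨Y, hY⟩ : ∃ Y : Submodule R B, Y = A * Submodule.span R {z} := ⟨_, rfl⟩
  have hle : A.map Y.mkQ ≤ Ideal.span {π} • A.map Y.mkQ := by
    rintro _ ⟨x, hx, rfl⟩
    obtain ⟨α, β, hαβ⟩ := hcop s hs
    have hxa : x * a ∈ A := hAA (Submodule.mul_mem_mul hx ha)
    have e : x = α • (x * z) + π • (β • x - α • (x * a)) := by
      rw [hza, mul_add, ← Algebra.commutes, ← Algebra.smul_def, mul_smul_comm, smul_sub, smul_add]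
      have : x = (α * s + β * π) • x := by rw [hαβ, one_smul]
      nth_rewrite 1 [this]
      rw [add_smul, mul_smul, mul_comm β, mul_smul, smul_comm α π]
      abel
    have h0 : Y.mkQ (α • (x * z)) = 0 := by
      rw [Submodule.mkQ_apply, Submodule.Quotient.mk_eq_zero, hY]
      exact Submodule.smul_mem _ _
        (Submodule.mul_mem_mul hx (Submodule.mem_span_singleton_self _))
    rw [e, map_add, h0, zero_add, map_smul]
    exact Submodule.smul_mem_smul (Ideal.mem_span_singleton_self _)
      ⟨_, sub_mem (A.smul_mem _ hx) (A.smul_mem _ hxa), rfl⟩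
  obtain ⟨r, hr, hr'⟩ := Submodule.exists_sub_one_mem_and_smul_eq_zero_of_fg_of_le_smul
    (Ideal.span {π}) (A.map Y.mkQ) (hfg.map _) hle
  refine ⟨r, fun h => hπ ?_, ?_⟩
  · rw [Ideal.mem_span_singleton] at hr
    exact isUnit_of_dvd_one ((dvd_sub_right h).1 hr)
  · have h2 := hr' _ ⟨1, h1, rfl⟩
    rw [← map_smul, Submodule.mkQ_apply, Submodule.Quotient.mk_eq_zero, hY,
      Submodule.mem_mul_span_singleton] at h2
    obtain ⟨y, hy, hy'⟩ := h2
    exact ⟨y, hy, by rw [hy', Algebra.algebraMap_eq_smul_one]⟩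

theorem mem_of_local {A : Submodule R B} {x : B}
    (h : ∀ p : Ideal R, p.IsMaximal → ∃ s, s ∉ p ∧ s • x ∈ A) : x ∈ A := by
  let I : Ideal R := A.comap (LinearMap.toSpanSingleton R B x)
  have hI : I = ⊤ := by
    by_contra hne
    obtain ⟨p, hp, hIp⟩ := Ideal.exists_le_maximal I hne
    obtain ⟨s, hs, hs'⟩ := h p hp
    exact hs (hIp hs')
  have h1 : (1 : R) ∈ I := by rw [hI]; trivial
  have h2 : (1 : R) • x ∈ A := h1
  rwa [one_smul] at h2

theorem glue [IsDomain R] [IsPrincipalIdealRing R] (hfinmax : {I : Ideal R | I.IsMaximal}.Finite)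
    (hnf : ¬ IsField R)
    (hru : ∀ r : R, r ≠ 0 → IsUnit (algebraMap R B r)) (hdf : ∀ x y : B, x * y = 1 → y * x = 1)
    {A A' : Submodule R B} (hfg : A.FG) (hAA : A * A ≤ A) (h1 : (1 : B) ∈ A)
    (hfull : ∀ y : B, ∃ r : R, r ≠ 0 ∧ r • y ∈ A)
    (hP : ∀ π : R, Prime π → ∃ c : Bˣ, ∃ s : R, ¬ π ∣ s ∧
      (∀ a ∈ A, s • (((c⁻¹ : Bˣ) : B) * a * c) ∈ A') ∧
      ∀ a ∈ A', s • (c * a * ((c⁻¹ : Bˣ) : B)) ∈ A) :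
    ∃ c : Bˣ, (∀ a ∈ A, ((c⁻¹ : Bˣ) : B) * a * c ∈ A') ∧
      ∀ a ∈ A', (c * a * ((c⁻¹ : Bˣ) : B)) ∈ A := by
  classical
  let P := {I : Ideal R // I.IsMaximal}
  have : Finite P := hfinmax
  have := Fintype.ofFinite P
  have hgen : ∀ p : P, ∃ π : R, p.1 = Ideal.span {π} := fun p =>
    (IsPrincipalIdealRing.principal p.1).1
  choose π hπ using hgen
  have hprime : ∀ p : P, Prime (π p) := by
    intro p
    have hp0 : π p ≠ 0 := by
      intro h0
      have := hπ p
      rw [h0, Ideal.span_singleton_eq_bot.2 rfl] at this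
      have hm := p.2
      rw [this] at hm
      exact hnf (Ring.isField_iff_maximal_bot.2 hm)
    rw [← Ideal.span_singleton_prime hp0, ← hπ]
    exact p.2.isPrime
  have hmem : ∀ (p : P) (r : R), r ∈ p.1 ↔ π p ∣ r := by
    intro p r
    rw [hπ p, Ideal.mem_span_singleton]
  have hcop : ∀ (p : P) (s : R), ¬ π p ∣ s → IsCoprime s (π p) := by
    intro p s hs
    exact ((Prime.coprime_iff_not_dvd (hprime p)).2 hs).symm
  have hndvd : ∀ p q : P, p ≠ q → ¬ π p ∣ π q := by
    intro p q hpq h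
    apply hpq
    have : q.1 ≤ p.1 := by
      rw [hπ p, hπ q, Ideal.span_singleton_le_span_singleton]; exact h
    exact (Subtype.ext (q.2.eq_of_le p.2.ne_top this)).symm
  choose c s hs hc hc' using fun p : P => hP (π p) (hprime p)
  choose r hr0 hr using hfull
  obtain ⟨d, hd0, hd⟩ : ∃ d : R, d ≠ 0 ∧ ∀ p q : P, d • ((c q : B) * ((c p)⁻¹ : Bˣ)) ∈ A := by
    refine ⟨∏ x : P × P, r ((c x.2 : B) * ((c x.1)⁻¹ : Bˣ)), Finset.prod_ne_zero_iff.2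
      fun x _ => hr0 _, fun p q => ?_⟩
    rw [← Finset.prod_erase_mul _ _ (Finset.mem_univ (p, q)), mul_smul]
    exact A.smul_mem _ (hr _)
  have hk : ∀ p : P, ∃ (k : ℕ) (d' : R), ¬ π p ∣ d' ∧ d = π p ^ k * d' := by
    intro p
    obtain ⟨x, hx1, hx2⟩ := (FiniteMultiplicity.of_not_isUnit (hprime p).not_unit
      hd0).exists_eq_pow_mul_and_not_dvd
    exact ⟨_, x, hx2, hx1⟩
  choose k d' hd' hdk using hk
  obtain ⟨N, hN⟩ : ∃ N : ℕ, ∀ p, k p < N :=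
    ⟨∑ p, k p + 1, fun p => Nat.lt_succ_of_le (Finset.single_le_sum (fun _ _ => Nat.zero_le _)
      (Finset.mem_univ p))⟩
  obtain ⟨ε, hε⟩ : ∃ ε : P → R, ∀ p, ε p = ∏ q ∈ Finset.univ.erase p, π q ^ N :=
    ⟨_, fun p => rfl⟩
  have hε1 : ∀ p, ¬ π p ∣ ε p := by
    intro p h
    rw [hε, (hprime p).dvd_finset_prod_iff] at h
    obtain ⟨q, hq, hq'⟩ := h
    exact hndvd p q (Finset.ne_of_mem_erase hq).symm ((hprime p).dvd_of_dvd_pow hq')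
  have hε2 : ∀ p q, q ≠ p → π p ^ N ∣ ε q := by
    intro p q hqp
    rw [hε]
    exact Finset.dvd_prod_of_mem _ (Finset.mem_erase.2 ⟨hqp.symm, Finset.mem_univ _⟩)
  obtain ⟨C, hC⟩ : ∃ C : B, C = ∑ q, ε q • (c q : B) := ⟨_, rfl⟩
  have hu : ∀ p : P, ∃ u : Bˣ, C = u * c p ∧ ∃ s, ¬ π p ∣ s ∧ s • (u : B) ∈ A ∧
      s • ((u⁻¹ : Bˣ) : B) ∈ A := by
    intro p
    obtain ⟨v, hv⟩ : ∃ v, v = C * ((c p)⁻¹ : Bˣ) := ⟨_, rfl⟩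
    have hex : ∀ q : P, ∃ a ∈ A, q ≠ p → d' p • ε q • ((c q : B) * ((c p)⁻¹ : Bˣ)) = π p • a := by
      intro q
      by_cases hq : q = p
      · exact ⟨0, A.zero_mem, fun h => absurd hq h⟩
      · obtain ⟨x, hx⟩ : π p ^ (k p + 1) ∣ ε q := (pow_dvd_pow _ (hN p)).trans (hε2 p q hq)
        refine ⟨x • d • ((c q : B) * ((c p)⁻¹ : Bˣ)), A.smul_mem _ (hd p q), fun _ => ?_⟩
        rw [hx, hdk p]
        simp only [← mul_smul]
        congr 1
        ring
    choose a ha ha' using hex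
    have hz : d' p • v = algebraMap R B (d' p * ε p) + π p • ∑ q ∈ Finset.univ.erase p, a q := by
      rw [hv, hC, Finset.sum_mul, Finset.smul_sum, Finset.smul_sum,
        ← Finset.add_sum_erase _ _ (Finset.mem_univ p)]
      congr 1
      · rw [smul_mul_assoc, Units.mul_inv, ← mul_smul, Algebra.algebraMap_eq_smul_one]
      · refine Finset.sum_congr rfl fun q hq => ?_
        rw [smul_mul_assoc, ha' q (Finset.ne_of_mem_erase hq)]
    have haA : ∑ q ∈ Finset.univ.erase p, a q ∈ A := sum_mem fun q _ => ha q
    have hzA : d' p • v ∈ A := by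
      rw [hz, Algebra.algebraMap_eq_smul_one]
      exact add_mem (A.smul_mem _ h1) (A.smul_mem _ haA)
    obtain ⟨r, hr, y, hy, hyr⟩ := local_unit hfg hAA h1 (hcop p) (hprime p).not_unit
      (s := d' p * ε p) (fun h => ((hprime p).dvd_or_dvd h).elim (hd' p) (hε1 p)) hzA haA hz
    have hr0 : r ≠ 0 := fun h => hr (by rw [h]; exact dvd_zero _)
    obtain ⟨ρ, hρ⟩ := hru r hr0
    have hinv : (((ρ⁻¹ : Bˣ) : B) * (d' p • y)) * v = 1 := by
      rw [mul_assoc, smul_mul_assoc, ← mul_smul_comm, hyr, ← hρ, Units.inv_mul]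
    refine ⟨⟨v, _, hdf _ _ hinv, hinv⟩, ?_, d' p * r, ?_, ?_, ?_⟩
    · change C = v * c p
      rw [hv, mul_assoc, Units.inv_mul, mul_one]
    · exact fun h => ((hprime p).dvd_or_dvd h).elim (hd' p) hr
    · rw [mul_comm, mul_smul]; exact A.smul_mem _ hzA
    · change (d' p * r) • (((ρ⁻¹ : Bˣ) : B) * (d' p • y)) ∈ A
      rw [mul_smul]
      refine A.smul_mem _ ?_
      rw [Algebra.smul_def, ← hρ, ← mul_assoc, Units.mul_inv, one_mul]
      exact A.smul_mem _ hy
  choose u hCu σ hσ huA huA' using hu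
  obtain ⟨p₀, hp₀⟩ := Ideal.exists_maximal R
  obtain ⟨D, hD⟩ : ∃ D : Bˣ, D = u ⟨p₀, hp₀⟩ * c ⟨p₀, hp₀⟩ := ⟨_, rfl⟩
  have hDu : ∀ p, D = u p * c p := by
    intro p
    ext
    rw [hD, Units.val_mul, Units.val_mul, ← hCu, ← hCu]
  refine ⟨D, fun a ha => mem_of_local fun p hp => ?_, fun a ha => mem_of_local fun p hp => ?_⟩
  · refine ⟨s ⟨p, hp⟩ * (σ ⟨p, hp⟩ * σ ⟨p, hp⟩), fun h => ?_, ?_⟩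
    · rw [hmem ⟨p, hp⟩] at h
      exact ((hprime _).dvd_or_dvd h).elim (hs _)
        fun h => ((hprime _).dvd_or_dvd h).elim (hσ _) (hσ _)
    · have h2 : (σ ⟨p, hp⟩ • ((u ⟨p, hp⟩)⁻¹ : Bˣ) : B) * a * (σ ⟨p, hp⟩ • (u ⟨p, hp⟩ : B)) ∈ A :=
        hAA (Submodule.mul_mem_mul (hAA (Submodule.mul_mem_mul (huA' _) ha)) (huA _))
      have h3 := hc ⟨p, hp⟩ _ h2
      rw [hDu ⟨p, hp⟩, mul_inv_rev, Units.val_mul, Units.val_mul]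
      convert h3 using 1
      simp only [smul_mul_assoc, mul_smul_comm, mul_smul, mul_assoc]
  · refine ⟨s ⟨p, hp⟩ * (σ ⟨p, hp⟩ * σ ⟨p, hp⟩), fun h => ?_, ?_⟩
    · rw [hmem ⟨p, hp⟩] at h
      exact ((hprime _).dvd_or_dvd h).elim (hs _)
        fun h => ((hprime _).dvd_or_dvd h).elim (hσ _) (hσ _)
    · have h2 := hc' ⟨p, hp⟩ a ha
      have h3 := hAA (Submodule.mul_mem_mul (hAA (Submodule.mul_mem_mul (huA ⟨p, hp⟩) h2))
        (huA' ⟨p, hp⟩))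
      rw [hDu ⟨p, hp⟩, mul_inv_rev, Units.val_mul, Units.val_mul]
      convert h3 using 1
      simp only [smul_mul_assoc, mul_smul_comm, mul_smul, mul_assoc]
      rw [smul_comm (s ⟨p, hp⟩), smul_comm (s ⟨p, hp⟩)]

end
end HerOrd

namespace HerOrd
section
variable {R A B : Type*} [CommRing R] [Ring A] [Algebra R A] [Ring B] [Algebra R B]

theorem hproj_of_hered (hhered : ∀ I : Submodule A A, Module.Projective A I)
    (k : A →ₐ[R] B) {π : R} (hπ : IsUnit (algebraMap R B π))
    (X : Submodule R B) (hX : X ≤ Submodule.map k.toLinearMap ⊤)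
    (hAX : Submodule.map k.toLinearMap ⊤ * X ≤ X)
    (hπX : sc B π * Submodule.map k.toLinearMap ⊤ ≤ X) :
    (1 : B) ∈ lq X (Submodule.map k.toLinearMap ⊤) * X := by
  have hk : ∀ a, k a ∈ Submodule.map k.toLinearMap ⊤ := fun a => ⟨a, trivial, rfl⟩
  let Y : Submodule A A :=
    { carrier := {a | k a ∈ X}
      add_mem' := fun ha hb => by
        change k _ ∈ X
        rw [map_add]; exact X.add_mem ha hb
      zero_mem' := by change k _ ∈ X; rw [map_zero]; exact X.zero_mem
      smul_mem' := fun a x hx => by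
        change k _ ∈ X
        rw [smul_eq_mul, map_mul]
        exact hAX (Submodule.mul_mem_mul (hk a) hx) }
  have hY : ∀ y : Y, k y.1 ∈ X := fun y => y.2
  obtain ⟨s, hs⟩ := (hhered Y).out
  have hπY : algebraMap R A π ∈ Y := by
    change k _ ∈ X
    rw [AlgHom.commutes]
    refine hπX (mem_sc_mul.2 ⟨1, ⟨1, trivial, map_one k⟩, ?_⟩)
    rw [Algebra.algebraMap_eq_smul_one]
  let p : Y := ⟨algebraMap R A π, hπY⟩
  obtain ⟨ϖ, hϖ⟩ := hπ
  have h1 : ((s p).sum fun x a => a * x.1) = algebraMap R A π := by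
    have := congrArg Subtype.val (hs p)
    rw [Finsupp.linearCombination_apply] at this
    rw [← show (p : A) = algebraMap R A π from rfl, ← this, Finsupp.sum, Finsupp.sum,
      AddSubmonoidClass.coe_finset_sum]
    rfl
  have hcomm : ∀ z : B, (((ϖ⁻¹ : Bˣ) : B)) * z = z * ((ϖ⁻¹ : Bˣ) : B) := by
    intro z
    have : Commute (ϖ : B) z := by rw [hϖ]; exact Algebra.commutes π z
    exact (this.units_inv_left).eq
  have h2 : (1 : B) = ∑ x ∈ (s p).support, (((ϖ⁻¹ : Bˣ) : B) * k (s p x)) * k x.1 := by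
    have := congrArg k h1
    rw [AlgHom.commutes, Finsupp.sum, map_sum, ← hϖ] at this
    have h3 := congrArg (fun z => ((ϖ⁻¹ : Bˣ) : B) * z) this
    simp only [Units.inv_mul, Finset.mul_sum, map_mul] at h3
    rw [← h3]
    exact Finset.sum_congr rfl fun x _ => by rw [mul_assoc]
  rw [h2]
  refine sum_mem fun x _ => Submodule.mul_mem_mul ?_ (hY x)
  rw [mem_lq]
  intro y hy
  obtain ⟨a, -, rfl⟩ := hX hy
  have haY : a ∈ Y := hy
  have h4 : (algebraMap R A π) * s ⟨a, haY⟩ x = a * s p x := by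
    have e : (algebraMap R A π) • (⟨a, haY⟩ : Y) = a • p := by
      ext
      exact Algebra.commutes π a
    have := congrArg (fun f => f x) (congrArg s e)
    rw [map_smul, map_smul] at this
    exact this
  refine ⟨s ⟨a, haY⟩ x, trivial, ?_⟩
  change k (s ⟨a, haY⟩ x) = k a * (((ϖ⁻¹ : Bˣ) : B) * k (s p x))
  rw [← mul_assoc, ← hcomm, mul_assoc, ← map_mul, ← h4, map_mul, AlgHom.commutes, ← hϖ,
    Units.inv_mul_cancel_left]

end

theorem df_of_fd {F B : Type*} [Field F] [Ring B] [Algebra F B] [FiniteDimensional F B]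
    (x y : B) (h : x * y = 1) : y * x = 1 := by
  obtain ⟨u, rfl⟩ := isUnit_of_left_inj (F := F) (u := y) (fun z hz => by
    rw [← one_mul z, ← h, mul_assoc, hz, mul_zero])
  have : x = (u⁻¹ : Bˣ) := by
    rw [← mul_one x, ← Units.mul_inv u, ← mul_assoc, h, one_mul]
  rw [this, Units.mul_inv]

section FF
variable {R F T L : Type*} [CommRing R] [IsDomain R] [IsPrincipalIdealRing R] [Field F]
  [Algebra R F] [IsFractionRing R F] [CommRing T] [Algebra R T] [Field L] [Algebra T L]
  [Algebra R L] [IsScalarTower R T L] [Algebra F L] [IsScalarTower R F L]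

theorem inter {π : R} (hcop : ∀ s : R, ¬ π ∣ s → IsCoprime s π) (hpr : Prime π)
    (hTL : Function.Injective (algebraMap T L))
    (npi : ¬ IsUnit (algebraMap R T π)) (f : F) (t : T) (h : algebraMap F L f = algebraMap T L t) :
    ∃ s r : R, ¬ π ∣ s ∧ algebraMap R F s * f = algebraMap R F r := by
  obtain ⟨r, s, hrs, rfl⟩ := IsFractionRing.exists_reduced_fraction (A := R) f
  have hs0 : algebraMap R F s ≠ 0 := IsFractionRing.to_map_ne_zero_of_mem_nonZeroDivisors s.2
  have e : algebraMap R F s * IsLocalization.mk' F r s = algebraMap R F r :=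
    IsLocalization.mk'_spec' F r s
  refine ⟨s, r, fun hdvd => ?_, e⟩
  have hr : ¬ π ∣ r := fun hr => hpr.not_unit (hrs hr hdvd)
  have e2 : algebraMap R T s * t = algebraMap R T r := by
    apply hTL
    rw [map_mul, ← h, ← IsScalarTower.algebraMap_apply, ← IsScalarTower.algebraMap_apply,
      IsScalarTower.algebraMap_apply R F L, ← map_mul, e, ← IsScalarTower.algebraMap_apply]
  obtain ⟨α, β, hαβ⟩ := hcop r hr
  apply npi
  have h1 : algebraMap R T π ∣ algebraMap R T r := by
    rw [← e2]
    exact (map_dvd (algebraMap R T) hdvd).mul_right _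
  have h2 : algebraMap R T (α * r + β * π) = 1 := by rw [hαβ, map_one]
  rw [map_add, map_mul, map_mul] at h2
  refine isUnit_of_dvd_one ?_
  rw [← h2]
  exact dvd_add (h1.mul_left _) (dvd_mul_left _ _)

theorem ff {B : Type*} [Ring B] [Algebra F B] [Algebra R B] [IsScalarTower R F B]
    (ι : B →ₐ[R] L ⊗[F] B) (hι : ∀ x, ι x = 1 ⊗ₜ x)
    {π : R} (hcop : ∀ s : R, ¬ π ∣ s → IsCoprime s π) (hpr : Prime π)
    (hTL : Function.Injective (algebraMap T L)) (npi : ¬ IsUnit (algebraMap R T π))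
    (X : Submodule R B) (hX : X.FG) (x : B) (hx : ι x ∈ ext T ι X) :
    ∃ s : R, ¬ π ∣ s ∧ s • x ∈ X := by
  classical
  have : Module.Finite R X := Module.Finite.iff_fg.2 hX
  have : Module.IsTorsionFree R B := Module.IsTorsionFree.trans_faithfulSMul R F B
  let v := Module.Free.chooseBasis R X
  have hv : LinearIndependent R (fun i => (v i : B)) :=
    v.linearIndependent.map' X.subtype (Submodule.ker_subtype X)
  have hvF : LinearIndependent F (fun i => (v i : B)) :=
    (LinearIndependent.iff_fractionRing R F).1 hv
  obtain ⟨V, hV⟩ : ∃ V, V = Set.range (fun i => (v i : B)) := ⟨_, rfl⟩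
  have hVF : LinearIndepOn F id V := by rw [hV]; exact hvF.linearIndepOn_id
  have hspan : Submodule.span R V = X := by
    have h1 := congrArg (Submodule.map X.subtype) v.span_eq
    rw [Submodule.map_span, Submodule.map_top, Submodule.range_subtype, ← Set.range_comp] at h1
    rw [hV]; exact h1
  let β := Module.Basis.extend hVF
  let γ := Algebra.TensorProduct.basis L β
  have hγ : ∀ y i, γ.repr (ι y) i = algebraMap F L (β.repr y i) := by
    intro y i
    rw [hι, Algebra.TensorProduct.basis_repr_tmul]
    simp [Algebra.smul_def]
  have hVX : ∀ y ∈ X, ∀ i, (∃ r : R, β.repr y i = algebraMap R F r) ∧ (i.1 ∉ V → β.repr y i = 0) := by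
    intro y hy i
    rw [← hspan] at hy
    induction hy using Submodule.span_induction with
    | mem y hy =>
      have : y = β ⟨y, hVF.subset_extend (Set.subset_univ _) hy⟩ := by
        rw [Module.Basis.extend_apply_self]
      rw [this, Module.Basis.repr_self, Finsupp.single_apply]
      split_ifs with h
      · refine ⟨⟨1, (map_one _).symm⟩, fun h' => absurd ?_ h'⟩
        rw [← h]; exact hy
      · exact ⟨⟨0, (map_zero _).symm⟩, fun _ => rfl⟩
    | zero => exact ⟨⟨0, by simp⟩, by simp⟩
    | add a b _ _ ha hb =>
      obtain ⟨⟨r, hr⟩, ha⟩ := ha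
      obtain ⟨⟨r', hr'⟩, hb⟩ := hb
      refine ⟨⟨r + r', by rw [map_add, map_add, Finsupp.add_apply, hr, hr']⟩, fun h => ?_⟩
      rw [map_add, Finsupp.add_apply, ha h, hb h, add_zero]
    | smul c a _ ha =>
      obtain ⟨⟨r, hr⟩, ha⟩ := ha
      have e : β.repr (c • a) i = algebraMap R F c * β.repr a i := by
        rw [← algebraMap_smul F c a, map_smul, Finsupp.smul_apply, smul_eq_mul]
      refine ⟨⟨c * r, by rw [e, hr, map_mul]⟩, fun h => by rw [e, ha h, mul_zero]⟩
  have hT : ∀ y ∈ ext T ι X, ∀ i, (∃ t : T, γ.repr y i = algebraMap T L t) ∧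
      (i.1 ∉ V → γ.repr y i = 0) := by
    intro y hy i
    induction hy using Submodule.span_induction with
    | mem y hy =>
      obtain ⟨z, hz, rfl⟩ := hy
      obtain ⟨⟨r, hr⟩, h0⟩ := hVX z hz i
      refine ⟨⟨algebraMap R T r, ?_⟩, fun h => by rw [hγ, h0 h, map_zero]⟩
      rw [hγ, hr, ← IsScalarTower.algebraMap_apply, ← IsScalarTower.algebraMap_apply]
    | zero => exact ⟨⟨0, by simp⟩, by simp⟩
    | add a b _ _ ha hb =>
      obtain ⟨⟨r, hr⟩, ha⟩ := ha
      obtain ⟨⟨r', hr'⟩, hb⟩ := hb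
      refine ⟨⟨r + r', by rw [map_add, map_add, Finsupp.add_apply, hr, hr']⟩, fun h => ?_⟩
      rw [map_add, Finsupp.add_apply, ha h, hb h, add_zero]
    | smul c a _ ha =>
      obtain ⟨⟨r, hr⟩, ha⟩ := ha
      have e : γ.repr (c • a) i = algebraMap T L c * γ.repr a i := by
        rw [← algebraMap_smul L c a, map_smul, Finsupp.smul_apply, smul_eq_mul]
      refine ⟨⟨c * r, by rw [e, hr, map_mul]⟩, fun h => by rw [e, ha h, mul_zero]⟩
  have hxi : ∀ i, ∃ s r : R, ¬ π ∣ s ∧ algebraMap R F s * β.repr x i = algebraMap R F r := by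
    intro i
    obtain ⟨⟨t, ht⟩, -⟩ := hT _ hx i
    rw [hγ] at ht
    exact inter hcop hpr hTL npi _ t ht
  have hx0 : ∀ i, i.1 ∉ V → β.repr x i = 0 := by
    intro i hi
    have := (hT _ hx i).2 hi
    rw [hγ] at this
    exact (map_eq_zero _).1 this
  choose s r hs hsr using hxi
  refine ⟨∏ i ∈ (β.repr x).support, s i, ?_, ?_⟩
  · rw [hpr.dvd_finsetProd_iff]
    rintro ⟨i, -, hi⟩
    exact hs i hi
  · have hxs : x = ∑ i ∈ (β.repr x).support, β.repr x i • β i := by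
      conv_lhs => rw [← β.linearCombination_repr x, Finsupp.linearCombination_apply, Finsupp.sum]
    obtain ⟨D, hD⟩ : ∃ D, D = (β.repr x).support := ⟨_, rfl⟩
    rw [← hD] at hxs ⊢
    suffices key : (∏ i ∈ D, s i) • (∑ i ∈ D, β.repr x i • β i) ∈ X by rwa [← hxs] at key
    rw [Finset.smul_sum]
    refine sum_mem fun i hi => ?_
    have hiV : i.1 ∈ V := by
      by_contra h
      rw [hD] at hi
      exact Finsupp.mem_support_iff.1 hi (hx0 i h)
    rw [← Finset.prod_erase_mul _ _ hi, mul_smul]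
    refine X.smul_mem _ ?_
    rw [← algebraMap_smul F (s i), ← mul_smul, hsr, algebraMap_smul]
    refine X.smul_mem _ ?_
    rw [Module.Basis.extend_apply_self, ← hspan]
    exact Submodule.subset_span hiV
end FF
end HerOrd

namespace HerOrd
section
variable {R F T L A A' B : Type*} [CommRing R] [IsDomain R] [IsPrincipalIdealRing R] [Field F]
  [Algebra R F] [IsFractionRing R F] [CommRing T] [Algebra R T] [Field L] [Algebra T L]
  [Algebra R L] [IsScalarTower R T L] [Algebra F L] [IsScalarTower R F L]
  [Ring A] [Algebra R A] [Ring A'] [Algebra R A']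
  [Ring B] [Algebra F B] [Algebra R B] [IsScalarTower R F B]

theorem pow_aux [IsDomain T] [IsFractionRing T L] {π : R}
    (hinj : Function.Injective (algebraMap R T)) (hπ0 : π ≠ 0)
    (hT : ∀ x : T, x ≠ 0 → ∃ (n : ℕ) (u : Tˣ), x = u * algebraMap R T π ^ n)
    (ι : B →ₐ[R] L ⊗[F] B) (hι : ∀ x, ι x = 1 ⊗ₜ x) (X : Submodule R B)
    (hfull : ∀ y : B, ∃ r : R, r ≠ 0 ∧ r • y ∈ X) (y : L ⊗[F] B) :
    ∃ n : ℕ, algebraMap R T π ^ n • y ∈ ext T ι X := by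
  have hl : ∀ l : L, ∃ (n : ℕ) (t : T), algebraMap R T π ^ n • l = algebraMap T L t := by
    intro l
    obtain ⟨a, d, hd, rfl⟩ := IsFractionRing.div_surjective (A := T) l
    obtain ⟨n, u, hu⟩ := hT d (nonZeroDivisors.ne_zero hd)
    refine ⟨n, a * (u⁻¹ : Tˣ), ?_⟩
    have hd0 : algebraMap T L d ≠ 0 := IsFractionRing.to_map_ne_zero_of_mem_nonZeroDivisors hd
    rw [Algebra.smul_def, mul_div_assoc', div_eq_iff hd0, ← map_mul, ← map_mul]
    congr 1
    rw [hu, mul_assoc, Units.inv_mul_cancel_left, mul_comm]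
  induction y using TensorProduct.induction_on with
  | zero => exact ⟨0, by rw [smul_zero]; exact Submodule.zero_mem _⟩
  | tmul l b =>
    obtain ⟨r, hr0, hr⟩ := hfull b
    have hrF : algebraMap R F r ≠ 0 := by
      rw [Ne, IsFractionRing.to_map_eq_zero_iff]; exact hr0
    have hrL : algebraMap R L r ≠ 0 := by
      rw [IsScalarTower.algebraMap_apply R F L, Ne, map_eq_zero]; exact hrF
    obtain ⟨n, t, hn⟩ := hl (l / algebraMap R L r)
    refine ⟨n, ?_⟩
    have e : algebraMap R T π ^ n • (l ⊗ₜ[F] b) = t • ι (r • b) := by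
      have e1 : l = (algebraMap R F r) • (l / algebraMap R L r) := by
        rw [Algebra.smul_def, ← IsScalarTower.algebraMap_apply, mul_div_cancel₀ _ hrL]
      rw [hι, e1, TensorProduct.smul_tmul, algebraMap_smul, TensorProduct.smul_tmul', hn,
        TensorProduct.smul_tmul', Algebra.algebraMap_eq_smul_one]
    rw [e]
    exact Submodule.smul_mem _ _ (mem_ext T ι hr)
  | add x y hx hy =>
    obtain ⟨n, hn⟩ := hx
    obtain ⟨m, hm⟩ := hy
    refine ⟨n + m, ?_⟩
    rw [smul_add]
    refine add_mem ?_ ?_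
    · rw [add_comm, pow_add, mul_smul]; exact Submodule.smul_mem _ _ hn
    · rw [pow_add, mul_smul]; exact Submodule.smul_mem _ _ hm

theorem cen_aux [IsDomain T] [IsFractionRing T L] [IsIntegrallyClosed T] {τ : T}
    {E : Type*} [Ring E] [Nontrivial E] [Algebra L E] [Algebra T E] [IsScalarTower T L E]
    [Algebra.IsCentral L E] (hτ : τ ≠ 0) {Y : Submodule T E} (hfg : Y.FG)
    (hYY : Y * Y ≤ Y) (h1 : (1 : E) ∈ Y) (hpow : ∀ y : E, ∃ n : ℕ, τ ^ n • y ∈ Y)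
    (x : E) (hx : x ∈ Y) (hc : ∀ a ∈ Y, x * a = a * x) : ∃ r : T, x = algebraMap T E r := by
  have hxc : x ∈ Subalgebra.center L E := by
    rw [Subalgebra.mem_center_iff]
    intro y
    obtain ⟨n, hn⟩ := hpow y
    have h2 := hc _ hn
    rw [mul_smul_comm, smul_mul_assoc, ← algebraMap_smul L (τ ^ n) (x * y),
      ← algebraMap_smul L (τ ^ n) (y * x)] at h2
    have h0 : algebraMap T L (τ ^ n) ≠ 0 := by
      rw [Ne, IsFractionRing.to_map_eq_zero_iff]; exact pow_ne_zero _ hτ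
    exact ((smul_right_injective E h0) h2).symm
  obtain ⟨l, rfl⟩ := Algebra.mem_bot.1 (Algebra.IsCentral.out hxc)
  let Z : Subalgebra T E := Y.toSubalgebra h1
    (fun a b ha hb => hYY (Submodule.mul_mem_mul ha hb))
  have hintg : IsIntegral T (algebraMap L E l) := by
    refine IsIntegral.of_mem_of_fg Z ?_ _ hx
    rwa [Submodule.toSubalgebra_toSubmodule]
  have hintl : IsIntegral T l :=
    (isIntegral_algHom_iff (IsScalarTower.toAlgHom T L E) (algebraMap L E).injective).1 hintg
  obtain ⟨r, hr⟩ := IsIntegrallyClosed.isIntegral_iff.1 hintl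
  exact ⟨r, by rw [← hr, ← IsScalarTower.algebraMap_apply]⟩

theorem hb_aux {E : Type*} [Ring E] [Algebra R E] [Algebra L E] [Algebra T E] [IsScalarTower R T E]
    [IsScalarTower T L E] (ι : B →ₐ[R] E) (k : A →ₐ[R] B) (k' : A' →ₐ[R] B)
    (σ : T ⊗[R] A ≃ₐ[T] T ⊗[R] A') (h : E →ₐ[L] E)
    (hh : ∀ a, h (ι (k a)) = jmap T ι k' (σ (1 ⊗ₜ a))) (u : Eˣ) (hu : ∀ y, h y * u = u * y) :
    ext T ι (Submodule.map k.toLinearMap ⊤) * Submodule.span T {((u⁻¹ : Eˣ) : E)} =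
      Submodule.span T {((u⁻¹ : Eˣ) : E)} * ext T ι (Submodule.map k'.toLinearMap ⊤) := by
  have h1 : ∀ v, h (jmap T ι k v) = jmap T ι k' (σ v) := by
    intro v
    induction v using TensorProduct.induction_on with
    | zero => simp only [map_zero]
    | add x y hx hy => simp only [map_add, hx, hy]
    | tmul t a =>
      have e : (t ⊗ₜ a : T ⊗[R] A) = t • (1 ⊗ₜ a) := by
        rw [TensorProduct.smul_tmul', smul_eq_mul, mul_one]
      rw [jmap_tmul, e, map_smul σ, map_smul (jmap T ι k'), ← hh, ← algebraMap_smul L,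
        map_smul h, algebraMap_smul]
  have h2 : ∀ y, ((u⁻¹ : Eˣ) : E) * h y = y * ((u⁻¹ : Eˣ) : E) := by
    intro y
    rw [Units.inv_mul_eq_iff_eq_mul, ← mul_assoc, ← hu, Units.mul_inv_cancel_right]
  rw [← map_jmap_ext, ← map_jmap_ext, ext_top, ext_top]
  ext y
  rw [Submodule.mem_span_singleton_mul, Submodule.mem_mul_span_singleton]
  constructor
  · rintro ⟨_, ⟨v, -, rfl⟩, rfl⟩
    refine ⟨_, ⟨σ v, trivial, rfl⟩, ?_⟩
    change _ * jmap T ι k' (σ v) = jmap T ι k v * _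
    rw [← h1, h2]
  · rintro ⟨_, ⟨v, -, rfl⟩, rfl⟩
    refine ⟨_, ⟨σ.symm v, trivial, rfl⟩, ?_⟩
    change jmap T ι k (σ.symm v) * _ = _ * jmap T ι k' v
    rw [← h2, h1, AlgEquiv.apply_symm_apply]

theorem per_prime [IsDomain T] [IsNoetherianRing T] [IsIntegrallyClosed T] [IsFractionRing T L]
    [Algebra.FormallyUnramified R T] [Algebra.EssFiniteType R T]
    [Module.Finite R A] [Module.Finite R A']
    [FiniteDimensional F B] [Algebra.IsCentral F B] [IsSimpleRing B]
    (hhered : ∀ I : Submodule A A, Module.Projective A I)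
    {π : R} (hpr : Prime π) (hinj : Function.Injective (algebraMap R T))
    (hT : ∀ x : T, x ≠ 0 → ∃ (n : ℕ) (u : Tˣ), x = u * algebraMap R T π ^ n)
    (npi : ¬ IsUnit (algebraMap R T π))
    (ι : B →ₐ[R] L ⊗[F] B) (hι : ∀ x, ι x = 1 ⊗ₜ x)
    (k : A →ₐ[R] B) (k' : A' →ₐ[R] B)
    (hfull : ∀ y : B, ∃ r : R, r ≠ 0 ∧ r • y ∈ Submodule.map k.toLinearMap ⊤)
    (hext : ∀ g : A →ₐ[R] L ⊗[F] B, ∃ h : L ⊗[F] B →ₐ[L] L ⊗[F] B, ∀ a, h (ι (k a)) = g a)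
    (σ : T ⊗[R] A ≃ₐ[T] T ⊗[R] A') :
    ∃ c : Bˣ, ∃ s : R, ¬ π ∣ s ∧
      (∀ a ∈ Submodule.map k.toLinearMap ⊤,
        s • (((c⁻¹ : Bˣ) : B) * a * c) ∈ Submodule.map k'.toLinearMap ⊤) ∧
      ∀ a ∈ Submodule.map k'.toLinearMap ⊤,
        s • (c * a * ((c⁻¹ : Bˣ) : B)) ∈ Submodule.map k.toLinearMap ⊤ := by
  have hmax : (Ideal.span {π}).IsMaximal :=
    PrincipalIdealRing.isMaximal_of_irreducible hpr.irreducible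
  have hcop : ∀ s : R, ¬ π ∣ s → IsCoprime s π := fun s hs =>
    ((hpr.irreducible.coprime_iff_not_dvd).2 hs).symm
  have hpiF : algebraMap R F π ≠ 0 := by
    rw [Ne, IsFractionRing.to_map_eq_zero_iff]; exact hpr.ne_zero
  have hpiu : IsUnit (algebraMap R B π) := by
    rw [IsScalarTower.algebraMap_apply R F B]
    exact (IsUnit.mk0 _ hpiF).map (algebraMap F B)
  obtain ⟨I, hI, f, t, hss, hfs, hf0, hnil⟩ := exists_rad (A := A) π hmax
  obtain ⟨I', hI', f', t', hss', hfs', hf0', hnil'⟩ := exists_rad (A := A') π hmax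
  have hOrd := ord_of_hom k f hfs hf0 hnil
  have hOrd' := ord_of_hom k' f' hfs' hf0' hnil'
  have hOrdT := ord_ext T ι k f hfs hf0 hnil
  have hOrdT' := ord_ext T ι k' f' hfs' hf0' hnil'
  obtain ⟨K, hJK, hKJ, hAK, hKA⟩ := hOrd.exists_inverse hpiu
    (fun X => hproj_of_hered hhered k hpiu X)
  have hcen := bc_central F L B
  have hsim := bc_simple F L B
  have hpow := pow_aux (L := L) hinj hpr.ne_zero hT ι hι _ hfull
  have hfg : (Submodule.map k.toLinearMap ⊤).FG := (Module.Finite.fg_top).map _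
  have hfg' : (Submodule.map k'.toLinearMap ⊤).FG := (Module.Finite.fg_top).map _
  let g : A →ₐ[R] L ⊗[F] B := ((jmap T ι k').restrictScalars R).comp
    ((σ.toAlgHom.restrictScalars R).comp Algebra.TensorProduct.includeRight)
  obtain ⟨h, hh⟩ := hext g
  obtain ⟨u, hu⟩ := skolem L (L ⊗[F] B) h
  have hιinj : Function.Injective ι := by
    have := Algebra.TensorProduct.includeRight_injective (R := F) (A := L) (B := B)
      (algebraMap F L).injective
    intro x y hxy
    rw [hι, hι] at hxy
    exact this hxy
  have hloc : ∀ r : T, IsUnit r ∨ algebraMap R T π ∣ r := by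
    intro r
    by_cases hr : r = 0
    · right; rw [hr]; exact dvd_zero _
    · obtain ⟨n, v, rfl⟩ := hT r hr
      rcases n with _ | n
      · left; rw [pow_zero, mul_one]; exact v.isUnit
      · right; rw [pow_succ]; exact Dvd.intro_left _ (mul_assoc _ _ _)
  have H : Setup T ι π t t' (Submodule.map k.toLinearMap ⊤)
      (Submodule.map k.toLinearMap (LinearMap.ker f.toLinearMap))
      (Submodule.map k'.toLinearMap ⊤)
      (Submodule.map k'.toLinearMap (LinearMap.ker f'.toLinearMap)) K u⁻¹ :=
    { h := hOrd
      h' := hOrd'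
      hT := hOrdT
      hT' := hOrdT'
      fg := hfg
      fg' := hfg'
      JK := hJK
      KJ := hKJ
      AK := hAK
      KA := hKA
      piu := hpiu
      cen := cen_aux (L := L) (τ := algebraMap R T π)
        (by rw [Ne, map_eq_zero_iff _ hinj]; exact hpr.ne_zero) (ext_fg T ι hfg)
        hOrdT.AA hOrdT.one hpow
      loc := hloc
      pow := hpow
      hb := hb_aux (L := L) ι k k' σ h hh u hu
      ff := fun X hX x hx => ff (L := L) ι hι hcop hpr (IsFractionRing.injective T L) npi X hX x hx
      npi := npi
      pr := hpr
      cop := hcop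
      unit := fun c hc => isUnit_of_left_inj (F := F) (fun x hx => by
        have h0 : ι c * ι x = 0 := by rw [← map_mul, hx, map_zero]
        have := hc.mul_right_eq_zero.1 h0
        exact (map_eq_zero_iff ι hιinj).1 this)
      df := df_of_fd (F := L) }
  exact H.main

end
end HerOrd

namespace HerOrd

theorem dvr_pow {T : Type*} [CommRing T] [IsLocalRing T] [IsNoetherianRing T] {p : T}
    (hp : IsLocalRing.maximalIdeal T = Ideal.span {p}) (x : T) (hx : x ≠ 0) :
    ∃ (n : ℕ) (u : Tˣ), x = u * p ^ n := by
  classical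
  have hb : ⨅ i : ℕ, (IsLocalRing.maximalIdeal T) ^ i = ⊥ :=
    Ideal.iInf_pow_eq_bot_of_isLocalRing _ (IsLocalRing.maximalIdeal.isMaximal T).ne_top
  have hex : ∃ n, ¬ (p ^ n ∣ x) := by
    by_contra! h
    apply hx
    rw [← Ideal.mem_bot, ← hb, Ideal.mem_iInf]
    intro i
    rw [hp, Ideal.span_singleton_pow, Ideal.mem_span_singleton]
    exact h i
  have h1 := Nat.find_spec hex
  obtain ⟨m, hm⟩ : ∃ m, Nat.find hex = m + 1 := by
    refine Nat.exists_eq_succ_of_ne_zero fun h0 => h1 ?_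
    rw [h0, pow_zero]; exact one_dvd _
  have h2 : p ^ m ∣ x := by
    by_contra h
    have := Nat.find_min' hex h
    lia
  rw [hm] at h1
  obtain ⟨y, rfl⟩ := h2
  have hy : IsUnit y := by
    by_contra hy
    have : y ∈ IsLocalRing.maximalIdeal T := hy
    rw [hp, Ideal.mem_span_singleton] at this
    obtain ⟨z, rfl⟩ := this
    exact h1 ⟨z, by ring⟩
  obtain ⟨u, rfl⟩ := hy
  exact ⟨m, u, mul_comm _ _⟩

theorem dvr_domain {T : Type*} [CommRing T] [IsLocalRing T] [IsNoetherianRing T] {p : T}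
    (hp : IsLocalRing.maximalIdeal T = Ideal.span {p}) (hreg : ∀ x, p * x = 0 → x = 0) :
    IsDomain T := by
  have hreg' : ∀ n x, p ^ n * x = 0 → x = 0 := by
    intro n
    induction n with
    | zero => intro x hx; rwa [pow_zero, one_mul] at hx
    | succ n ih => intro x hx; exact hreg _ (ih _ (by rw [← mul_assoc, ← pow_succ, hx]))
  have : NoZeroDivisors T := ⟨by
    intro a b hab
    by_contra! h
    obtain ⟨n, u, hu⟩ := dvr_pow hp a h.1
    apply h.2
    apply hreg' n
    have h3 : (u : T) * (p ^ n * b) = 0 := by rw [← mul_assoc, ← hu, hab]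
    exact (Units.mul_right_eq_zero u).1 h3⟩
  exact NoZeroDivisors.to_isDomain T

theorem dvr_intclosed {T : Type*} [CommRing T] [IsLocalRing T] [IsNoetherianRing T] {p : T}
    [IsDomain T] (hp : IsLocalRing.maximalIdeal T = Ideal.span {p}) (hp0 : p ≠ 0) :
    IsIntegrallyClosed T := by
  have hpr : Prime p := by
    rw [← Ideal.span_singleton_prime hp0, ← hp]
    exact (IsLocalRing.maximalIdeal.isMaximal T).isPrime
  have hH : IsDiscreteValuationRing.HasUnitMulPowIrreducibleFactorization T := by
    refine ⟨p, hpr.irreducible, fun {x} hx => ?_⟩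
    obtain ⟨n, u, hu⟩ := dvr_pow hp x hx
    exact ⟨n, u, by rw [hu, mul_comm]⟩
  have := hH.toUniqueFactorizationMonoid
  infer_instance

theorem exists_T (R S : Type*) [CommRing R] [IsDomain R] [IsPrincipalIdealRing R] [CommRing S]
    [Algebra R S] [Algebra.Etale R S] [Module.FaithfullyFlat R S] {π : R} (hpr : Prime π) :
    ∃ (q : Ideal S) (_ : q.IsPrime), ∃ (_ : IsDomain (Localization.AtPrime q)),
      IsNoetherianRing (Localization.AtPrime q) ∧ IsIntegrallyClosed (Localization.AtPrime q) ∧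
      Algebra.FormallyUnramified R (Localization.AtPrime q) ∧
      Algebra.EssFiniteType R (Localization.AtPrime q) ∧
      Function.Injective (algebraMap R (Localization.AtPrime q)) ∧
      (∀ x : Localization.AtPrime q, x ≠ 0 → ∃ (n : ℕ) (u : (Localization.AtPrime q)ˣ),
        x = u * algebraMap R _ π ^ n) ∧ ¬ IsUnit (algebraMap R (Localization.AtPrime q) π) := by
  have hmax : (Ideal.span {π}).IsMaximal :=
    PrincipalIdealRing.isMaximal_of_irreducible hpr.irreducible
  have hprime := hmax.isPrime
  obtain ⟨q, hq, hover⟩ : ∃ q : Ideal S, q.IsPrime ∧ q.LiesOver (Ideal.span {π}) := by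
    obtain ⟨⟨q, hq⟩, hqq⟩ := PrimeSpectrum.comap_surjective_of_faithfullyFlat (A := R) (B := S)
      ⟨Ideal.span {π}, hprime⟩
    refine ⟨q, hq, ⟨?_⟩⟩
    exact (congrArg PrimeSpectrum.asIdeal hqq).symm
  have i1 : IsNoetherianRing S := Algebra.FiniteType.isNoetherianRing R S
  have i2 : IsNoetherianRing (Localization.AtPrime q) :=
    IsLocalization.isNoetherianRing q.primeCompl _ i1
  have i3 : Algebra.FormallyUnramified S (Localization.AtPrime q) :=
    Algebra.FormallyUnramified.of_isLocalization q.primeCompl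
  have i4 : Algebra.FormallyUnramified R (Localization.AtPrime q) :=
    Algebra.FormallyUnramified.comp R S _
  have i5 : Algebra.EssFiniteType S (Localization.AtPrime q) :=
    Algebra.EssFiniteType.of_isLocalization _ q.primeCompl
  have i6 : Algebra.EssFiniteType R (Localization.AtPrime q) :=
    Algebra.EssFiniteType.comp R S _
  have i7 : Module.Flat S (Localization.AtPrime q) := IsLocalization.flat _ q.primeCompl
  have i8 : Module.Flat R (Localization.AtPrime q) := Module.Flat.trans R S _
  have hm : IsLocalRing.maximalIdeal (Localization.AtPrime q) =
      Ideal.span {algebraMap R (Localization.AtPrime q) π} := by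
    letI := Localization.AtPrime.algebraOfLiesOver (Ideal.span {π}) q
    have := ((Algebra.isUnramifiedAt_iff_map_eq R (Ideal.span {π}) q).1 i4).2
    rw [← this, Ideal.map_span, Set.image_singleton]
  have htf : ∀ r : R, r ≠ 0 → ∀ x : Localization.AtPrime q, r • x = 0 → x = 0 := by
    intro r hr x hx
    have : IsSMulRegular (Localization.AtPrime q) (algebraMap R (Localization.AtPrime q) r) :=
      (IsRegular.of_ne_zero hr).left.isSMulRegular.of_flat
    apply this
    change algebraMap R (Localization.AtPrime q) r • x = algebraMap R (Localization.AtPrime q) r • 0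
    rw [algebraMap_smul, hx, smul_zero]
  have i9 : IsDomain (Localization.AtPrime q) := dvr_domain hm (fun x hx => by
    rw [← Algebra.smul_def] at hx
    exact htf π hpr.ne_zero x hx)
  have hinj : Function.Injective (algebraMap R (Localization.AtPrime q)) := by
    rw [injective_iff_map_eq_zero]
    intro r hr
    by_contra h
    refine one_ne_zero (htf r h 1 ?_)
    rw [← Algebra.algebraMap_eq_smul_one, hr]
  have hp0 : algebraMap R (Localization.AtPrime q) π ≠ 0 := by
    rw [Ne, map_eq_zero_iff _ hinj]; exact hpr.ne_zero
  refine ⟨q, hq, i9, i2, dvr_intclosed hm hp0, i4, i6, hinj, dvr_pow hm, ?_⟩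
  have : algebraMap R (Localization.AtPrime q) π ∈
      IsLocalRing.maximalIdeal (Localization.AtPrime q) := by
    rw [hm]; exact Ideal.mem_span_singleton_self _
  exact this

section
variable {R S : Type*} (T : Type*) {A A' : Type*} [CommRing R] [CommRing S] [CommRing T]
    [Algebra R S] [Algebra S T] [Algebra R T] [IsScalarTower R S T] [Ring A] [Algebra R A] [Ring A']
    [Algebra R A']

/-- the map `S ⊗ A → T ⊗ A` -/
noncomputable def rho : S ⊗[R] A →ₐ[S] T ⊗[R] A :=
  Algebra.TensorProduct.map (Algebra.ofId S T) (AlgHom.id R A)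

theorem rho_tmul (s : S) (a : A) :
    rho T (s ⊗ₜ[R] a) = algebraMap S T s ⊗ₜ a := rfl

/-- base change of an algebra map -/
noncomputable def bcm (φ : S ⊗[R] A →ₐ[S] S ⊗[R] A') : T ⊗[R] A →ₐ[T] T ⊗[R] A' :=
  Algebra.TensorProduct.lift (Algebra.ofId T _)
    (((rho T).comp φ).restrictScalars R |>.comp Algebra.TensorProduct.includeRight)
    (fun t _ => Algebra.commutes t _)

theorem bcm_tmul (φ : S ⊗[R] A →ₐ[S] S ⊗[R] A') (t : T) (a : A) :
    bcm T φ (t ⊗ₜ a) = t • rho T (φ (1 ⊗ₜ a)) := by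
  rw [Algebra.smul_def]; rfl

theorem bcm_rho (φ : S ⊗[R] A →ₐ[S] S ⊗[R] A') (x : S ⊗[R] A) :
    bcm T φ (rho T x) = rho T (φ x) := by
  induction x using TensorProduct.induction_on with
  | zero => simp only [map_zero]
  | add x y hx hy => simp only [map_add, hx, hy]
  | tmul s a =>
    have e : (s ⊗ₜ a : S ⊗[R] A) = s • (1 ⊗ₜ a) := by
      rw [TensorProduct.smul_tmul', smul_eq_mul, mul_one]
    rw [rho_tmul, bcm_tmul, e, map_smul φ, map_smul (rho T), algebraMap_smul]

theorem bcm_bcm (φ : S ⊗[R] A →ₐ[S] S ⊗[R] A') (ψ : S ⊗[R] A' →ₐ[S] S ⊗[R] A)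
    (h : ∀ x, ψ (φ x) = x) (x : T ⊗[R] A) : bcm T ψ (bcm T φ x) = x := by
  induction x using TensorProduct.induction_on with
  | zero => simp only [map_zero]
  | add x y hx hy => simp only [map_add, hx, hy]
  | tmul t a =>
    rw [bcm_tmul, map_smul, bcm_rho, h, rho_tmul, map_one, TensorProduct.smul_tmul', smul_eq_mul,
      mul_one]

theorem bc_iso (e : S ⊗[R] A ≃ₐ[S] S ⊗[R] A') : Nonempty (T ⊗[R] A ≃ₐ[T] T ⊗[R] A') :=
  ⟨AlgEquiv.ofAlgHom (bcm T e.toAlgHom) (bcm T e.symm.toAlgHom)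
    (AlgHom.ext fun x => bcm_bcm T e.symm.toAlgHom e.toAlgHom (fun y => e.apply_symm_apply y) x)
    (AlgHom.ext fun x => bcm_bcm T e.toAlgHom e.symm.toAlgHom (fun y => e.symm_apply_apply y) x)⟩

end

theorem hext_aux {R F L A : Type*} [CommRing R] [Field F] [Algebra R F] [Field L]
    [Algebra F L] [Ring A] [Algebra R A]
    {E : Type*} [Ring E] [Algebra R E] [Algebra F E] [Algebra L E] [IsScalarTower F L E]
    [IsScalarTower R F E] (g : A →ₐ[R] E) :
    ∃ h : L ⊗[F] (F ⊗[R] A) →ₐ[L] E, ∀ a, h (1 ⊗ₜ (1 ⊗ₜ a)) = g a := by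
  let h0 : F ⊗[R] A →ₐ[F] E :=
    Algebra.TensorProduct.lift (Algebra.ofId F E) g (fun t _ => Algebra.commutes t _)
  let h1 : L ⊗[F] (F ⊗[R] A) →ₐ[L] E :=
    Algebra.TensorProduct.lift (Algebra.ofId L E) h0 (fun t _ => Algebra.commutes t _)
  refine ⟨h1, fun a => ?_⟩
  have e1 : h1 (1 ⊗ₜ (1 ⊗ₜ a)) = algebraMap L E 1 * h0 (1 ⊗ₜ a) := rfl
  have e0 : h0 (1 ⊗ₜ a) = algebraMap F E 1 * g a := rfl
  rw [e1, e0, map_one, map_one, one_mul, one_mul]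

theorem full_aux {R F A : Type*} [CommRing R] [IsDomain R] [Field F] [Algebra R F]
    [IsFractionRing R F] [Ring A] [Algebra R A] (y : F ⊗[R] A) :
    ∃ r : R, r ≠ 0 ∧ r • y ∈ Submodule.map
      (Algebra.TensorProduct.includeRight : A →ₐ[R] F ⊗[R] A).toLinearMap ⊤ := by
  induction y using TensorProduct.induction_on with
  | zero => exact ⟨1, one_ne_zero, by rw [smul_zero]; exact Submodule.zero_mem _⟩
  | tmul f a =>
    obtain ⟨b, d, hd, rfl⟩ := IsFractionRing.div_surjective (A := R) f
    have hd0 : algebraMap R F d ≠ 0 := IsFractionRing.to_map_ne_zero_of_mem_nonZeroDivisors hd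
    refine ⟨d, nonZeroDivisors.ne_zero hd, b • a, trivial, ?_⟩
    change 1 ⊗ₜ (b • a) = _
    rw [TensorProduct.smul_tmul', ← TensorProduct.smul_tmul]
    congr 1
    rw [Algebra.smul_def, Algebra.smul_def, mul_div_cancel₀ _ hd0, mul_one]
  | add x y hx hy =>
    obtain ⟨n, hn0, hn⟩ := hx
    obtain ⟨m, hm0, hm⟩ := hy
    refine ⟨n * m, mul_ne_zero hn0 hm0, ?_⟩
    rw [smul_add]
    refine add_mem ?_ ?_
    · rw [mul_comm, mul_smul]; exact Submodule.smul_mem _ _ hn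
    · rw [mul_smul]; exact Submodule.smul_mem _ _ hm

end HerOrd

namespace HerOrd

theorem field_case (R F A A' : Type*) [CommRing R] [Field F] [Algebra R F]
    [Ring A] [Algebra R A] [Ring A'] [Algebra R A']
    (hb : Function.Bijective (algebraMap R F))
    (φ : F ⊗[R] A ≃ₐ[F] F ⊗[R] A') : Nonempty (A ≃ₐ[R] A') := by
  let e : R ≃ₐ[R] F := AlgEquiv.ofBijective (Algebra.ofId R F) hb
  exact ⟨(((Algebra.TensorProduct.lid R A).symm.trans
    (Algebra.TensorProduct.congr e AlgEquiv.refl)).trans (φ.restrictScalars R)).trans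
    ((Algebra.TensorProduct.congr e.symm AlgEquiv.refl).trans (Algebra.TensorProduct.lid R A'))⟩

theorem conj_iso {R A A' B : Type*} [CommRing R] [Ring A] [Algebra R A] [Ring A'] [Algebra R A']
    [Ring B] [Algebra R B] (k : A →ₐ[R] B) (k' : A' →ₐ[R] B) (hk : Function.Injective k)
    (hk' : Function.Injective k') (c : Bˣ)
    (h1 : ∀ a ∈ Submodule.map k.toLinearMap ⊤,
      (((c⁻¹ : Bˣ) : B) * a * c) ∈ Submodule.map k'.toLinearMap ⊤)
    (h2 : ∀ a ∈ Submodule.map k'.toLinearMap ⊤,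
      (c * a * ((c⁻¹ : Bˣ) : B)) ∈ Submodule.map k.toLinearMap ⊤) : Nonempty (A ≃ₐ[R] A') := by
  have h1' : ∀ a, ∃ a', k' a' = ((c⁻¹ : Bˣ) : B) * k a * c := fun a => by
    obtain ⟨a', -, h⟩ := h1 (k a) ⟨a, trivial, rfl⟩
    exact ⟨a', h⟩
  choose f hf using h1'
  let f' : A →ₐ[R] A' := AlgHom.ofLinearMap
    { toFun := f
      map_add' := fun x y => hk' (by
        rw [map_add k', hf, hf, hf, map_add, mul_add, add_mul])
      map_smul' := fun r x => hk' (by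
        rw [RingHom.id_apply, map_smul k', hf, hf, map_smul, mul_smul_comm, smul_mul_assoc]) }
    (hk' (by
      change k' (f 1) = _
      rw [hf, map_one, map_one, mul_one, Units.inv_mul]))
    (fun x y => hk' (by
      change k' (f (x * y)) = k' (f x * f y)
      rw [map_mul k', hf, hf, hf, map_mul]
      simp only [mul_assoc, Units.mul_inv_cancel_left]))
  have hf' : ∀ a, k' (f' a) = ((c⁻¹ : Bˣ) : B) * k a * c := hf
  refine ⟨AlgEquiv.ofBijective f' ⟨fun x y hxy => ?_, fun y => ?_⟩⟩
  · have := congrArg k' hxy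
    rw [hf', hf'] at this
    exact hk (by simpa using this)
  · obtain ⟨a, -, ha⟩ := h2 (k' y) ⟨y, trivial, rfl⟩
    have ha : k a = _ := ha
    refine ⟨a, hk' ?_⟩
    rw [hf', ha]
    simp [mul_assoc]

theorem incl_inj {R F A : Type*} [CommRing R] [IsDomain R] [IsPrincipalIdealRing R] [Field F]
    [Algebra R F] [IsFractionRing R F] [Ring A] [Algebra R A] [NoZeroSMulDivisors R A] :
    Function.Injective (Algebra.TensorProduct.includeRight : A →ₐ[R] F ⊗[R] A) := by
  have : Module.IsTorsionFree R A := inferInstance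
  have : Module.Flat R A := inferInstance
  exact Algebra.TensorProduct.includeRight_injective (IsFractionRing.injective R F)

theorem main_aux
    (R : Type u) (F : Type*) [CommRing R] [IsDomain R] [IsPrincipalIdealRing R]
    (hsemilocal : {I : Ideal R | I.IsMaximal}.Finite) (hnf : ¬ IsField R)
    [Field F] [Algebra R F] [IsFractionRing R F]
    (A A' : Type*) [Ring A] [Algebra R A] [Module.Finite R A] [NoZeroSMulDivisors R A]
    [Ring A'] [Algebra R A'] [Module.Finite R A'] [NoZeroSMulDivisors R A']
    (hhered : ∀ I : Submodule A A, Module.Projective A I)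
    (hcentral : Algebra.IsCentral F (F ⊗[R] A))
    (hsimple : IsSimpleRing (F ⊗[R] A))
    (hfin : FiniteDimensional F (F ⊗[R] A))
    (φ : (F ⊗[R] A) ≃ₐ[F] (F ⊗[R] A'))
    (S : Type u) [CommRing S] [Algebra R S] [Algebra.Etale R S] [Module.FaithfullyFlat R S]
    (e : (S ⊗[R] A) ≃ₐ[S] (S ⊗[R] A')) :
    Nonempty (A ≃ₐ[R] A') := by
  let k : A →ₐ[R] F ⊗[R] A := Algebra.TensorProduct.includeRight
  let k' : A' →ₐ[R] F ⊗[R] A :=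
    (φ.symm.toAlgHom.restrictScalars R).comp Algebra.TensorProduct.includeRight
  have hk : Function.Injective k := incl_inj
  have hk' : Function.Injective k' := φ.symm.injective.comp incl_inj
  have hfull : ∀ y : F ⊗[R] A, ∃ r : R, r ≠ 0 ∧ r • y ∈ Submodule.map k.toLinearMap ⊤ := full_aux
  obtain ⟨c, h1, h2⟩ := glue (A := Submodule.map k.toLinearMap ⊤)
    (A' := Submodule.map k'.toLinearMap ⊤) hsemilocal hnf (fun r hr => by
      rw [IsScalarTower.algebraMap_apply R F (F ⊗[R] A)]
      refine (IsUnit.mk0 _ ?_).map (algebraMap F _)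
      rw [Ne, IsFractionRing.to_map_eq_zero_iff]; exact hr) (df_of_fd (F := F))
      ((Module.Finite.fg_top).map _)
      (by rw [← Submodule.map_mul]; exact Submodule.map_mono le_top) ⟨1, trivial, map_one k⟩ hfull
      (fun π hpr => by
        obtain ⟨q, hq, i1, i2, i3, i4, i5, hinj, hT, npi⟩ := exists_T R S hpr
        obtain ⟨σ⟩ := bc_iso (Localization.AtPrime q) e
        let L := FractionRing (Localization.AtPrime q)
        have hRL : Function.Injective (algebraMap R L) := by
          rw [IsScalarTower.algebraMap_eq R (Localization.AtPrime q) L]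
          exact (IsFractionRing.injective (Localization.AtPrime q) L).comp hinj
        letI : Algebra F L := (IsFractionRing.lift hRL : F →+* L).toAlgebra
        haveI : IsScalarTower R F L := IsScalarTower.of_algebraMap_eq fun r =>
          (IsFractionRing.lift_algebraMap hRL r).symm
        let ι : F ⊗[R] A →ₐ[R] L ⊗[F] (F ⊗[R] A) :=
          (Algebra.TensorProduct.includeRight : F ⊗[R] A →ₐ[F] L ⊗[F] (F ⊗[R] A)).restrictScalars R
        exact per_prime (T := Localization.AtPrime q) (L := L) hhered hpr hinj hT npi ι
          (fun _ => rfl) k k' hfull (fun g => hext_aux g) σ)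
  exact conj_iso k k' hk hk' c h1 h2

end HerOrd

/-- Let `R` be a semilocal Dedekind domain (a Dedekind domain with only
finitely many maximal ideals) with fraction field `F`. Let `A` be a hereditary `R`-order
(an `R`-algebra, finitely generated and torsion-free as an `R`-module, all of whose left
ideals are projective) such that `F ⊗[R] A` is a central simple `F`-algebra, and let `A'`
be any `R`-order. If `F ⊗[R] A ≅ F ⊗[R] A'` as `F`-algebras and there is a faithfully flat
étale `R`-algebra `S` with `S ⊗[R] A ≅ S ⊗[R] A'` as `S`-algebras, then `A ≅ A'` as
`R`-algebras. -/
theorem herediary_order_iso_of_generic_and_etale_iso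
    (R : Type u) (F : Type*) [CommRing R] [IsDomain R] [IsDedekindDomain R]
    (hsemilocal : {I : Ideal R | I.IsMaximal}.Finite)
    [Field F] [Algebra R F] [IsFractionRing R F]
    (A A' : Type*) [Ring A] [Algebra R A] [Module.Finite R A] [NoZeroSMulDivisors R A]
    [Ring A'] [Algebra R A'] [Module.Finite R A'] [NoZeroSMulDivisors R A']
    (hhered : ∀ I : Submodule A A, Module.Projective A I)
    (hcentral : Algebra.IsCentral F (F ⊗[R] A))
    (hsimple : IsSimpleRing (F ⊗[R] A))
    (hfin : FiniteDimensional F (F ⊗[R] A))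
    (hF : Nonempty ((F ⊗[R] A) ≃ₐ[F] (F ⊗[R] A')))
    (S : Type u) [CommRing S] [Algebra R S] [Algebra.Etale R S] [Module.FaithfullyFlat R S]
    (hS : Nonempty ((S ⊗[R] A) ≃ₐ[S] (S ⊗[R] A'))) :
    Nonempty (A ≃ₐ[R] A') := by
  obtain ⟨φ⟩ := hF
  obtain ⟨e⟩ := hS
  have hpid : IsPrincipalIdealRing R := IsPrincipalIdealRing.of_finite_maximals hsemilocal
  by_cases hR : IsField R
  · refine HerOrd.field_case R F A A' ⟨IsFractionRing.injective R F, fun x => ?_⟩ φ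
    obtain ⟨b, d, hd, rfl⟩ := IsFractionRing.div_surjective (A := R) x
    obtain ⟨d', hd'⟩ := hR.mul_inv_cancel (nonZeroDivisors.ne_zero hd)
    have hd0 : algebraMap R F d ≠ 0 := IsFractionRing.to_map_ne_zero_of_mem_nonZeroDivisors hd
    refine ⟨b * d', ?_⟩
    rw [eq_div_iff hd0, ← map_mul, mul_assoc, mul_comm d', hd', mul_one]
  · exact HerOrd.main_aux R F hsemilocal hR A A' hhered hcentral hsimple hfin φ S e
end

section
/- Let R be a Dedekind domain, let A and A' be R-orders, and let S be a faithfully flat étale R-algebra such that S ⊗_R A and S ⊗_R A' are isomorphic as S-algebras. If A is hereditary, then A' is hereditary. -/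
open scoped TensorProduct
universe u

theorem aux_proj_of_inj {A : Type*} [Ring A] (hA : ∀ I : Submodule A A, Module.Projective A I)
    (n : ℕ) : ∀ {M : Type u} [AddCommGroup M] [Module A M] (f : M →ₗ[A] (Fin n → A)),
    Function.Injective f → Module.Projective A M := by
  induction n with
  | zero =>
    intro M _ _ f hf
    have : Subsingleton M := hf.subsingleton
    infer_instance
  | succ n ih =>
    intro M _ _ f hf
    let g : M →ₗ[A] A := LinearMap.proj 0 ∘ₗ f
    have hr := hA (LinearMap.range g)
    obtain ⟨s, hs⟩ := LinearMap.exists_rightInverse_of_surjective g.rangeRestrict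
      g.range_rangeRestrict
    have hk : Module.Projective A (LinearMap.ker g) := by
      refine ih ((LinearMap.funLeft A A Fin.succ ∘ₗ f) ∘ₗ (LinearMap.ker g).subtype) ?_
      rintro ⟨x, hx⟩ ⟨y, hy⟩ h
      ext
      apply hf
      funext i
      refine Fin.cases ?_ (fun i => ?_) i
      · exact (show g x = 0 from hx).trans (show g y = 0 from hy).symm
      · exact congrFun h i
    have hs' : ∀ z, g (s z) = z := fun z => congrArg Subtype.val (LinearMap.congr_fun hs z)
    let q : M →ₗ[A] LinearMap.ker g :=
      LinearMap.codRestrict _ (LinearMap.id - s ∘ₗ g.rangeRestrict) (fun m => by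
        simp [LinearMap.mem_ker, hs'])
    refine Module.Projective.of_split (M := LinearMap.ker g × LinearMap.range g)
      (q.prod g.rangeRestrict) ((LinearMap.ker g).subtype.coprod s) ?_
    ext m
    simp [q]

theorem aux_split {B P Q M : Type*} [Ring B] [AddCommGroup P] [AddCommGroup Q] [AddCommGroup M]
    [Module B P] [Module B Q] [Module B M] [Module.Projective B Q]
    (f : P →ₗ[B] Q) (g : Q →ₗ[B] M) (hfg : Function.Exact f g) (hg : Function.Surjective g)
    (h : Module.Projective B M) : ∃ w : Q →ₗ[B] P, ∀ x, f (w (f x)) = f x := by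
  obtain ⟨s, hs⟩ := LinearMap.exists_rightInverse_of_surjective g (LinearMap.range_eq_top.2 hg)
  have hs' : ∀ z, g (s z) = z := fun z => LinearMap.congr_fun hs z
  let q : Q →ₗ[B] LinearMap.ker g :=
      LinearMap.codRestrict _ (LinearMap.id - s ∘ₗ g) (fun m => by
        simp [LinearMap.mem_ker, hs'])
  let f' : P →ₗ[B] LinearMap.ker g := LinearMap.codRestrict _ f (fun x => (hfg _).2 ⟨x, rfl⟩)
  have hf' : Function.Surjective f' := by
    rintro ⟨y, hy⟩
    obtain ⟨x, hx⟩ := (hfg y).1 hy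
    exact ⟨x, Subtype.ext hx⟩
  obtain ⟨w, hw⟩ := Module.projective_lifting_property f' q hf'
  refine ⟨w, fun x => ?_⟩
  have := congrArg Subtype.val (LinearMap.congr_fun hw (f x))
  have h0 : g (f x) = 0 := (hfg _).2 ⟨x, rfl⟩
  have h1 : f (w (f x)) = f x - s (g (f x)) := this
  simpa [h0] using h1

theorem aux_proj_of_split {B P Q M : Type*} [Ring B] [AddCommGroup P] [AddCommGroup Q]
    [AddCommGroup M]
    [Module B P] [Module B Q] [Module B M] [Module.Projective B Q]
    (f : P →ₗ[B] Q) (g : Q →ₗ[B] M) (hfg : Function.Exact f g) (hg : Function.Surjective g)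
    (w : Q →ₗ[B] P) (hw : ∀ x, f (w (f x)) = f x) : Module.Projective B M := by
  let u : Q →ₗ[B] Q := LinearMap.id - f ∘ₗ w
  have hu : LinearMap.ker g ≤ LinearMap.ker u := by
    intro y hy
    obtain ⟨x, rfl⟩ := (hfg y).1 hy
    simp [u, hw]
  let s : M →ₗ[B] Q := (LinearMap.ker g).liftQ u hu ∘ₗ
    (g.quotKerEquivOfSurjective hg).symm.toLinearMap
  refine Module.Projective.of_split s g ?_
  ext m
  obtain ⟨y, rfl⟩ := hg m
  have : (g.quotKerEquivOfSurjective hg).symm (g y) = (LinearMap.ker g).mkQ y := by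
    rw [LinearEquiv.symm_apply_eq]; rfl
  have h0 : g (f (w y)) = 0 := (hfg _).2 ⟨_, rfl⟩
  simp [s, this, u, h0]

theorem aux_equiv {B C : Type*} [Ring B] [Ring C] (e : B ≃+* C)
    (hB : ∀ I : Submodule B B, Module.Projective B I) (I : Submodule C C) :
    Module.Projective C I := by
  let σ : B →+* C := e
  let σ' : C →+* B := e.symm
  let J : Submodule B B :=
    { carrier := {b | e b ∈ I}
      add_mem' := fun {a b} ha hb => by simpa using I.add_mem ha hb
      zero_mem' := by simp
      smul_mem' := fun a b hb => by simpa using I.smul_mem (e a) hb }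
  have := hB J
  let e₂ : J ≃+ I :=
    { toFun := fun x => ⟨e x, x.2⟩
      invFun := fun y => ⟨e.symm y, by
        change e (e.symm y) ∈ I
        simp⟩
      left_inv := fun x => by simp
      right_inv := fun x => by simp
      map_add' := fun x y => by ext; simp }
  have : RingHomInvPair (e : B →+* C) (e.symm : C →+* B) := RingHomInvPair.of_ringEquiv e
  have : RingHomInvPair (e.symm : C →+* B) (e : B →+* C) := RingHomInvPair.of_ringEquiv e.symm
  let e₃ : J ≃ₛₗ[(e : B →+* C)] I :=
    { e₂ with map_smul' := fun a x => by ext; simp [e₂] }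
  exact Module.Projective.of_equiv e₃

theorem aux_emb {R A S : Type*} [CommRing R] [IsDedekindDomain R] [Ring A] [Algebra R A]
    [Module.Flat R A] [CommRing S] [Algebra R S] [Module.Flat R S]
    (hA : ∀ I : Submodule A A, Module.Projective A I)
    (J : Submodule A (A ⊗[R] S)) (hJ : J.FG) : Module.Projective A J := by
  obtain ⟨X, rfl⟩ := hJ
  obtain ⟨S₀, hfin, hS₀⟩ := TensorProduct.exists_finite_submodule_right_of_setFinite
    (R := R) (X : Set (A ⊗[R] S)) X.finite_toSet
  have : Module.Flat R S₀ := inferInstance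
  have : Module.FinitePresentation R S₀ := Module.finitePresentation_of_finite R S₀
  have hp : Module.Projective R S₀ := Module.Flat.projective_of_finitePresentation
  obtain ⟨n, p, hpsurj⟩ := Module.Finite.exists_fin' R S₀
  obtain ⟨s, hs⟩ := LinearMap.exists_rightInverse_of_surjective p (LinearMap.range_eq_top.2 hpsurj)
  let ι : A ⊗[R] S₀ →ₗ[A] A ⊗[R] S := LinearMap.baseChange A S₀.subtype
  have hι : Function.Injective ι :=
    Module.Flat.lTensor_preserves_injective_linearMap (M := A) S₀.subtype S₀.injective_subtype
  have hle : Submodule.span A (X : Set (A ⊗[R] S)) ≤ LinearMap.range ι := by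
    rw [Submodule.span_le]
    intro x hx
    obtain ⟨y, hy⟩ := hS₀ hx
    exact ⟨y, hy⟩
  let φ : A ⊗[R] S₀ →ₗ[A] (Fin n → A) := LinearMap.pi fun i =>
    (TensorProduct.AlgebraTensorModule.rid R A A).toLinearMap ∘ₗ
      LinearMap.baseChange A (LinearMap.proj i ∘ₗ s)
  let ψ : (Fin n → A) →ₗ[A] A ⊗[R] S₀ :=
    Fintype.linearCombination A (fun i => (1 : A) ⊗ₜ[R] p (Pi.single i 1))
  have hψφ : ∀ z, ψ (φ z) = z := by
    intro z
    induction z with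
    | zero => simp
    | add x y hx hy => rw [map_add, map_add, hx, hy]
    | tmul a t =>
      have h1 : p (s t) = t := LinearMap.congr_fun hs t
      have h2 : p (s t) = ∑ i, s t i • p (Pi.single i 1) := by
        conv_lhs => rw [pi_eq_sum_univ' (s t)]
        rw [map_sum]
        refine Finset.sum_congr rfl fun i _ => ?_
        rw [map_smul]
      simp only [ψ, Fintype.linearCombination_apply, φ, LinearMap.pi_apply, LinearMap.comp_apply,
        LinearMap.baseChange_tmul, LinearEquiv.coe_coe, LinearMap.proj_apply,
        TensorProduct.AlgebraTensorModule.rid_tmul, TensorProduct.smul_tmul', smul_eq_mul,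
        mul_one]
      conv_rhs => rw [← h1, h2, TensorProduct.tmul_sum]
      exact Finset.sum_congr rfl fun i _ => TensorProduct.smul_tmul _ _ _
  refine aux_proj_of_inj hA n (φ ∘ₗ (LinearEquiv.ofInjective ι hι).symm.toLinearMap ∘ₗ
    Submodule.inclusion hle) ?_
  exact (Function.LeftInverse.injective hψφ).comp
    ((LinearEquiv.ofInjective ι hι).symm.injective.comp (Submodule.inclusion_injective hle))

theorem aux_ascent {R A S : Type*} [CommRing R] [IsDedekindDomain R] [Ring A] [Algebra R A]
    [Module.Flat R A] [CommRing S] [Algebra R S] [Module.Flat R S]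
    [Algebra.FormallyUnramified R S] [Algebra.EssFiniteType R S]
    (hA : ∀ I : Submodule A A, Module.Projective A I)
    (J : Submodule (A ⊗[R] S) (A ⊗[R] S)) (hJ : J.FG) : Module.Projective (A ⊗[R] S) J := by
  classical
  obtain ⟨X, hX⟩ := hJ
  set e := Algebra.FormallyUnramified.elem R S with he
  obtain ⟨T, hT⟩ := TensorProduct.exists_finset e
  let Y : Finset (A ⊗[R] S) := (X ×ˢ T).image fun q => ((1 : A) ⊗ₜ[R] q.2.1) * q.1
  let J0 : Submodule A (A ⊗[R] S) := Submodule.span A (Y : Set (A ⊗[R] S))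
  have hJ0 : Module.Projective A J0 := aux_emb (R := R) hA J0 ⟨Y, rfl⟩
  have hsmul : ∀ (a : A) (b : A ⊗[R] S), a • b = (a ⊗ₜ[R] (1 : S)) * b := by
    intro a b
    induction b with
    | zero => simp
    | add x y hx hy => rw [smul_add, mul_add, hx, hy]
    | tmul c t => simp [TensorProduct.smul_tmul']
  have hcent : ∀ (s : S) (b : A ⊗[R] S), ((1 : A) ⊗ₜ[R] s) * b = b * ((1 : A) ⊗ₜ[R] s) := by
    intro s b
    induction b with
    | zero => simp
    | add x y hx hy => rw [add_mul, mul_add, hx, hy]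
    | tmul c t => simp [mul_comm]
  have hXJ : ∀ x ∈ X, x ∈ J := fun x hx => hX ▸ Submodule.subset_span hx
  have hJ0J : ∀ y ∈ J0, y ∈ J := by
    intro y hy
    induction hy using Submodule.span_induction with
    | mem y hy =>
      obtain ⟨q, hq, rfl⟩ := Finset.mem_image.1 (Finset.mem_coe.1 hy)
      exact J.smul_mem _ (hXJ _ (Finset.mem_product.1 hq).1)
    | zero => exact J.zero_mem
    | add _ _ _ _ h1 h2 => exact J.add_mem h1 h2
    | smul a y _ h => rw [hsmul]; exact J.smul_mem _ h
  -- the maps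
  let η : S →ₗ[R] S ⊗[R] S :=
    LinearMap.mulRight R e ∘ₗ (Algebra.TensorProduct.includeLeft : S →ₐ[R] S ⊗[R] S).toLinearMap
  have hη : ∀ s, η s = (s ⊗ₜ[R] (1 : S)) * e := fun s => rfl
  let ε : A ⊗[R] S →ₗ[A] A ⊗[R] (S ⊗[R] S) := LinearMap.baseChange A η
  let asc := TensorProduct.AlgebraTensorModule.assoc R R A A S S
  let ι : J0 ⊗[R] S →ₗ[A] A ⊗[R] (S ⊗[R] S) := asc.toLinearMap ∘ₗ
    TensorProduct.AlgebraTensorModule.map J0.subtype (LinearMap.id : S →ₗ[R] S)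
  have hι : Function.Injective ι := by
    refine asc.injective.comp ?_
    exact Module.Flat.rTensor_preserves_injective_linearMap (M := S)
      (J0.subtype.restrictScalars R) J0.injective_subtype
  let m : S → (J0 ⊗[R] S →ₗ[A] J0 ⊗[R] S) := fun s =>
    TensorProduct.AlgebraTensorModule.map LinearMap.id (LinearMap.mulLeft R s)
  let m' : S → (A ⊗[R] (S ⊗[R] S) →ₗ[A] A ⊗[R] (S ⊗[R] S)) := fun s =>
    LinearMap.baseChange A (LinearMap.mulLeft R ((1 : S) ⊗ₜ[R] s))
  have hasc : ∀ (s : S) (b : A ⊗[R] S) (t : S), m' s (asc (b ⊗ₜ t)) = asc (b ⊗ₜ (s * t)) := by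
    intro s b t
    induction b with
    | zero => simp
    | add x y hx hy => simp only [TensorProduct.add_tmul, map_add, hx, hy]
    | tmul c u => simp [asc, m']
  have hmι : ∀ s z, ι (m s z) = m' s (ι z) := by
    intro s z
    induction z with
    | zero => simp
    | add x y hx hy => simp only [map_add, hx, hy]
    | tmul y t =>
      change asc ((y : A ⊗[R] S) ⊗ₜ (s * t)) = m' s (asc ((y : A ⊗[R] S) ⊗ₜ t))
      rw [hasc]
  have hεs : ∀ s b, ε (((1 : A) ⊗ₜ[R] s) * b) = m' s (ε b) := by
    intro s b
    induction b with
    | zero => simp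
    | add x y hx hy => simp only [mul_add, map_add, hx, hy]
    | tmul a t =>
      simp only [Algebra.TensorProduct.tmul_mul_tmul, one_mul, ε, m', LinearMap.baseChange_tmul,
        hη, LinearMap.mulLeft_apply]
      congr 1
      have h := Algebra.FormallyUnramified.one_tmul_mul_elem (R := R) (S := S) s
      rw [mul_left_comm, he, h, ← mul_assoc, Algebra.TensorProduct.tmul_mul_tmul, one_mul,
        mul_comm t s]
  have hsplit : ∀ (a : A) (s : S) (b : A ⊗[R] S),
      (a ⊗ₜ[R] s) * b = a • (((1 : A) ⊗ₜ[R] s) * b) := by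
    intro a s b
    rw [hsmul, ← mul_assoc, Algebra.TensorProduct.tmul_mul_tmul, mul_one, one_mul]
  have hεT : ∀ b, ε b = ∑ i ∈ T, asc ((((1 : A) ⊗ₜ[R] i.1) * b) ⊗ₜ i.2) := by
    intro b
    induction b with
    | zero => simp
    | add x y hx hy =>
      simp only [mul_add, map_add, hx, hy, TensorProduct.add_tmul, Finset.sum_add_distrib]
    | tmul a t =>
      simp only [ε, LinearMap.baseChange_tmul, hη]
      rw [hT, Finset.mul_sum, TensorProduct.tmul_sum]
      refine Finset.sum_congr rfl fun i _ => ?_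
      simp [asc, mul_comm]
  have hrange : ∀ j ∈ J, ε j ∈ LinearMap.range ι := by
    intro j hj
    rw [← hX] at hj
    induction hj using Submodule.span_induction with
    | mem x hx =>
      rw [hεT]
      refine Submodule.sum_mem _ fun i hi => ?_
      refine ⟨(⟨((1 : A) ⊗ₜ[R] i.1) * x, Submodule.subset_span ?_⟩ : J0) ⊗ₜ i.2, rfl⟩
      exact Finset.mem_coe.2 (Finset.mem_image.2 ⟨(x, i), Finset.mem_product.2 ⟨hx, hi⟩, rfl⟩)
    | zero => simp
    | add _ _ _ _ h1 h2 => rw [map_add]; exact Submodule.add_mem _ h1 h2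
    | smul b y _ h =>
      rw [smul_eq_mul]
      induction b with
      | zero => simp
      | add b c hb hc => rw [add_mul, map_add]; exact Submodule.add_mem _ hb hc
      | tmul a s =>
        rw [hsplit, map_smul, hεs]
        refine Submodule.smul_mem _ _ ?_
        obtain ⟨z, hz⟩ := h
        exact ⟨m s z, by rw [hmι, hz]⟩
  have hσ' : ∀ j : J, ∃ z, ι z = ε j := fun j => hrange j j.2
  choose σ hσ using hσ'
  have hfin : Module.Finite A J0 := Module.Finite.iff_fg.2 ⟨Y, rfl⟩
  obtain ⟨n, p, hpsurj⟩ := Module.Finite.exists_fin' A J0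
  obtain ⟨s, hs⟩ := LinearMap.exists_rightInverse_of_surjective p (LinearMap.range_eq_top.2 hpsurj)
  let f : Fin n → (J0 →ₗ[A] A) := fun k => LinearMap.proj k ∘ₗ s
  let y : Fin n → J0 := fun k => p (Pi.single k 1)
  have hfy : ∀ z : J0, ∑ k, f k z • y k = z := by
    intro z
    have h1 : p (s z) = z := LinearMap.congr_fun hs z
    conv_rhs => rw [← h1, pi_eq_sum_univ' (s z)]
    rw [map_sum]
    refine Finset.sum_congr rfl fun i _ => ?_
    rw [map_smul]
    simp only [y, f, LinearMap.comp_apply, LinearMap.proj_apply]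
  let fS : Fin n → (J0 ⊗[R] S →ₗ[A] A ⊗[R] S) := fun k =>
    TensorProduct.AlgebraTensorModule.map (f k) LinearMap.id
  have hfS : ∀ k s z, fS k (m s z) = ((1 : A) ⊗ₜ[R] s) * fS k z := by
    intro k s z
    induction z with
    | zero => simp
    | add x y hx hy => simp only [map_add, mul_add, hx, hy]
    | tmul y t => simp [fS, m]
  let F : Fin n → (J →ₗ[A ⊗[R] S] A ⊗[R] S) := fun k =>
    { toFun := fun j => fS k (σ j)
      map_add' := fun i j => by
        rw [← map_add]
        congr 1
        apply hι
        simp [hσ]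
      map_smul' := fun b j => by
        simp only [RingHom.id_apply, smul_eq_mul]
        induction b with
        | zero =>
          have : σ ((0 : A ⊗[R] S) • j) = 0 := by
            apply hι
            simp [hσ]
          rw [this, map_zero, zero_mul]
        | add b c hb hc =>
          have : σ ((b + c) • j) = σ (b • j) + σ (c • j) := by
            apply hι
            simp [hσ, add_mul]
          rw [this, map_add, hb, hc, add_mul]
        | tmul a s =>
          have : σ ((a ⊗ₜ[R] s) • j) = a • m s (σ j) := by
            apply hι
            rw [hσ, map_smul, hmι, hσ, Submodule.coe_smul, smul_eq_mul, hsplit, map_smul, hεs]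
          rw [this, map_smul, hfS, hsplit a] }
  let μ : A ⊗[R] (S ⊗[R] S) →ₗ[A] A ⊗[R] S :=
    LinearMap.baseChange A (Algebra.TensorProduct.lmul' R (S := S)).toLinearMap
  have hμε : ∀ b, μ (ε b) = b := by
    intro b
    induction b with
    | zero => simp
    | add x y hx hy => simp only [map_add, hx, hy]
    | tmul a t =>
      have h := Algebra.FormallyUnramified.lmul_elem (R := R) (S := S)
      simp only [ε, μ, LinearMap.baseChange_tmul, hη, AlgHom.toLinearMap_apply, map_mul, he, h]
      simp
  have hμa : ∀ (b : A ⊗[R] S) (t : S), μ (asc (b ⊗ₜ t)) = ((1 : A) ⊗ₜ[R] t) * b := by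
    intro b t
    induction b with
    | zero => simp
    | add x y hx hy => simp only [TensorProduct.add_tmul, map_add, mul_add, hx, hy]
    | tmul c u => simp [asc, μ, mul_comm]
  have hμι : ∀ z, μ (ι z) = ∑ k, fS k z * (y k : A ⊗[R] S) := by
    intro z
    induction z with
    | zero => simp
    | add x y hx hy => simp only [map_add, add_mul, Finset.sum_add_distrib, hx, hy]
    | tmul w t =>
      change μ (asc ((w : A ⊗[R] S) ⊗ₜ t)) = ∑ k, ((f k w) ⊗ₜ[R] t) * (y k : A ⊗[R] S)
      rw [hμa]
      have h := congrArg Subtype.val (hfy w)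
      rw [← h, AddSubmonoidClass.coe_finsetSum, Finset.mul_sum]
      refine Finset.sum_congr rfl fun k _ => ?_
      rw [Submodule.coe_smul, hsmul, ← mul_assoc, Algebra.TensorProduct.tmul_mul_tmul, one_mul,
        mul_one]
  let yJ : Fin n → J := fun k => ⟨y k, hJ0J _ (y k).2⟩
  refine Module.Projective.of_split (M := Fin n → A ⊗[R] S) (LinearMap.pi F)
    (Fintype.linearCombination (A ⊗[R] S) yJ) ?_
  ext j
  rw [LinearMap.comp_apply, Fintype.linearCombination_apply, AddSubmonoidClass.coe_finsetSum]
  change ∑ k, fS k (σ j) * (y k : A ⊗[R] S) = j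
  rw [← hμι, hσ, hμε]
theorem aux_descent {R A S : Type*} [CommRing R] [IsNoetherianRing R] [Ring A] [Algebra R A]
    [Module.Finite R A] [CommRing S] [Algebra R S] [Module.FaithfullyFlat R S]
    (hB : ∀ I : Submodule (A ⊗[R] S) (A ⊗[R] S), Module.Projective (A ⊗[R] S) I)
    (I : Submodule A A) : Module.Projective A I := by
  classical
  have : IsNoetherianRing A := IsNoetherianRing.of_finite R A
  obtain ⟨n, g, hg⟩ := Module.Finite.exists_fin' A I
  obtain ⟨m, f', hf'⟩ := Module.Finite.exists_fin' A (LinearMap.ker g)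
  let f : (Fin m → A) →ₗ[A] (Fin n → A) := (LinearMap.ker g).subtype ∘ₗ f'
  have hfg : Function.Exact f g := by
    intro v
    constructor
    · intro hv
      obtain ⟨u, hu⟩ := hf' ⟨v, hv⟩
      exact ⟨u, congrArg Subtype.val hu⟩
    · rintro ⟨u, rfl⟩
      exact (f' u).2
  let x : Fin n → A := fun k => g (Pi.single k 1)
  let T : Matrix (Fin m) (Fin n) A := fun i => f (Pi.single i 1)
  have hsum : ∀ {M : Type _} [AddCommGroup M] [Module A M] {l : ℕ} (h : (Fin l → A) →ₗ[A] M) v,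
      h v = ∑ k, v k • h (Pi.single k 1) := by
    intro M _ _ l h v
    conv_lhs => rw [pi_eq_sum_univ' v]
    rw [map_sum]
    refine Finset.sum_congr rfl fun i _ => ?_
    rw [map_smul]
  have hfT : ∀ v, f v = Matrix.vecMul v T := by
    intro v
    rw [hsum f v]
    ext j
    simp [Matrix.vecMul, dotProduct, T]
  have hgx : ∀ v, (g v : A) = ∑ k, v k * x k := by
    intro v
    rw [hsum g v]
    simp [x]
  -- base change
  let TS : Matrix (Fin m) (Fin n) (A ⊗[R] S) := fun i j => T i j ⊗ₜ[R] (1 : S)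
  let fS : (Fin m → A ⊗[R] S) →ₗ[A ⊗[R] S] (Fin n → A ⊗[R] S) := Matrix.toLinearMapRight' TS
  let gS : (Fin n → A ⊗[R] S) →ₗ[A ⊗[R] S] A ⊗[R] S :=
    Fintype.linearCombination (A ⊗[R] S) (fun k => x k ⊗ₜ[R] (1 : S))
  let fR : (Fin m → A) →ₗ[R] (Fin n → A) := f.restrictScalars R
  let gR : (Fin n → A) →ₗ[R] A := I.subtype.restrictScalars R ∘ₗ g.restrictScalars R
  have hfgR : Function.Exact fR gR := by
    intro v
    refine Iff.trans ?_ (hfg v)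
    simp [gR]
  have hexT := Module.Flat.rTensor_exact S hfgR
  let πm := TensorProduct.piLeft R S (fun _ : Fin m => A)
  let πn := TensorProduct.piLeft R S (fun _ : Fin n => A)
  have hπ1 : ∀ z, πn (fR.rTensor S z) = fS (πm z) := by
    intro z
    induction z with
    | zero => simp
    | add x y hx hy => simp only [map_add, hx, hy]
    | tmul v t =>
      ext j
      simp only [LinearMap.rTensor_tmul, fR, LinearMap.restrictScalars_apply, hfT]
      have h1 : πm (v ⊗ₜ[R] t) = fun j => v j ⊗ₜ[R] t := rfl
      have h2 : ∀ v', πn (v' ⊗ₜ[R] t) = fun j => v' j ⊗ₜ[R] t := fun _ => rfl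
      rw [h1, h2]
      change _ = Matrix.vecMul _ TS j
      simp [Matrix.vecMul, dotProduct, TS, TensorProduct.sum_tmul]
  have hπ2 : ∀ z, gR.rTensor S z = gS (πn z) := by
    intro z
    induction z with
    | zero => simp
    | add x y hx hy => simp only [map_add, hx, hy]
    | tmul v t =>
      have : gR v = ∑ k, v k * x k := hgx v
      simp only [LinearMap.rTensor_tmul, this]
      simp [πn, gS, Fintype.linearCombination_apply, TensorProduct.sum_tmul]
  have hex : Function.Exact fS gS.rangeRestrict := by
    intro v
    obtain ⟨z, rfl⟩ := πn.surjective v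
    have h1 := hexT z
    have h2 : gS.rangeRestrict (πn z) = 0 ↔ gR.rTensor S z = 0 := by
      rw [hπ2, ← Subtype.coe_inj]; rfl
    rw [h2, h1]
    constructor
    · rintro ⟨u, rfl⟩
      exact ⟨πm u, (hπ1 u).symm⟩
    · rintro ⟨u, hu⟩
      obtain ⟨u, rfl⟩ := πm.surjective u
      refine ⟨u, πn.injective ?_⟩
      rw [hπ1, hu]
  obtain ⟨w, hw⟩ := aux_split fS gS.rangeRestrict hex gS.surjective_rangeRestrict
    (hB (LinearMap.range gS))
  let W : Matrix (Fin n) (Fin m) (A ⊗[R] S) := LinearMap.toMatrixRight' w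
  have hW : TS * W * TS = TS := by
    apply Matrix.toLinearMapRight'.injective
    apply LinearMap.ext
    intro v
    have hWw : Matrix.toLinearMapRight' W = w := Matrix.toLinearMapRight'.apply_symm_apply w
    rw [Matrix.toLinearMapRight'_mul_apply, Matrix.toLinearMapRight'_mul_apply, hWw]
    exact hw v
  -- descend
  let L : (Fin n × Fin m → A) →ₗ[R] (Fin m × Fin n → A) :=
    { toFun := fun u q => (T * Matrix.of (fun i j => u (i, j)) * T) q.1 q.2
      map_add' := fun u v => by
        ext q
        have : (Matrix.of fun i j => (u + v) (i, j)) =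
          (Matrix.of fun i j => u (i, j)) + (Matrix.of fun i j => v (i, j)) := rfl
        simp only [this, Matrix.mul_add, Matrix.add_mul]
        rfl
      map_smul' := fun r u => by
        ext q
        have : (Matrix.of fun i j => (r • u) (i, j)) = r • (Matrix.of fun i j => u (i, j)) := rfl
        simp only [this, Matrix.mul_smul, Matrix.smul_mul]
        rfl }
  let πa := TensorProduct.piLeft R S (fun _ : Fin n × Fin m => A)
  let πb := TensorProduct.piLeft R S (fun _ : Fin m × Fin n => A)
  have hπL : ∀ z, πb (L.rTensor S z) =
      fun q => (TS * Matrix.of (fun i j => πa z (i, j)) * TS) q.1 q.2 := by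
    intro z
    induction z with
    | zero =>
      ext q
      simp [Matrix.mul_apply]
    | add u v hu hv =>
      rw [map_add, map_add, hu, hv]
      have : (Matrix.of fun i j => (πa (u + v)) (i, j)) =
          (Matrix.of fun i j => πa u (i, j)) + (Matrix.of fun i j => πa v (i, j)) := by
        rw [map_add]; rfl
      simp only [this, Matrix.mul_add, Matrix.add_mul]
      rfl
    | tmul v t =>
      ext q
      have h1 : πa (v ⊗ₜ[R] t) = fun j => v j ⊗ₜ[R] t := rfl
      have h2 : πb (L.rTensor S (v ⊗ₜ[R] t)) q = L v q ⊗ₜ[R] t := rfl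
      have h3 : L v q = (T * Matrix.of (fun i j => v (i, j)) * T) q.1 q.2 := rfl
      have h4 : ∀ i j, TS i j = T i j ⊗ₜ[R] (1 : S) := fun _ _ => rfl
      rw [h1, h2, h3]
      simp only [Matrix.mul_apply, h4, Matrix.of_apply, TensorProduct.sum_tmul, Finset.sum_mul,
        Algebra.TensorProduct.tmul_mul_tmul, one_mul, mul_one]
  let τ : Fin m × Fin n → A := fun q => T q.1 q.2
  obtain ⟨z, hz⟩ := πa.surjective (fun q => W q.1 q.2)
  have hLz : L.rTensor S z = τ ⊗ₜ[R] (1 : S) := by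
    apply πb.injective
    rw [hπL, hz]
    have h1 : (Matrix.of fun i j => W i j) = W := rfl
    simp only [h1, hW]
    ext q
    simp [πb, τ, TS]
  have hmem : τ ∈ LinearMap.range L := by
    rw [← Submodule.Quotient.mk_eq_zero]
    apply Module.FaithfullyFlat.tensorProduct_mk_injective (A := R) (B := S)
    apply (TensorProduct.comm R S _).injective
    have h1 := congrArg ((LinearMap.range L).mkQ.rTensor S) hLz
    rw [← LinearMap.comp_apply, ← LinearMap.rTensor_comp] at h1
    have h2 : (LinearMap.range L).mkQ ∘ₗ L = 0 := LinearMap.range_mkQ_comp L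
    rw [h2] at h1
    simpa using h1.symm
  obtain ⟨u, hu⟩ := hmem
  let U : Matrix (Fin n) (Fin m) A := Matrix.of fun i j => u (i, j)
  have hU : T * U * T = T := by
    ext i j
    exact congrFun hu (i, j)
  refine aux_proj_of_split f g hfg hg (Matrix.toLinearMapRight' U) fun v => ?_
  rw [hfT, hfT, Matrix.toLinearMapRight'_apply, Matrix.vecMul_vecMul, Matrix.vecMul_vecMul, ← Matrix.mul_assoc, hU]

/-- Let `R` be a Dedekind domain, let `A` and `A'` be `R`-orders
(`R`-algebras, finitely generated and torsion-free as `R`-modules), and let `S` be a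
faithfully flat étale `R`-algebra such that `S ⊗[R] A ≅ S ⊗[R] A'` as `S`-algebras.
If `A` is hereditary (every left ideal is projective), then `A'` is hereditary. -/
theorem hereditary_of_etale_iso_hereditary
    (R : Type u) [CommRing R] [IsDomain R] [IsDedekindDomain R]
    (A A' : Type*) [Ring A] [Algebra R A] [Module.Finite R A] [NoZeroSMulDivisors R A]
    [Ring A'] [Algebra R A'] [Module.Finite R A'] [NoZeroSMulDivisors R A']
    (S : Type u) [CommRing S] [Algebra R S] [Algebra.Etale R S] [Module.FaithfullyFlat R S]
    (hS : Nonempty ((S ⊗[R] A) ≃ₐ[S] (S ⊗[R] A')))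
    (hA : ∀ I : Submodule A A, Module.Projective A I) :
    ∀ I : Submodule A' A', Module.Projective A' I := by
  obtain ⟨e⟩ := hS
  have hSn : IsNoetherianRing S := Algebra.FiniteType.isNoetherianRing R S
  have h1 : IsNoetherianRing (S ⊗[R] A) := IsNoetherianRing.of_finite S (S ⊗[R] A)
  let c : (S ⊗[R] A) ≃+* (A ⊗[R] S) := (Algebra.TensorProduct.comm R S A).toRingEquiv
  let c' : (S ⊗[R] A') ≃+* (A' ⊗[R] S) := (Algebra.TensorProduct.comm R S A').toRingEquiv
  have h2 : IsNoetherianRing (A ⊗[R] S) := isNoetherianRing_of_ringEquiv _ c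
  have h3 : ∀ J : Submodule (A ⊗[R] S) (A ⊗[R] S), Module.Projective (A ⊗[R] S) J :=
    fun J => aux_ascent hA J (IsNoetherian.noetherian J)
  exact aux_descent (aux_equiv ((c.symm.trans e.toRingEquiv).trans c') h3)
end
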